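/- arXiv:1206.1671 — 3 statements merged into one kernel-verified Lean document; each statement's English description precedes it below -/
import Mathlib

section
/- (Slepian's comparison lemma.) Let A ⊂ ℝ^d be a compact set and let (X_r)_{r∈A} and (Y_r)_{r∈A} be two almost surely continuous centered Gaussian processes with continuous covariance kernels k_X and k_Y satisfying k_X(u,v) ≤ k_Y(u,v) for all u, v ∈ A and k_X(u,u) = k_Y(u,u) for all u ∈ A. Then for every bounded increasing function F : ℝ → ℝ, E[F(sup_{x∈A} Y_x)] ≤ E[F(sup_{x∈A} X_x)]. -/
open MeasureTheory ProbabilityTheory Filter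

noncomputable section

/-!
For independent centered Gaussian vectors `x` and `y`, the rotated pair
`(cos θ • x + sin θ • y, -sin θ • x + cos θ • y)` is Gaussian, and its second component is the
`θ`-derivative of the first, which moves from `x` to `y` as `θ` runs over `[0, π / 2]`. Gaussian
integration by parts turns the derivative of `θ ↦ 𝔼[f (cos θ • x + sin θ • y)]` into
`sin θ * cos θ * ∑ i j, (Cov(y i, y j) - Cov(x i, x j)) * 𝔼[∂ᵢ∂ⱼ f (cos θ • x + sin θ • y)]`.
When `x` and `y` have equal variances only the mixed derivatives of `f` matter, and those of the
smooth functions `exp (-∑ i, exp (c * (x i - a i) - b))`, which approximate the indicator function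
of an orthant, are nonnegative. Hence larger covariances give orthants larger probability. Applied
to the values of the processes on a countable dense set, this says that the supremum of the process
with smaller covariances is stochastically larger.
-/

open scoped NNReal ENNReal Topology

local notation "rot" => ContinuousLinearMap.rotation

section GaussianIntegrationByParts

lemma hasDerivAt_gaussianPDFReal (m : ℝ) (v : ℝ≥0) (x : ℝ) :
    HasDerivAt (gaussianPDFReal m v) (-((x - m) / v) * gaussianPDFReal m v x) x := by
  have h_exponent : HasDerivAt (fun y : ℝ ↦ -(y - m) ^ 2 / (2 * v)) (-((x - m) / v)) x :=
    ((((hasDerivAt_id x).sub_const m).pow 2).neg.div_const (2 * (v : ℝ))).congr_deriv (by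
      simp only [id_eq, Nat.cast_ofNat, Nat.add_one_sub_one, pow_one, mul_one]
      ring)
  rw [gaussianPDFReal_def]
  exact (h_exponent.exp.const_mul _).congr_deriv (by ring)

lemma integrable_gaussianReal_iff {m : ℝ} {v : ℝ≥0} (hv : v ≠ 0) {f : ℝ → ℝ} :
    Integrable f (gaussianReal m v) ↔ Integrable fun x ↦ gaussianPDFReal m v x * f x := by
  rw [gaussianReal_of_var_ne_zero _ hv,
    integrable_withDensity_iff_integrable_smul' (measurable_gaussianPDF m v)
      (ae_of_all _ fun _ ↦ gaussianPDF_lt_top)]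
  simp only [toReal_gaussianPDF, smul_eq_mul]

lemma integral_sub_mul_gaussianReal {m : ℝ} {v : ℝ≥0} {h h' : ℝ → ℝ}
    (hh : ∀ x, HasDerivAt h (h' x) x) (h_int : Integrable h (gaussianReal m v))
    (h_int_mul : Integrable (fun x ↦ (x - m) * h x) (gaussianReal m v))
    (h_int' : Integrable h' (gaussianReal m v)) :
    ∫ x, (x - m) * h x ∂gaussianReal m v = v * ∫ x, h' x ∂gaussianReal m v := by
  obtain rfl | hv := eq_or_ne v 0
  · simp [gaussianReal_zero_var]
  rw [integrable_gaussianReal_iff hv] at h_int h_int_mul h_int'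
  have h_parts : ∫ x, (gaussianPDFReal m v x * h' x -
      (v : ℝ)⁻¹ * (gaussianPDFReal m v x * ((x - m) * h x))) = 0 :=
    integral_eq_zero_of_hasDerivAt_of_integrable
      (fun x ↦ ((hasDerivAt_gaussianPDFReal m v x).mul (hh x)).congr_deriv (by ring))
      (h_int'.sub (h_int_mul.const_mul _)) h_int
  rw [integral_sub h_int' (h_int_mul.const_mul _), integral_const_mul, sub_eq_zero] at h_parts
  simp only [integral_gaussianReal_eq_integral_smul hv, smul_eq_mul]
  rw [h_parts, mul_inv_cancel_left₀ (NNReal.coe_ne_zero.2 hv)]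

lemma integral_mul_comp_add_smul_gaussianReal {E : Type*} [NormedAddCommGroup E] [NormedSpace ℝ E]
    {f : E → ℝ} {C C' : ℝ} (hf : Differentiable ℝ f) (hf_le : ∀ x, ‖f x‖ ≤ C)
    (hf'_le : ∀ x, ‖fderiv ℝ f x‖ ≤ C') (v : ℝ≥0) (z a : E) :
    ∫ w, w * f (z + w • a) ∂gaussianReal 0 v =
      v * ∫ w, fderiv ℝ f (z + w • a) a ∂gaussianReal 0 v := by
  have h_deriv (w : ℝ) : HasDerivAt (fun w ↦ f (z + w • a)) (fderiv ℝ f (z + w • a) a) w :=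
    (hf _).hasFDerivAt.comp_hasDerivAt w <| by
      simpa using ((hasDerivAt_id w).smul_const a).const_add z
  have h_cont : Continuous fun w : ℝ ↦ f (z + w • a) := hf.continuous.comp (by fun_prop)
  have h_meas' : Measurable fun w : ℝ ↦ fderiv ℝ f (z + w • a) a := by
    simpa only [← (h_deriv _).deriv] using measurable_deriv fun w ↦ f (z + w • a)
  have h_int_id : Integrable id (gaussianReal 0 v) := (memLp_id_gaussianReal 1).integrable le_rfl
  simpa only [sub_zero] using integral_sub_mul_gaussianReal (m := 0) h_deriv
    (.of_bound h_cont.aestronglyMeasurable C (ae_of_all _ fun w ↦ hf_le _))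
    (by simpa only [sub_zero, id_eq] using
      h_int_id.mul_bdd (c := C) h_cont.aestronglyMeasurable (ae_of_all _ fun w ↦ hf_le _))
    (.of_bound h_meas'.aestronglyMeasurable (C' * ‖a‖)
      (ae_of_all _ fun w ↦ (fderiv ℝ f _).le_of_opNorm_le (hf'_le _) a))

variable {Ω E : Type*} {mΩ : MeasurableSpace Ω} {P : Measure Ω}
  [NormedAddCommGroup E] [NormedSpace ℝ E] [CompleteSpace E]
  [MeasurableSpace E] [BorelSpace E] [SecondCountableTopology E] {W : Ω → ℝ} {Z : Ω → E}

lemma exists_indepFun_sub_smul_of_hasGaussianLaw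
    (hWZ : HasGaussianLaw (fun ω ↦ (W ω, Z ω)) P) (hW : P[W] = 0) :
    ∃ a : E, Var[W; P] • a = ∫ ω, W ω • Z ω ∂P ∧ IndepFun W (fun ω ↦ Z ω - W ω • a) P := by
  have := hWZ.isProbabilityMeasure
  have hW₂ : MemLp W 2 P := hWZ.fst.memLp_two
  have hZ₂ : MemLp Z 2 P := hWZ.snd.memLp_two
  have h_int : Integrable (fun ω ↦ W ω • Z ω) P := memLp_one_iff_integrable.1 (hZ₂.smul hW₂)
  obtain ⟨a, ha⟩ : ∃ a : E, Var[W; P] • a = ∫ ω, W ω • Z ω ∂P := by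
    obtain h_zero | h_ne := eq_or_ne Var[W; P] 0
    · refine ⟨0, ?_⟩
      rw [smul_zero, eq_comm]
      refine integral_eq_zero_of_ae ?_
      filter_upwards [ae_eq_integral_of_variance_eq_zero hW₂ h_zero] with ω hω
      rw [hω, hW, zero_smul, Pi.zero_apply]
    · exact ⟨_, smul_inv_smul₀ h_ne _⟩
  refine ⟨a, ha, ?_⟩
  have h_joint : HasGaussianLaw (fun ω ↦ (W ω, Z ω - W ω • a)) P :=
    hWZ.map_fun ((ContinuousLinearMap.fst ℝ ℝ E).prod
      (.snd ℝ ℝ E - (ContinuousLinearMap.fst ℝ ℝ E).smulRight a))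
  refine h_joint.indepFun_of_covariance_strongDual fun L₁ L₂ ↦ ?_
  have h_cov : cov[W, L₂ ∘ Z; P] = Var[W; P] * L₂ a :=
    calc cov[W, L₂ ∘ Z; P] = ∫ ω, W ω • L₂ (Z ω) ∂P := by
          rw [covariance_eq_sub hW₂ (L₂.comp_memLp' hZ₂), hW, zero_mul, sub_zero]; rfl
      _ = L₂ (∫ ω, W ω • Z ω ∂P) := by
          rw [← L₂.integral_comp_comm h_int]; simp only [map_smul]
      _ = Var[W; P] * L₂ a := by rw [← ha, map_smul, smul_eq_mul]
  have hL₁ : L₁ ∘ W = fun ω ↦ L₁ 1 * W ω := by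
    ext ω; rw [Function.comp_apply, mul_comm, ← smul_eq_mul, ← map_smul, smul_eq_mul, mul_one]
  have hL₂ : (L₂ ∘ fun ω ↦ Z ω - W ω • a) = (L₂ ∘ Z) - fun ω ↦ W ω * L₂ a := by
    ext ω; simp
  rw [hL₁, hL₂, covariance_const_mul_left,
    covariance_sub_right hW₂ (L₂.comp_memLp' hZ₂) (hW₂.mul_const _), covariance_mul_const_right,
    covariance_self hWZ.fst.aemeasurable, h_cov, sub_self, mul_zero]

lemma integral_comp_prodMk_of_indepFun {α β : Type*} {mα : MeasurableSpace α}
    {mβ : MeasurableSpace β} [IsFiniteMeasure P] {X : Ω → α} {Y : Ω → β}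
    (hX : AEMeasurable X P) (hY : AEMeasurable Y P) (hXY : IndepFun X Y P) {G : α × β → ℝ}
    (hG : Integrable G ((P.map X).prod (P.map Y))) :
    ∫ ω, G (X ω, Y ω) ∂P = ∫ y, ∫ x, G (x, y) ∂P.map X ∂P.map Y := by
  have h_law := (indepFun_iff_map_prod_eq_prod_map_map hX hY).1 hXY
  rw [← integral_prod_symm _ hG, ← h_law,
    integral_map (hX.prodMk hY) (h_law ▸ hG.aestronglyMeasurable)]

-- Write `Z = V + W • a` with `V` independent of `W`, then integrate by parts in `W` alone.
lemma integral_mul_comp_of_hasGaussianLaw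
    (hWZ : HasGaussianLaw (fun ω ↦ (W ω, Z ω)) P) (hW : P[W] = 0) {f : E → ℝ} {C C' : ℝ}
    (hf : Differentiable ℝ f) (hf_le : ∀ x, ‖f x‖ ≤ C) (hf'_le : ∀ x, ‖fderiv ℝ f x‖ ≤ C') :
    ∫ ω, W ω * f (Z ω) ∂P = ∫ ω, fderiv ℝ f (Z ω) (∫ ω', W ω' • Z ω' ∂P) ∂P := by
  have := hWZ.isProbabilityMeasure
  obtain ⟨a, ha, h_indep⟩ := exists_indepFun_sub_smul_of_hasGaussianLaw hWZ hW
  set V : Ω → E := fun ω ↦ Z ω - W ω • a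
  have hW_meas : AEMeasurable W P := hWZ.fst.aemeasurable
  have hV_meas : AEMeasurable V P := hWZ.snd.aemeasurable.sub (hW_meas.smul_const a)
  have := Measure.isProbabilityMeasure_map (μ := P) hW_meas
  have := Measure.isProbabilityMeasure_map (μ := P) hV_meas
  have hW_law : P.map W = gaussianReal 0 Var[W; P].toNNReal := by
    rw [hWZ.fst.map_eq_gaussianReal, hW]
  have h_int_fst : Integrable (fun p : ℝ × E ↦ p.1) ((P.map W).prod (P.map V)) := by
    rw [hW_law]; exact ((memLp_id_gaussianReal 1).integrable le_rfl).comp_fst _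
  have h_int_mul : Integrable (fun p : ℝ × E ↦ p.1 * f (p.2 + p.1 • a))
      ((P.map W).prod (P.map V)) :=
    h_int_fst.mul_bdd (c := C) (hf.continuous.comp (by fun_prop)).aestronglyMeasurable
      (ae_of_all _ fun p ↦ hf_le _)
  have h_int' : Integrable (fun p : ℝ × E ↦ fderiv ℝ f (p.2 + p.1 • a) a)
      ((P.map W).prod (P.map V)) :=
    .of_bound ((measurable_fderiv_apply_const ℝ f a).comp (by fun_prop)).aestronglyMeasurable
      (C' * ‖a‖) (ae_of_all _ fun p ↦ (fderiv ℝ f _).le_of_opNorm_le (hf'_le _) a)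
  have hZ (ω : Ω) : Z ω = V ω + W ω • a := (sub_add_cancel _ _).symm
  calc ∫ ω, W ω * f (Z ω) ∂P
      = ∫ z, ∫ w, w * f (z + w • a) ∂P.map W ∂P.map V := by
        simp only [hZ]
        exact integral_comp_prodMk_of_indepFun hW_meas hV_meas h_indep h_int_mul
    _ = Var[W; P] * ∫ ω, fderiv ℝ f (Z ω) a ∂P := by
        simp only [hW_law, integral_mul_comp_add_smul_gaussianReal hf hf_le hf'_le,
          Real.coe_toNNReal _ (variance_nonneg _ _), integral_const_mul, hZ]
        rw [← hW_law, integral_comp_prodMk_of_indepFun hW_meas hV_meas h_indep h_int']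
    _ = ∫ ω, fderiv ℝ f (Z ω) (∫ ω', W ω' • Z ω' ∂P) ∂P := by
        simp only [← ha, map_smul, smul_eq_mul, integral_const_mul]

end GaussianIntegrationByParts

section RotationInterpolation

variable {E : Type*} [NormedAddCommGroup E] [NormedSpace ℝ E]

lemma hasDerivAt_rotation_fst (p : E × E) (θ : ℝ) :
    HasDerivAt (fun t ↦ (rot t p).1) (rot θ p).2 θ := by
  simp only [ContinuousLinearMap.rotation_apply]
  exact ((Real.hasDerivAt_cos θ).smul_const p.1).add ((Real.hasDerivAt_sin θ).smul_const p.2)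

lemma norm_rotation_snd_le (θ : ℝ) (p : E × E) : ‖(rot θ p).2‖ ≤ ‖p.1‖ + ‖p.2‖ := by
  rw [ContinuousLinearMap.rotation_apply]
  refine (norm_add_le _ _).trans (add_le_add ?_ ?_)
  · rw [norm_smul, norm_neg]
    exact mul_le_of_le_one_left (norm_nonneg _) (Real.abs_sin_le_one θ)
  · rw [norm_smul]
    exact mul_le_of_le_one_left (norm_nonneg _) (Real.abs_cos_le_one θ)

variable [MeasurableSpace E] [BorelSpace E] [SecondCountableTopology E] {μ ν : Measure E}

lemma hasDerivAt_integral_comp_rotation_fst [IsFiniteMeasure μ]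
    [IsFiniteMeasure ν] (hμ : Integrable id μ) (hν : Integrable id ν) {f : E → ℝ} {C C' : ℝ}
    (hf : Differentiable ℝ f) (hf_le : ∀ x, ‖f x‖ ≤ C) (hf'_le : ∀ x, ‖fderiv ℝ f x‖ ≤ C')
    (θ : ℝ) :
    HasDerivAt (fun t ↦ ∫ p, f (rot t p).1 ∂μ.prod ν)
      (∫ p, fderiv ℝ f (rot θ p).1 (rot θ p).2 ∂μ.prod ν) θ := by
  have h_meas (t : ℝ) : AEStronglyMeasurable (fun p : E × E ↦ f (rot t p).1) (μ.prod ν) :=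
    (hf.continuous.comp (by fun_prop)).aestronglyMeasurable
  have h_deriv (p : E × E) (t : ℝ) : HasDerivAt (fun t ↦ f (rot t p).1)
      (fderiv ℝ f (rot t p).1 (rot t p).2) t :=
    (hf _).hasFDerivAt.comp_hasDerivAt t (hasDerivAt_rotation_fst p t)
  have h_meas' : AEStronglyMeasurable
      (fun p : E × E ↦ fderiv ℝ f (rot θ p).1 (rot θ p).2) (μ.prod ν) := by
    have h_cont : Continuous (Function.uncurry fun (p : E × E) (t : ℝ) ↦ f (rot t p).1) := by
      simp only [Function.uncurry_def, ContinuousLinearMap.rotation_apply]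
      exact hf.continuous.comp (by fun_prop)
    have h := (measurable_deriv_with_param h_cont).comp (measurable_prodMk_right (y := θ))
    simpa only [Function.comp_def, (h_deriv _ _).deriv] using h.aestronglyMeasurable
  refine (hasDerivAt_integral_of_dominated_loc_of_deriv_le (s := Set.univ)
    (bound := fun p ↦ C' * (‖p.1‖ + ‖p.2‖)) univ_mem (.of_forall h_meas)
    (.of_bound (h_meas θ) C (ae_of_all _ fun p ↦ hf_le _)) h_meas'
    (ae_of_all _ fun p t _ ↦ ?_) ?_ (ae_of_all _ fun p t _ ↦ h_deriv p t)).2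
  · exact (ContinuousLinearMap.le_of_opNorm_le _ (hf'_le _) _).trans
      (mul_le_mul_of_nonneg_left (norm_rotation_snd_le t p) ((norm_nonneg _).trans (hf'_le 0)))
  · exact ((hμ.norm.comp_fst ν).add (hν.norm.comp_snd μ)).const_mul C'

lemma covariance_rotation_snd_fst [IsProbabilityMeasure μ] [IsProbabilityMeasure ν]
    (hμ : MemLp id 2 μ) (hν : MemLp id 2 ν) (L₁ L₂ : StrongDual ℝ E) (θ : ℝ) :
    cov[fun p ↦ L₁ (rot θ p).2, fun p ↦ L₂ (rot θ p).1; μ.prod ν] =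
      Real.sin θ * Real.cos θ * (cov[L₁, L₂; ν] - cov[L₁, L₂; μ]) := by
  have hμL (L : StrongDual ℝ E) : MemLp L 2 μ := L.comp_memLp' hμ
  have hνL (L : StrongDual ℝ E) : MemLp L 2 ν := L.comp_memLp' hν
  have h_fst (L : StrongDual ℝ E) : MemLp (fun p : E × E ↦ L p.1) 2 (μ.prod ν) :=
    (hμL L).comp_fst ν
  have h_snd (L : StrongDual ℝ E) : MemLp (fun p : E × E ↦ L p.2) 2 (μ.prod ν) :=
    (hνL L).comp_snd μ
  have h_fst_fst : cov[fun p ↦ L₁ p.1, fun p ↦ L₂ p.1; μ.prod ν] = cov[L₁, L₂; μ] := by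
    simpa using (covariance_map_fun (μ := μ.prod ν) (X := L₁) (Y := L₂) (Z := Prod.fst)
      (by fun_prop) (by fun_prop) (by fun_prop)).symm
  have h_snd_snd : cov[fun p ↦ L₁ p.2, fun p ↦ L₂ p.2; μ.prod ν] = cov[L₁, L₂; ν] := by
    simpa using (covariance_map_fun (μ := μ.prod ν) (X := L₁) (Y := L₂) (Z := Prod.snd)
      (by fun_prop) (by fun_prop) (by fun_prop)).symm
  have h_snd_fst : cov[fun p ↦ L₁ p.2, fun p ↦ L₂ p.1; μ.prod ν] = 0 := by
    rw [covariance_comm]; exact covariance_fst_snd_prod (hμL L₂) (hνL L₁)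
  have h_fst_snd : cov[fun p ↦ L₁ p.1, fun p ↦ L₂ p.2; μ.prod ν] = 0 :=
    covariance_fst_snd_prod (hμL L₁) (hνL L₂)
  simp only [ContinuousLinearMap.rotation_apply, map_add, map_smul, smul_eq_mul]
  change cov[(fun p : E × E ↦ -Real.sin θ * L₁ p.1) + fun p : E × E ↦ Real.cos θ * L₁ p.2,
    (fun p : E × E ↦ Real.cos θ * L₂ p.1) + fun p : E × E ↦ Real.sin θ * L₂ p.2; μ.prod ν] = _
  rw [covariance_add_left ((h_fst L₁).const_mul _) ((h_snd L₁).const_mul _)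
      (((h_fst L₂).const_mul _).add ((h_snd L₂).const_mul _)),
    covariance_add_right ((h_fst L₁).const_mul _) ((h_fst L₂).const_mul _) ((h_snd L₂).const_mul _),
    covariance_add_right ((h_snd L₁).const_mul _) ((h_fst L₂).const_mul _) ((h_snd L₂).const_mul _)]
  simp only [covariance_const_mul_left, covariance_const_mul_right, h_fst_fst, h_snd_snd,
    h_snd_fst, h_fst_snd]
  ring

end RotationInterpolation

section GaussianComparison

variable {ι : Type*} [Fintype ι]

/-- The linear form `x ↦ ∑ i, c i * x i`: the differential of a function on `ι → ℝ` whose partial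
derivatives are the `c i`. -/
def linearForm (c : ι → ℝ) : StrongDual ℝ (ι → ℝ) := ∑ i, c i • ContinuousLinearMap.proj i

lemma linearForm_apply (c x : ι → ℝ) : linearForm c x = ∑ i, c i * x i := by
  simp [linearForm]

lemma norm_linearForm_le {c : ι → ℝ} {C : ℝ} (hc : ∀ i, |c i| ≤ C) :
    ‖linearForm c‖ ≤ Fintype.card ι * C := by
  obtain _ | ⟨⟨i⟩⟩ := isEmpty_or_nonempty ι
  · simp [linearForm]
  have hC : 0 ≤ C := (abs_nonneg _).trans (hc i)
  refine ContinuousLinearMap.opNorm_le_bound _ (by positivity) fun x ↦ ?_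
  rw [linearForm_apply, mul_assoc, ← nsmul_eq_mul, ← Finset.card_univ, ← Finset.sum_const]
  refine norm_sum_le_of_le _ fun i _ ↦ ?_
  rw [norm_mul]
  exact mul_le_mul (hc i) (norm_le_pi_norm x i) (norm_nonneg _) hC

variable {μ ν : Measure (ι → ℝ)} [IsGaussian μ] [IsGaussian ν]

lemma hasGaussianLaw_rotation (i : ι) (θ : ℝ) :
    HasGaussianLaw (fun p : (ι → ℝ) × (ι → ℝ) ↦ ((rot θ p).2 i, (rot θ p).1)) (μ.prod ν) :=
  IsGaussian.hasGaussianLaw_id.map_fun ((((ContinuousLinearMap.proj i).comp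
    (ContinuousLinearMap.snd ℝ (ι → ℝ) (ι → ℝ))).prod (.fst ℝ (ι → ℝ) (ι → ℝ))).comp (rot θ))

lemma integral_rotation_snd_eval (hμ : ∀ i, ∫ x, x i ∂μ = 0) (hν : ∀ i, ∫ x, x i ∂ν = 0)
    (i : ι) (θ : ℝ) : ∫ p, (rot θ p).2 i ∂μ.prod ν = 0 := by
  have hμ_int : Integrable (fun x ↦ x i) μ := (IsGaussian.integrable_id (μ := μ)).eval i
  have hν_int : Integrable (fun x ↦ x i) ν := (IsGaussian.integrable_id (μ := ν)).eval i
  simp only [ContinuousLinearMap.rotation_apply, Pi.add_apply, Pi.smul_apply, smul_eq_mul]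
  rw [integral_add ((hμ_int.comp_fst ν).const_mul _) ((hν_int.comp_snd μ).const_mul _),
    integral_const_mul, integral_const_mul, integral_fun_fst fun x : ι → ℝ ↦ x i,
    integral_fun_snd fun x : ι → ℝ ↦ x i, hμ, hν]
  simp only [smul_zero, mul_zero, add_zero]

lemma integral_rotation_snd_smul_fst_apply
    (hμ : ∀ i, ∫ x, x i ∂μ = 0) (hν : ∀ i, ∫ x, x i ∂ν = 0) (i j : ι) (θ : ℝ) :
    (∫ p, (rot θ p).2 i • (rot θ p).1 ∂μ.prod ν) j =
      Real.sin θ * Real.cos θ *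
        (cov[fun x ↦ x i, fun x ↦ x j; ν] - cov[fun x ↦ x i, fun x ↦ x j; μ]) := by
  have h_law := hasGaussianLaw_rotation (μ := μ) (ν := ν) i θ
  have h_snd := h_law.fst.memLp_two
  have h_fst (k : ι) := (h_law.snd.eval k).memLp_two
  calc (∫ p, (rot θ p).2 i • (rot θ p).1 ∂μ.prod ν) j
      = ∫ p, (rot θ p).2 i * (rot θ p).1 j ∂μ.prod ν :=
        eval_integral (fun k ↦ h_snd.integrable_mul (h_fst k)) j
    _ = cov[fun p : (ι → ℝ) × (ι → ℝ) ↦ (rot θ p).2 i,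
          fun p : (ι → ℝ) × (ι → ℝ) ↦ (rot θ p).1 j; μ.prod ν] := by
        rw [covariance_eq_sub h_snd (h_fst j), integral_rotation_snd_eval hμ hν, zero_mul, sub_zero]
        rfl
    _ = _ := covariance_rotation_snd_fst IsGaussian.memLp_two_id IsGaussian.memLp_two_id
        (ContinuousLinearMap.proj (R := ℝ) (φ := fun _ : ι ↦ ℝ) i) (.proj j) θ

lemma integral_rotation_snd_mul_comp_fst (hμ : ∀ i, ∫ x, x i ∂μ = 0) (hν : ∀ i, ∫ x, x i ∂ν = 0)
    {g : (ι → ℝ) → ℝ} {g' : ι → (ι → ℝ) → ℝ} {C C' : ℝ}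
    (hg : ∀ x, HasFDerivAt g (linearForm fun j ↦ g' j x) x)
    (hg_le : ∀ x, |g x| ≤ C) (hg'_le : ∀ j x, |g' j x| ≤ C') (i : ι) (θ : ℝ) :
    ∫ p, (rot θ p).2 i * g (rot θ p).1 ∂μ.prod ν =
      Real.sin θ * Real.cos θ * ∫ p, ∑ j, (cov[fun x ↦ x i, fun x ↦ x j; ν] -
        cov[fun x ↦ x i, fun x ↦ x j; μ]) * g' j (rot θ p).1 ∂μ.prod ν := by
  rw [integral_mul_comp_of_hasGaussianLaw (hasGaussianLaw_rotation i θ)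
    (integral_rotation_snd_eval hμ hν i θ) (fun x ↦ (hg x).differentiableAt) hg_le
    fun x ↦ (hg x).fderiv ▸ norm_linearForm_le (hg'_le · x), ← integral_const_mul]
  refine integral_congr_ae (ae_of_all _ fun p ↦ ?_)
  simp only [(hg _).fderiv, linearForm_apply, integral_rotation_snd_smul_fst_apply hμ hν,
    Finset.mul_sum]
  exact Finset.sum_congr rfl fun j _ ↦ by ring

variable {f : (ι → ℝ) → ℝ} {f' : ι → (ι → ℝ) → ℝ} {f'' : ι → ι → (ι → ℝ) → ℝ}
  {C C' C'' : ℝ}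

lemma integral_fderiv_rotation_nonneg
    (hμ : ∀ i, ∫ x, x i ∂μ = 0) (hν : ∀ i, ∫ x, x i ∂ν = 0)
    (hf : ∀ x, HasFDerivAt f (linearForm fun i ↦ f' i x) x)
    (hf' : ∀ i x, HasFDerivAt (f' i) (linearForm fun j ↦ f'' i j x) x)
    (hf'_le : ∀ i x, |f' i x| ≤ C') (hf''_le : ∀ i j x, |f'' i j x| ≤ C'')
    (h_cov : ∀ i j x, 0 ≤ (cov[fun x ↦ x i, fun x ↦ x j; ν] -
      cov[fun x ↦ x i, fun x ↦ x j; μ]) * f'' i j x)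
    {θ : ℝ} (hθ : θ ∈ Set.Icc 0 (Real.pi / 2)) :
    0 ≤ ∫ p, fderiv ℝ f (rot θ p).1 (rot θ p).2 ∂μ.prod ν := by
  have h_int (i : ι) :
      Integrable (fun p : (ι → ℝ) × (ι → ℝ) ↦ (rot θ p).2 i * f' i (rot θ p).1) (μ.prod ν) := by
    have h_snd : Integrable (fun p : (ι → ℝ) × (ι → ℝ) ↦ (rot θ p).2 i) (μ.prod ν) :=
      (hasGaussianLaw_rotation i θ).fst.integrable
    have h_cont : Continuous (f' i) := continuous_iff_continuousAt.2 fun x ↦ (hf' i x).continuousAt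
    exact h_snd.mul_bdd (c := C') (h_cont.comp (by fun_prop)).aestronglyMeasurable
      (ae_of_all _ fun p ↦ hf'_le i _)
  simp only [(hf _).fderiv, linearForm_apply, mul_comm (f' _ _)]
  rw [integral_finsetSum _ fun i _ ↦ h_int i]
  refine Finset.sum_nonneg fun i _ ↦ ?_
  rw [integral_rotation_snd_mul_comp_fst hμ hν (hf' i) (hf'_le i) (hf''_le i)]
  have h_sin : 0 ≤ Real.sin θ :=
    Real.sin_nonneg_of_nonneg_of_le_pi hθ.1 (hθ.2.trans (half_le_self Real.pi_pos.le))
  have h_cos : 0 ≤ Real.cos θ :=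
    Real.cos_nonneg_of_mem_Icc ⟨(neg_nonpos.2 (by positivity)).trans hθ.1, hθ.2⟩
  exact mul_nonneg (mul_nonneg h_sin h_cos)
    (integral_nonneg fun p ↦ Finset.sum_nonneg fun j _ ↦ h_cov i j _)

theorem integral_le_integral_of_isGaussian
    (hμ : ∀ i, ∫ x, x i ∂μ = 0) (hν : ∀ i, ∫ x, x i ∂ν = 0)
    (hf : ∀ x, HasFDerivAt f (linearForm fun i ↦ f' i x) x)
    (hf' : ∀ i x, HasFDerivAt (f' i) (linearForm fun j ↦ f'' i j x) x)
    (hf_le : ∀ x, |f x| ≤ C) (hf'_le : ∀ i x, |f' i x| ≤ C') (hf''_le : ∀ i j x, |f'' i j x| ≤ C'')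
    (h_cov : ∀ i j x, 0 ≤ (cov[fun x ↦ x i, fun x ↦ x j; ν] -
      cov[fun x ↦ x i, fun x ↦ x j; μ]) * f'' i j x) :
    ∫ x, f x ∂μ ≤ ∫ x, f x ∂ν := by
  have h_deriv (θ : ℝ) : HasDerivAt (fun t ↦ ∫ p, f (rot t p).1 ∂μ.prod ν)
      (∫ p, fderiv ℝ f (rot θ p).1 (rot θ p).2 ∂μ.prod ν) θ :=
    hasDerivAt_integral_comp_rotation_fst IsGaussian.integrable_id IsGaussian.integrable_id
      (fun x ↦ (hf x).differentiableAt) hf_le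
      (fun x ↦ (hf x).fderiv ▸ norm_linearForm_le (hf'_le · x)) θ
  have h_mono : MonotoneOn (fun θ ↦ ∫ p, f (rot θ p).1 ∂μ.prod ν) (Set.Icc 0 (Real.pi / 2)) :=
    monotoneOn_of_deriv_nonneg (convex_Icc _ _)
      (fun θ _ ↦ (h_deriv θ).continuousAt.continuousWithinAt)
      (fun θ _ ↦ (h_deriv θ).differentiableAt.differentiableWithinAt) fun θ hθ ↦ by
        rw [(h_deriv θ).deriv]
        exact integral_fderiv_rotation_nonneg hμ hν hf hf' hf'_le hf''_le h_cov
          (interior_subset hθ)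
  have h_pi : 0 ≤ Real.pi / 2 := by positivity
  calc ∫ x, f x ∂μ = ∫ p, f (rot 0 p).1 ∂μ.prod ν := by
        simp [ContinuousLinearMap.rotation_apply, integral_fun_fst]
    _ ≤ ∫ p, f (rot (Real.pi / 2) p).1 ∂μ.prod ν :=
        h_mono (Set.left_mem_Icc.2 h_pi) (Set.right_mem_Icc.2 h_pi) h_pi
    _ = ∫ x, f x ∂ν := by simp [ContinuousLinearMap.rotation_apply, integral_fun_snd]

end GaussianComparison

section SoftOrthant

variable {ι : Type*}

/-- The exponential penalty for the coordinate `x i` exceeding the threshold `a i`. For large slope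
`c` and offset `b` with `b = o(c)`, it is small when `x i ≤ a i` and large when `a i < x i`. -/
def excessPenalty (c b : ℝ) (a x : ι → ℝ) (i : ι) : ℝ := Real.exp (c * (x i - a i) - b)

lemma excessPenalty_nonneg (c b : ℝ) (a x : ι → ℝ) (i : ι) : 0 ≤ excessPenalty c b a x i :=
  (Real.exp_pos _).le

lemma hasFDerivAt_excessPenalty [Finite ι] (c b : ℝ) (a x : ι → ℝ) (i : ι) :
    HasFDerivAt (fun y ↦ excessPenalty c b a y i)
      ((c * excessPenalty c b a x i) • (.proj i : StrongDual ℝ (ι → ℝ))) x := by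
  have := Fintype.ofFinite ι
  refine (((((hasFDerivAt_apply i x).sub_const (a i)).const_mul c).sub_const b).exp).congr_fderiv ?_
  rw [smul_smul, mul_comm]; rfl

variable [Fintype ι]

/-- A smooth approximation of the indicator function of the orthant `Set.Iic a`, with nonnegative
mixed second partial derivatives. -/
def softOrthant (c b : ℝ) (a x : ι → ℝ) : ℝ := Real.exp (-∑ i, excessPenalty c b a x i)

lemma softOrthant_nonneg (c b : ℝ) (a x : ι → ℝ) : 0 ≤ softOrthant c b a x := (Real.exp_pos _).le

lemma softOrthant_le_one (c b : ℝ) (a x : ι → ℝ) : softOrthant c b a x ≤ 1 :=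
  Real.exp_le_one_iff.2 (neg_nonpos.2 (Finset.sum_nonneg fun i _ ↦ excessPenalty_nonneg c b a x i))

lemma abs_softOrthant_le_one (c b : ℝ) (a x : ι → ℝ) : |softOrthant c b a x| ≤ 1 := by
  rw [abs_of_nonneg (softOrthant_nonneg c b a x)]; exact softOrthant_le_one c b a x

lemma excessPenalty_le_sum (c b : ℝ) (a x : ι → ℝ) (i : ι) :
    excessPenalty c b a x i ≤ ∑ j, excessPenalty c b a x j :=
  Finset.single_le_sum (fun j _ ↦ excessPenalty_nonneg c b a x j) (Finset.mem_univ i)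

lemma excessPenalty_mul_softOrthant_le (c b : ℝ) (a x : ι → ℝ) (i : ι) :
    excessPenalty c b a x i * softOrthant c b a x ≤ 1 := by
  rw [softOrthant, Real.exp_neg, ← div_eq_mul_inv, div_le_one (Real.exp_pos _)]
  have h_exp := Real.add_one_le_exp (∑ j, excessPenalty c b a x j)
  linarith [excessPenalty_le_sum c b a x i]

lemma excessPenalty_mul_mul_softOrthant_le (c b : ℝ) (a x : ι → ℝ) (i j : ι) :
    excessPenalty c b a x i * excessPenalty c b a x j * softOrthant c b a x ≤ 2 := by
  have h_mul : excessPenalty c b a x i * excessPenalty c b a x j ≤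
      (∑ k, excessPenalty c b a x k) ^ 2 := by
    rw [pow_two]
    exact mul_le_mul (excessPenalty_le_sum c b a x i) (excessPenalty_le_sum c b a x j)
      (excessPenalty_nonneg c b a x j) ((excessPenalty_nonneg c b a x i).trans
        (excessPenalty_le_sum c b a x i))
  have h_sum : 0 ≤ ∑ k, excessPenalty c b a x k :=
    Finset.sum_nonneg fun k _ ↦ excessPenalty_nonneg c b a x k
  rw [softOrthant, Real.exp_neg, ← div_eq_mul_inv, div_le_iff₀ (Real.exp_pos _)]
  linarith [Real.quadratic_le_exp_of_nonneg h_sum]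

lemma tendsto_softOrthant (a x : ι → ℝ) :
    Tendsto (fun k : ℕ ↦ softOrthant ((k : ℝ) ^ 2) k a x) atTop
      (𝓝 ((Set.Iic a).indicator 1 x)) := by
  by_cases hx : x ∈ Set.Iic a
  · have h_penalty (i : ι) :
        Tendsto (fun k : ℕ ↦ excessPenalty ((k : ℝ) ^ 2) k a x i) atTop (𝓝 0) := by
      refine Real.tendsto_exp_atBot.comp (tendsto_atBot_mono (fun k ↦ ?_)
        (tendsto_neg_atTop_atBot.comp tendsto_natCast_atTop_atTop))
      have := mul_nonpos_of_nonneg_of_nonpos (sq_nonneg (k : ℝ)) (sub_nonpos.2 (hx i))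
      simp only [Function.comp_apply]; linarith
    rw [Set.indicator_of_mem hx, Pi.one_apply]
    simpa [softOrthant] using
      ((tendsto_finsetSum Finset.univ fun i _ ↦ h_penalty i).neg.rexp)
  · obtain ⟨i, hi⟩ : ∃ i, a i < x i := by simpa [Pi.le_def] using hx
    have h_penalty : Tendsto (fun k : ℕ ↦ excessPenalty ((k : ℝ) ^ 2) k a x i) atTop atTop := by
      have h_lin : Tendsto (fun k : ℕ ↦ (k : ℝ) * (x i - a i) - 1) atTop atTop :=
        tendsto_atTop_add_const_right _ _
          (tendsto_natCast_atTop_atTop.atTop_mul_const (sub_pos.2 hi))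
      refine Real.tendsto_exp_atTop.comp
        ((tendsto_natCast_atTop_atTop.atTop_mul_atTop₀ h_lin).congr fun k ↦ by ring)
    rw [Set.indicator_of_notMem hx]
    refine Real.tendsto_exp_atBot.comp (tendsto_neg_atTop_atBot.comp ?_)
    exact tendsto_atTop_mono (fun k ↦ excessPenalty_le_sum _ _ a x i) h_penalty

/-- The `i`-th partial derivative of `softOrthant c b a`. -/
def softOrthantPartial (c b : ℝ) (a : ι → ℝ) (i : ι) (x : ι → ℝ) : ℝ :=
  -(c * (excessPenalty c b a x i * softOrthant c b a x))

lemma hasFDerivAt_softOrthant (c b : ℝ) (a x : ι → ℝ) :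
    HasFDerivAt (softOrthant c b a) (linearForm fun i ↦ softOrthantPartial c b a i x) x := by
  refine (HasFDerivAt.fun_sum fun i (_ : i ∈ Finset.univ) ↦
    hasFDerivAt_excessPenalty c b a x i).neg.exp.congr_fderiv ?_
  ext y
  simp only [linearForm_apply, softOrthantPartial, softOrthant, Pi.neg_apply, smul_neg, neg_apply,
    smul_apply, sum_apply, ContinuousLinearMap.proj_apply, smul_eq_mul, Finset.mul_sum, neg_mul,
    Finset.sum_neg_distrib, neg_inj]
  exact Finset.sum_congr rfl fun i _ ↦ by ring

lemma abs_softOrthantPartial_le (c b : ℝ) (a : ι → ℝ) (i : ι) (x : ι → ℝ) :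
    |softOrthantPartial c b a i x| ≤ |c| := by
  rw [softOrthantPartial, abs_neg, abs_mul]
  refine mul_le_of_le_one_right (abs_nonneg c) ?_
  rw [abs_of_nonneg (mul_nonneg (excessPenalty_nonneg c b a x i) (softOrthant_nonneg c b a x))]
  exact excessPenalty_mul_softOrthant_le c b a x i

variable [DecidableEq ι]

/-- The second partial derivative of `softOrthant c b a` in the directions `i` and `j`. -/
def softOrthantPartial₂ (c b : ℝ) (a : ι → ℝ) (i j : ι) (x : ι → ℝ) : ℝ :=
  c ^ 2 * (excessPenalty c b a x i * excessPenalty c b a x j * softOrthant c b a x -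
    if i = j then excessPenalty c b a x i * softOrthant c b a x else 0)

lemma hasFDerivAt_softOrthantPartial (c b : ℝ) (a : ι → ℝ) (i : ι) (x : ι → ℝ) :
    HasFDerivAt (softOrthantPartial c b a i)
      (linearForm fun j ↦ softOrthantPartial₂ c b a i j x) x := by
  refine (((hasFDerivAt_excessPenalty c b a x i).mul
    (hasFDerivAt_softOrthant c b a x)).const_mul c).neg.congr_fderiv ?_
  ext y
  have h_sum : ∑ j, softOrthantPartial₂ c b a i j x * y j =
      -(c * (excessPenalty c b a x i * ∑ j, softOrthantPartial c b a j x * y j)) -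
        c ^ 2 * (excessPenalty c b a x i * softOrthant c b a x) * y i := by
    simp only [softOrthantPartial₂, softOrthantPartial, mul_sub, sub_mul, mul_ite, ite_mul,
      mul_zero, zero_mul, Finset.sum_sub_distrib, Finset.sum_ite_eq, Finset.mem_univ, if_true,
      Finset.mul_sum, ← Finset.sum_neg_distrib]
    congr 1
    exact Finset.sum_congr rfl fun j _ ↦ by ring
  rw [linearForm_apply, h_sum, ← linearForm_apply]
  simp only [smul_add, neg_add_rev, add_apply, neg_apply, smul_apply,
    ContinuousLinearMap.proj_apply, smul_eq_mul]
  ring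

lemma abs_softOrthantPartial₂_le (c b : ℝ) (a : ι → ℝ) (i j : ι) (x : ι → ℝ) :
    |softOrthantPartial₂ c b a i j x| ≤ c ^ 2 * 2 := by
  rw [softOrthantPartial₂, abs_mul, abs_of_nonneg (sq_nonneg c)]
  refine mul_le_mul_of_nonneg_left (abs_sub_le_of_nonneg_of_le ?_ ?_ ?_ ?_) (sq_nonneg c)
  · exact mul_nonneg (mul_nonneg (excessPenalty_nonneg c b a x i) (excessPenalty_nonneg c b a x j))
      (softOrthant_nonneg c b a x)
  · exact excessPenalty_mul_mul_softOrthant_le c b a x i j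
  · split_ifs
    exacts [mul_nonneg (excessPenalty_nonneg c b a x i) (softOrthant_nonneg c b a x), le_rfl]
  · split_ifs
    exacts [(excessPenalty_mul_softOrthant_le c b a x i).trans one_le_two, zero_le_two]

lemma softOrthantPartial₂_nonneg (c b : ℝ) (a : ι → ℝ) {i j : ι} (hij : i ≠ j) (x : ι → ℝ) :
    0 ≤ softOrthantPartial₂ c b a i j x := by
  rw [softOrthantPartial₂, if_neg hij, sub_zero]
  exact mul_nonneg (sq_nonneg c) (mul_nonneg (mul_nonneg (excessPenalty_nonneg c b a x i)
    (excessPenalty_nonneg c b a x j)) (softOrthant_nonneg c b a x))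

end SoftOrthant

section SlepianOrthant

variable {ι : Type*}

lemma tendsto_integral_softOrthant [Fintype ι] (μ : Measure (ι → ℝ)) [IsFiniteMeasure μ]
    (a : ι → ℝ) :
    Tendsto (fun k : ℕ ↦ ∫ x, softOrthant ((k : ℝ) ^ 2) k a x ∂μ) atTop
      (𝓝 (μ.real (Set.Iic a))) := by
  classical
  rw [← integral_indicator_one measurableSet_Iic]
  have h_cont (k : ℕ) : Continuous (softOrthant ((k : ℝ) ^ 2) k a) :=
    continuous_iff_continuousAt.2 fun x ↦ (hasFDerivAt_softOrthant _ _ a x).continuousAt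
  exact tendsto_integral_of_dominated_convergence (fun _ ↦ 1)
    (fun k ↦ (h_cont k).aestronglyMeasurable) (integrable_const 1)
    (fun k ↦ ae_of_all _ fun x ↦ abs_softOrthant_le_one _ _ a x)
    (ae_of_all _ fun x ↦ tendsto_softOrthant a x)

theorem measure_Iic_le_of_covariance_le [Finite ι] {μ ν : Measure (ι → ℝ)}
    [IsGaussian μ] [IsGaussian ν]
    (hμ : ∀ i, ∫ x, x i ∂μ = 0) (hν : ∀ i, ∫ x, x i ∂ν = 0)
    (h_cov : ∀ i j, cov[fun x ↦ x i, fun x ↦ x j; μ] ≤ cov[fun x ↦ x i, fun x ↦ x j; ν])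
    (h_var : ∀ i, cov[fun x ↦ x i, fun x ↦ x i; μ] = cov[fun x ↦ x i, fun x ↦ x i; ν])
    (a : ι → ℝ) : μ (Set.Iic a) ≤ ν (Set.Iic a) := by
  classical
  have := Fintype.ofFinite ι
  rw [← ENNReal.toReal_le_toReal (measure_ne_top _ _) (measure_ne_top _ _)]
  refine le_of_tendsto_of_tendsto' (tendsto_integral_softOrthant μ a)
    (tendsto_integral_softOrthant ν a) fun k ↦ ?_
  refine integral_le_integral_of_isGaussian hμ hν (hasFDerivAt_softOrthant _ _ a)
    (hasFDerivAt_softOrthantPartial _ _ a) (abs_softOrthant_le_one _ _ a)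
    (abs_softOrthantPartial_le _ _ a) (abs_softOrthantPartial₂_le _ _ a) fun i j x ↦ ?_
  obtain rfl | hij := eq_or_ne i j
  · rw [h_var, sub_self, zero_mul]
  · exact mul_nonneg (sub_nonneg.2 (h_cov i j)) (softOrthantPartial₂_nonneg _ _ a hij x)

end SlepianOrthant

section GaussianProcess

variable {S T Ω Ω' : Type*} {mΩ : MeasurableSpace Ω} {mΩ' : MeasurableSpace Ω'}

/-- A centered Gaussian process: a Gaussian process each of whose variables has mean zero. -/
structure IsCenteredGaussianProcess (X : T → Ω → ℝ) (P : Measure Ω) : Prop where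
  isGaussianProcess : IsGaussianProcess X P
  integral_eq_zero (t : T) : P[X t] = 0

namespace IsCenteredGaussianProcess

variable {P : Measure Ω} {X : T → Ω → ℝ}

lemma of_map_sum_eq_gaussianReal
    (hX : ∀ (n : ℕ) (c : Fin n → ℝ) (r : Fin n → T),
      ∃ v : ℝ≥0, P.map (fun ω ↦ ∑ i, c i * X (r i) ω) = gaussianReal 0 v) :
    IsCenteredGaussianProcess X P := by
  classical
  have h_eval (t : T) : ∃ v : ℝ≥0, P.map (X t) = gaussianReal 0 v := by
    simpa using hX 1 (fun _ ↦ 1) fun _ ↦ t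
  have h_meas (t : T) : AEMeasurable (X t) P := by
    obtain ⟨v, hv⟩ := h_eval t
    exact .of_map_ne_zero (hv ▸ NeZero.ne _)
  refine ⟨⟨fun I ↦ ⟨isGaussian_of_map_eq_gaussianReal fun L ↦ ?_⟩⟩, fun t ↦ ?_⟩
  · have h_restrict : AEMeasurable (fun ω ↦ I.restrict (X · ω)) P :=
      aemeasurable_pi_lambda _ fun i ↦ h_meas i
    obtain ⟨v, hv⟩ := hX _ (fun k ↦ L (Pi.single (I.equivFin.symm k) 1)) fun k ↦ I.equivFin.symm k
    refine ⟨0, v, ?_⟩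
    rw [AEMeasurable.map_map_of_aemeasurable L.continuous.aemeasurable h_restrict, ← hv]
    congr with ω
    rw [I.equivFin.symm.sum_comp fun i ↦ L (Pi.single i 1) * X i ω, Function.comp_apply,
      pi_eq_sum_univ' (I.restrict (X · ω)), map_sum]
    simp only [map_smul, smul_eq_mul, mul_comm, Finset.restrict]
  · obtain ⟨v, hv⟩ := h_eval t
    rw [← integral_map (f := fun x ↦ x) (h_meas t) (by fun_prop), hv, integral_id_gaussianReal]

lemma comp_right (hX : IsCenteredGaussianProcess X P) (g : S → T) :
    IsCenteredGaussianProcess (fun s ↦ X (g s)) P :=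
  ⟨hX.isGaussianProcess.comp_right g, fun s ↦ hX.integral_eq_zero (g s)⟩

lemma aemeasurable (hX : IsCenteredGaussianProcess X P) (t : T) : AEMeasurable (X t) P :=
  hX.isGaussianProcess.aemeasurable t

lemma isProbabilityMeasure (hX : IsCenteredGaussianProcess X P) : IsProbabilityMeasure P :=
  hX.isGaussianProcess.isProbabilityMeasure

lemma aemeasurable_restrict (hX : IsCenteredGaussianProcess X P) (I : Finset T) :
    AEMeasurable (fun ω ↦ I.restrict (X · ω)) P :=
  (hX.isGaussianProcess.hasGaussianLaw I).aemeasurable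

lemma integral_eval_map_restrict (hX : IsCenteredGaussianProcess X P) {I : Finset T} (i : I) :
    ∫ x, x i ∂P.map (fun ω ↦ I.restrict (X · ω)) = 0 := by
  rw [integral_map (hX.aemeasurable_restrict I) (measurable_pi_apply i).aestronglyMeasurable]
  exact hX.integral_eq_zero i

lemma covariance_eval_map_restrict (hX : IsCenteredGaussianProcess X P) {I : Finset T} (i j : I) :
    cov[fun x ↦ x i, fun x ↦ x j; P.map fun ω ↦ I.restrict (X · ω)] = ∫ ω, X i ω * X j ω ∂P := by
  rw [covariance_map_fun (measurable_pi_apply i).aestronglyMeasurable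
    (measurable_pi_apply j).aestronglyMeasurable (hX.aemeasurable_restrict I)]
  simp only [covariance, Finset.restrict, hX.integral_eq_zero, sub_zero]

lemma map_restrict_Iic (hX : IsCenteredGaussianProcess X P) (I : Finset T) (a : T → ℝ) :
    P.map (fun ω ↦ I.restrict (X · ω)) (Set.Iic (I.restrict a)) =
      P (⋂ t ∈ I, {ω | X t ω ≤ a t}) := by
  rw [Measure.map_apply_of_aemeasurable (hX.aemeasurable_restrict I) measurableSet_Iic]
  congr with ω
  simp [Pi.le_def]

end IsCenteredGaussianProcess

lemma tendsto_measure_biInter_finset {μ : Measure Ω} [IsFiniteMeasure μ] [Countable T]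
    {s : T → Set Ω} (hs : ∀ t, NullMeasurableSet (s t) μ) :
    Tendsto (fun I : Finset T ↦ μ (⋂ t ∈ I, s t)) atTop (𝓝 (μ (⋂ t, s t))) := by
  have h_iInter : ⋂ t, s t = ⋂ I : Finset T, ⋂ t ∈ I, s t := by
    ext ω
    simp only [Set.mem_iInter]
    exact ⟨fun h _ t _ ↦ h t, fun h t ↦ h {t} t (Finset.mem_singleton_self t)⟩
  rw [h_iInter]
  exact tendsto_measure_iInter_atTop (fun I ↦ I.nullMeasurableSet_biInter fun t _ ↦ hs t)
    (fun I J hIJ ↦ Set.biInter_mono hIJ fun _ _ ↦ subset_rfl) ⟨∅, measure_ne_top _ _⟩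

variable {P : Measure Ω} {P' : Measure Ω'} {X : T → Ω → ℝ} {Y : T → Ω' → ℝ}

theorem measure_iInter_le_of_covariance_le [Countable T]
    (hX : IsCenteredGaussianProcess X P) (hY : IsCenteredGaussianProcess Y P')
    (h_cov : ∀ s t, ∫ ω, X s ω * X t ω ∂P ≤ ∫ ω, Y s ω * Y t ω ∂P')
    (h_var : ∀ t, ∫ ω, X t ω * X t ω ∂P = ∫ ω, Y t ω * Y t ω ∂P') (a : T → ℝ) :
    P (⋂ t, {ω | X t ω ≤ a t}) ≤ P' (⋂ t, {ω | Y t ω ≤ a t}) := by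
  have := hX.isProbabilityMeasure
  have := hY.isProbabilityMeasure
  refine le_of_tendsto_of_tendsto'
    (tendsto_measure_biInter_finset fun t ↦ nullMeasurableSet_le (hX.aemeasurable t) (by fun_prop))
    (tendsto_measure_biInter_finset fun t ↦ nullMeasurableSet_le (hY.aemeasurable t) (by fun_prop))
    fun I ↦ ?_
  have := (hX.isGaussianProcess.hasGaussianLaw I).isGaussian_map
  have := (hY.isGaussianProcess.hasGaussianLaw I).isGaussian_map
  rw [← hX.map_restrict_Iic, ← hY.map_restrict_Iic]
  refine measure_Iic_le_of_covariance_le hX.integral_eval_map_restrict hY.integral_eval_map_restrict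
    (fun i j ↦ ?_) (fun i ↦ ?_) (I.restrict a)
  · simpa only [hX.covariance_eval_map_restrict, hY.covariance_eval_map_restrict] using h_cov i j
  · simpa only [hX.covariance_eval_map_restrict, hY.covariance_eval_map_restrict] using h_var i

end GaussianProcess

section StochasticOrder

variable {α : Type*} [TopologicalSpace α] [LinearOrder α] [OrderClosedTopology α]
  [MeasurableSpace α] [BorelSpace α] {μ ν : Measure α} [μ.InnerRegularCompactLTTop]

lemma measure_le_of_isLowerSet [IsFiniteMeasure μ] (h : ∀ a, μ (Set.Iic a) ≤ ν (Set.Iic a))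
    {s : Set α} (hs : IsLowerSet s) : μ s ≤ ν s := by
  refine le_of_forall_lt fun r hr ↦ ?_
  obtain ⟨K, hKs, hK, hrK⟩ :=
    hs.ordConnected.measurableSet.exists_lt_isCompact_of_ne_top (measure_ne_top μ s) hr
  obtain ⟨a, haK, ha⟩ := hK.exists_isGreatest (nonempty_of_measure_ne_zero (pos_of_gt hrK).ne')
  calc r < μ K := hrK
    _ ≤ μ (Set.Iic a) := measure_mono ha
    _ ≤ ν (Set.Iic a) := h a
    _ ≤ ν s := measure_mono (hs.Iic_subset (hKs haK))

theorem integral_le_integral_of_measure_Iic_le [IsProbabilityMeasure μ] [IsProbabilityMeasure ν]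
    (h : ∀ a, μ (Set.Iic a) ≤ ν (Set.Iic a)) {F : α → ℝ} {C : ℝ} (hF : Monotone F)
    (hF_le : ∀ x, |F x| ≤ C) :
    ∫ x, F x ∂ν ≤ ∫ x, F x ∂μ := by
  have h_nonneg (x : α) : 0 ≤ C - F x := sub_nonneg.2 (le_of_abs_le (hF_le x))
  have h_layer_cake (ρ : Measure α) [IsProbabilityMeasure ρ] :
      ENNReal.ofReal (C - ∫ x, F x ∂ρ) = ∫⁻ t in Set.Ioi 0, ρ {x | t < C - F x} := by
    have h_int : Integrable F ρ :=
      .of_bound hF.measurable.aestronglyMeasurable C (ae_of_all _ hF_le)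
    have h_sub : Integrable (fun x ↦ C - F x) ρ := (integrable_const C).sub h_int
    have h_integral : ∫ x, (C - F x) ∂ρ = C - ∫ x, F x ∂ρ := by
      rw [integral_sub (integrable_const C) h_int, integral_const, probReal_univ, one_smul]
    rw [← lintegral_eq_lintegral_meas_lt _ (ae_of_all _ h_nonneg) h_sub.aemeasurable,
      ← ofReal_integral_eq_lintegral_ofReal h_sub (ae_of_all _ h_nonneg), h_integral]
  have h_le : ENNReal.ofReal (C - ∫ x, F x ∂μ) ≤ ENNReal.ofReal (C - ∫ x, F x ∂ν) := by
    rw [h_layer_cake, h_layer_cake]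
    refine lintegral_mono fun t ↦ measure_le_of_isLowerSet h fun x y hyx hx ↦ ?_
    exact hx.trans_le (sub_le_sub_left (hF hyx) C)
  have h_le_C : ∫ x, F x ∂ν ≤ C :=
    le_of_abs_le (by simpa using
      norm_integral_le_of_norm_le_const (f := F) (C := C) (ae_of_all ν hF_le))
  linarith [(ENNReal.ofReal_le_ofReal_iff (sub_nonneg.2 h_le_C)).1 h_le]

end StochasticOrder

section Supremum

variable {T Ω Ω' : Type*} {mΩ : MeasurableSpace Ω} {mΩ' : MeasurableSpace Ω'} {P : Measure Ω}
  {P' : Measure Ω'} {X : T → Ω → ℝ} {Y : T → Ω' → ℝ} {F : ℝ → ℝ} {C : ℝ}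

lemma map_iSup_Iic [Countable T] [Nonempty T] (hX : ∀ t, AEMeasurable (X t) P)
    (hX_bdd : ∀ᵐ ω ∂P, BddAbove (Set.range (X · ω))) (a : ℝ) :
    P.map (fun ω ↦ ⨆ t, X t ω) (Set.Iic a) = P (⋂ t, {ω | X t ω ≤ a}) := by
  rw [Measure.map_apply_of_aemeasurable (.iSup hX) measurableSet_Iic]
  refine measure_congr (eventuallyEq_set.2 ?_)
  filter_upwards [hX_bdd] with ω hω
  rw [Set.mem_iInter]
  exact ciSup_le_iff hω

theorem integral_comp_iSup_le_of_covariance_le [Countable T]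
    (hX : IsCenteredGaussianProcess X P) (hY : IsCenteredGaussianProcess Y P')
    (hX_bdd : ∀ᵐ ω ∂P, BddAbove (Set.range (X · ω)))
    (hY_bdd : ∀ᵐ ω ∂P', BddAbove (Set.range (Y · ω)))
    (h_cov : ∀ s t, ∫ ω, X s ω * X t ω ∂P ≤ ∫ ω, Y s ω * Y t ω ∂P')
    (h_var : ∀ t, ∫ ω, X t ω * X t ω ∂P = ∫ ω, Y t ω * Y t ω ∂P')
    (hF : Monotone F) (hF_le : ∀ x, |F x| ≤ C) :
    ∫ ω, F (⨆ t, Y t ω) ∂P' ≤ ∫ ω, F (⨆ t, X t ω) ∂P := by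
  have := hX.isProbabilityMeasure
  have := hY.isProbabilityMeasure
  obtain _ | _ := isEmpty_or_nonempty T
  · simp
  have hX_meas : AEMeasurable (fun ω ↦ ⨆ t, X t ω) P := .iSup hX.aemeasurable
  have hY_meas : AEMeasurable (fun ω ↦ ⨆ t, Y t ω) P' := .iSup hY.aemeasurable
  have := Measure.isProbabilityMeasure_map hX_meas
  have := Measure.isProbabilityMeasure_map hY_meas
  rw [← integral_map hX_meas hF.measurable.aestronglyMeasurable,
    ← integral_map hY_meas hF.measurable.aestronglyMeasurable]
  refine integral_le_integral_of_measure_Iic_le (fun a ↦ ?_) hF hF_le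
  rw [map_iSup_Iic hX.aemeasurable hX_bdd, map_iSup_Iic hY.aemeasurable hY_bdd]
  exact measure_iInter_le_of_covariance_le hX hY h_cov h_var fun _ ↦ a

theorem slepian_comparison_general [TopologicalSpace T] [TopologicalSpace.SeparableSpace T]
    (hX : IsCenteredGaussianProcess X P) (hY : IsCenteredGaussianProcess Y P')
    (hX_cont : ∀ᵐ ω ∂P, Continuous (X · ω)) (hY_cont : ∀ᵐ ω ∂P', Continuous (Y · ω))
    (hX_bdd : ∀ᵐ ω ∂P, BddAbove (Set.range (X · ω)))
    (hY_bdd : ∀ᵐ ω ∂P', BddAbove (Set.range (Y · ω)))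
    (h_cov : ∀ s t, ∫ ω, X s ω * X t ω ∂P ≤ ∫ ω, Y s ω * Y t ω ∂P')
    (h_var : ∀ t, ∫ ω, X t ω * X t ω ∂P = ∫ ω, Y t ω * Y t ω ∂P')
    (hF : Monotone F) (hF_le : ∀ x, |F x| ≤ C) :
    ∫ ω, F (⨆ t, Y t ω) ∂P' ≤ ∫ ω, F (⨆ t, X t ω) ∂P := by
  obtain ⟨S, hS_countable, hS⟩ := TopologicalSpace.exists_countable_dense T
  have := hS_countable.to_subtype
  have hX_sup : ∫ ω, F (⨆ t : S, X t ω) ∂P = ∫ ω, F (⨆ t, X t ω) ∂P :=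
    integral_congr_ae (hX_cont.mono fun ω hω ↦ congrArg F (hS.ciSup' hω))
  have hY_sup : ∫ ω, F (⨆ t : S, Y t ω) ∂P' = ∫ ω, F (⨆ t, Y t ω) ∂P' :=
    integral_congr_ae (hY_cont.mono fun ω hω ↦ congrArg F (hS.ciSup' hω))
  rw [← hX_sup, ← hY_sup]
  exact integral_comp_iSup_le_of_covariance_le (hX.comp_right _) (hY.comp_right _)
    (hX_bdd.mono fun ω hω ↦ hω.mono (Set.range_comp_subset_range _ (X · ω)))
    (hY_bdd.mono fun ω hω ↦ hω.mono (Set.range_comp_subset_range _ (Y · ω)))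
    (fun s t ↦ h_cov s t) (fun t ↦ h_var t) hF hF_le

end Supremum

theorem slepian_comparison
    {d : ℕ} {Ω : Type*} [m0 : MeasurableSpace Ω] (P : Measure Ω) [IsProbabilityMeasure P]
    (A : Set (EuclideanSpace ℝ (Fin d))) (hA : IsCompact A)
    (X Y : EuclideanSpace ℝ (Fin d) → Ω → ℝ)
    (hXmeas : ∀ r, Measurable (X r)) (hYmeas : ∀ r, Measurable (Y r))
    (hXcont : ∀ᵐ ω ∂P, ContinuousOn (fun r => X r ω) A)
    (hYcont : ∀ᵐ ω ∂P, ContinuousOn (fun r => Y r ω) A)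
    (hXgauss : ∀ (n : ℕ) (c : Fin n → ℝ) (r : Fin n → EuclideanSpace ℝ (Fin d)),
      (∀ i, r i ∈ A) → ∃ v : NNReal,
        Measure.map (fun ω => ∑ i, c i * X (r i) ω) P = gaussianReal 0 v)
    (hYgauss : ∀ (n : ℕ) (c : Fin n → ℝ) (r : Fin n → EuclideanSpace ℝ (Fin d)),
      (∀ i, r i ∈ A) → ∃ v : NNReal,
        Measure.map (fun ω => ∑ i, c i * Y (r i) ω) P = gaussianReal 0 v)
    (hkXcont : ContinuousOn
      (fun p : EuclideanSpace ℝ (Fin d) × EuclideanSpace ℝ (Fin d) =>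
        ∫ ω, X p.1 ω * X p.2 ω ∂P) (A ×ˢ A))
    (hkYcont : ContinuousOn
      (fun p : EuclideanSpace ℝ (Fin d) × EuclideanSpace ℝ (Fin d) =>
        ∫ ω, Y p.1 ω * Y p.2 ω ∂P) (A ×ˢ A))
    (hcomp : ∀ u ∈ A, ∀ v ∈ A, ∫ ω, X u ω * X v ω ∂P ≤ ∫ ω, Y u ω * Y v ω ∂P)
    (hdiag : ∀ u ∈ A, ∫ ω, X u ω * X u ω ∂P = ∫ ω, Y u ω * Y u ω ∂P)
    (F : ℝ → ℝ) (hFmono : Monotone F) (hFbdd : ∃ C : ℝ, ∀ x, |F x| ≤ C) :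
    ∫ ω, F (sSup ((fun x => Y x ω) '' A)) ∂P ≤ ∫ ω, F (sSup ((fun x => X x ω) '' A)) ∂P := by
  have := isCompact_iff_compactSpace.1 hA
  obtain ⟨C, hC⟩ := hFbdd
  have hX_cont : ∀ᵐ ω ∂P, Continuous fun r : A ↦ X r ω := hXcont.mono fun _ hω ↦ hω.domRestrict
  have hY_cont : ∀ᵐ ω ∂P, Continuous fun r : A ↦ Y r ω := hYcont.mono fun _ hω ↦ hω.domRestrict
  simp only [sSup_image']
  exact slepian_comparison_general
    (.of_map_sum_eq_gaussianReal fun n c r ↦ hXgauss n c (fun i ↦ r i) fun i ↦ (r i).2)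
    (.of_map_sum_eq_gaussianReal fun n c r ↦ hYgauss n c (fun i ↦ r i) fun i ↦ (r i).2)
    hX_cont hY_cont (hX_cont.mono fun _ hω ↦ (isCompact_range hω).bddAbove)
    (hY_cont.mono fun _ hω ↦ (isCompact_range hω).bddAbove)
    (fun u v ↦ hcomp u u.2 v v.2) (fun u ↦ hdiag u u.2) hFmono hC
end
end

section
/- Let μ be the measure on ℝ × (0,∞) with density 1/y² with respect to Lebesgue measure dx dy. For an integer n ≥ 1 and 0 ≤ i ≤ 2ⁿ − 1, let A_{i,n} = {(u,y) : 2^{−n} ≤ y ≤ 1, (i+1)/2ⁿ − y/2 ≤ u ≤ i/2ⁿ + y/2}. Then for all 0 ≤ i, j ≤ 2ⁿ − 1, μ(A_{i,n} ∩ A_{j,n}) = n·ln 2 − ln(|i−j|+1) + (|i−j|+1)/2ⁿ − 1. In particular μ(A_{i,n}) = n·ln 2 − 1 + 2^{−n}. -/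
open MeasureTheory

noncomputable section

/-- The hyperbolic measure `y^{-2} dx dy` on the upper half plane. -/
def coneMeasure : Measure (ℝ × ℝ) :=
  (volume.restrict {p : ℝ × ℝ | 0 < p.2}).withDensity
    (fun p => ENNReal.ofReal (1 / p.2 ^ 2))

/-- The truncated triangle-like region `A_{i,n}` of the cone construction. -/
def coneRegion (n i : ℕ) : Set (ℝ × ℝ) :=
  {p : ℝ × ℝ | (2:ℝ) ^ (-(n:ℤ)) ≤ p.2 ∧ p.2 ≤ 1 ∧
    ((i:ℝ) + 1) / 2 ^ n - p.2 / 2 ≤ p.1 ∧ p.1 ≤ (i:ℝ) / 2 ^ n + p.2 / 2}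

/-!
Integrating over horizontal slices, a cone whose sides meet at height `d` and which is truncated
at height `t` has hyperbolic measure `∫ y in d..t, (y - d) / y ^ 2 = log (t / d) + d / t - 1`.
Two cones with the same truncation intersect in a cone bounded by the innermost of the four sides;
for `A_{i,n}` and `A_{j,n}` these sides meet at height `(|i - j| + 1) / 2 ^ n`.
-/

lemma max_add_div_sub_min_div {K : Type*} [Field K] [LinearOrder K] [IsStrictOrderedRing K]
    {r : K} (hr : 0 ≤ r) (x y s : K) :
    max ((x + s) / r) ((y + s) / r) - min (x / r) (y / r) = (|x - y| + s) / r := by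
  rw [max_div_div_right hr, min_div_div_right hr, max_add_add_right, ← sub_div,
    add_sub_right_comm, max_sub_min_eq_abs']

lemma hasDerivAt_log_add_mul_inv (d : ℝ) {y : ℝ} (hy : y ≠ 0) :
    HasDerivAt (fun y => Real.log y + d * y⁻¹) ((y - d) / y ^ 2) y :=
  ((Real.hasDerivAt_log hy).add ((hasDerivAt_inv hy).const_mul d)).congr_deriv (by field)

lemma continuousOn_sub_div_sq (d : ℝ) : ContinuousOn (fun y : ℝ => (y - d) / y ^ 2) {0}ᶜ :=
  ContinuousOn.div (by fun_prop) (by fun_prop) fun _ hy => pow_ne_zero 2 hy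

lemma integral_sub_div_sq {a b : ℝ} (d : ℝ) (h : (0 : ℝ) ∉ Set.uIcc a b) :
    ∫ y in a..b, (y - d) / y ^ 2 = Real.log (b / a) + d * (b⁻¹ - a⁻¹) := by
  have ne_zero : ∀ y ∈ Set.uIcc a b, y ≠ 0 := fun y hy => ne_of_mem_of_not_mem hy h
  rw [intervalIntegral.integral_eq_sub_of_hasDerivAt
      (fun y hy => hasDerivAt_log_add_mul_inv d (ne_zero y hy))
      ((continuousOn_sub_div_sq d).mono ne_zero).intervalIntegrable,
    Real.log_div (ne_zero b Set.right_mem_uIcc) (ne_zero a Set.left_mem_uIcc)]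
  ring

lemma setLIntegral_ofReal_sub_div_sq {d t : ℝ} (hd : 0 < d) (hdt : d ≤ t) :
    ∫⁻ y in Set.Icc d t, ENNReal.ofReal ((y - d) / y ^ 2) =
      ENNReal.ofReal (Real.log (t / d) + d / t - 1) := by
  have integrableOn : IntegrableOn (fun y : ℝ => (y - d) / y ^ 2) (Set.Icc d t) :=
    ((continuousOn_sub_div_sq d).mono fun y hy => (hd.trans_le hy.1).ne').integrableOn_Icc
  have nonneg : 0 ≤ᵐ[volume.restrict (Set.Icc d t)] fun y : ℝ => (y - d) / y ^ 2 := by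
    filter_upwards [ae_restrict_mem measurableSet_Icc] with y hy
    exact div_nonneg (sub_nonneg.2 hy.1) (sq_nonneg y)
  rw [← ofReal_integral_eq_lintegral_ofReal integrableOn nonneg, integral_Icc_eq_integral_Ioc,
    ← intervalIntegral.integral_of_le hdt,
    integral_sub_div_sq d (Set.notMem_uIcc_of_lt hd (hd.trans_le hdt)), mul_sub,
    mul_inv_cancel₀ hd.ne', ← div_eq_mul_inv, add_sub_assoc]

lemma coneMeasure_eq_prod :
    coneMeasure = (volume : Measure ℝ).prod
      ((volume.restrict (Set.Ioi 0)).withDensity fun y : ℝ => ENNReal.ofReal (1 / y ^ 2)) := by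
  have upperHalfPlane_eq : {p : ℝ × ℝ | 0 < p.2} = Set.univ ×ˢ Set.Ioi 0 := by ext; simp
  rw [coneMeasure, upperHalfPlane_eq, Measure.volume_eq_prod, ← Measure.prod_restrict,
    Measure.restrict_univ, prod_withDensity_right (by fun_prop)]

lemma coneMeasure_apply {s : Set (ℝ × ℝ)} (hs : MeasurableSet s) :
    coneMeasure s =
      ∫⁻ y in Set.Ioi 0, ENNReal.ofReal (1 / y ^ 2) * volume ((fun x => (x, y)) ⁻¹' s) := by
  rw [coneMeasure_eq_prod, Measure.prod_apply_symm hs,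
    lintegral_withDensity_eq_lintegral_mul _ (by fun_prop) (measurable_measure_prodMk_right hs)]
  rfl

/-- The cone with sides `u = a - y / 2` and `u = b + y / 2`, which meet at height `y = a - b`,
truncated to heights `c ≤ y ≤ t`. This family contains the regions `A_{i,n}` and, unlike them, is
closed under intersection at fixed `c` and `t`. -/
def truncatedCone (a b c t : ℝ) : Set (ℝ × ℝ) :=
  {p : ℝ × ℝ | c ≤ p.2 ∧ p.2 ≤ t ∧ a - p.2 / 2 ≤ p.1 ∧ p.1 ≤ b + p.2 / 2}

lemma truncatedCone_inter_truncatedCone (a b a' b' c t : ℝ) :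
    truncatedCone a b c t ∩ truncatedCone a' b' c t =
      truncatedCone (max a a') (min b b') c t := by
  ext p
  simp only [truncatedCone, Set.mem_inter_iff, Set.mem_ofPred_eq]
  grind

-- Below height `a - b` the two sides have crossed, so there the cone is empty.
lemma truncatedCone_eq_of_le_sub {a b c : ℝ} (t : ℝ) (h : c ≤ a - b) :
    truncatedCone a b c t = truncatedCone a b (a - b) t := by
  ext p
  simp only [truncatedCone, Set.mem_ofPred_eq]
  grind

lemma measurableSet_truncatedCone (a b c t : ℝ) : MeasurableSet (truncatedCone a b c t) := by
  unfold truncatedCone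
  measurability

lemma volume_preimage_truncatedCone (a b c t y : ℝ) :
    volume ((fun x => (x, y)) ⁻¹' truncatedCone a b c t) =
      (Set.Icc c t).indicator (fun y => ENNReal.ofReal (y - (a - b))) y := by
  by_cases hy : y ∈ Set.Icc c t
  · have slice_eq : (fun x => (x, y)) ⁻¹' truncatedCone a b c t =
        Set.Icc (a - y / 2) (b + y / 2) := by
      ext x
      simp [truncatedCone, hy.1, hy.2]
    rw [slice_eq, Real.volume_Icc, Set.indicator_of_mem hy]
    ring_nf
  · have slice_eq_empty : (fun x => (x, y)) ⁻¹' truncatedCone a b c t = ∅ :=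
      Set.eq_empty_of_forall_notMem fun x hx => hy ⟨hx.1, hx.2.1⟩
    rw [slice_eq_empty, measure_empty, Set.indicator_of_notMem hy]

lemma coneMeasure_truncatedCone_eq_setLIntegral (a b t : ℝ) {c : ℝ} (hc : 0 < c) :
    coneMeasure (truncatedCone a b c t) =
      ∫⁻ y in Set.Icc c t, ENNReal.ofReal ((y - (a - b)) / y ^ 2) := by
  have Icc_subset : Set.Icc c t ⊆ Set.Ioi 0 := fun y hy => hc.trans_le hy.1
  simp_rw [coneMeasure_apply (measurableSet_truncatedCone a b c t),
    volume_preimage_truncatedCone,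
    ← Set.indicator_mul_right _ (fun y : ℝ => ENNReal.ofReal (1 / y ^ 2))]
  rw [setLIntegral_indicator measurableSet_Icc, Set.inter_eq_left.2 Icc_subset]
  congr! 2 with y
  rw [← ENNReal.ofReal_mul (by positivity), one_div_mul_eq_div]

theorem coneMeasure_truncatedCone {a b c t : ℝ} (hc : 0 < c) (hcd : c ≤ a - b) (hdt : a - b ≤ t) :
    coneMeasure (truncatedCone a b c t) =
      ENNReal.ofReal (Real.log (t / (a - b)) + (a - b) / t - 1) := by
  have hd : 0 < a - b := hc.trans_le hcd
  rw [truncatedCone_eq_of_le_sub t hcd, coneMeasure_truncatedCone_eq_setLIntegral a b t hd,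
    setLIntegral_ofReal_sub_div_sq hd hdt]

lemma coneRegion_eq_truncatedCone (n i : ℕ) :
    coneRegion n i = truncatedCone (((i : ℝ) + 1) / 2 ^ n) ((i : ℝ) / 2 ^ n) (1 / 2 ^ n) 1 := by
  rw [one_div, ← zpow_natCast, ← zpow_neg]
  rfl

lemma coneMeasure_coneRegion_inter_coneRegion {n i j : ℕ} (hij : |(i : ℝ) - j| + 1 ≤ 2 ^ n) :
    coneMeasure (coneRegion n i ∩ coneRegion n j) =
      ENNReal.ofReal (n * Real.log 2 - Real.log (|(i : ℝ) - j| + 1)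
        + (|(i : ℝ) - j| + 1) / 2 ^ n - 1) := by
  have height_eq := max_add_div_sub_min_div (by positivity : (0 : ℝ) ≤ 2 ^ n) i j 1
  rw [coneRegion_eq_truncatedCone, coneRegion_eq_truncatedCone, truncatedCone_inter_truncatedCone,
    coneMeasure_truncatedCone (by positivity), height_eq, one_div_div,
    Real.log_div (by positivity) (by positivity), Real.log_pow, div_one]
  · rw [height_eq]
    gcongr
    simp
  · rw [height_eq]
    exact div_le_one_of_le₀ hij (by positivity)

lemma coneMeasure_coneRegion (n i : ℕ) :
    coneMeasure (coneRegion n i) =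
      ENNReal.ofReal (n * Real.log 2 - 1 + (2 : ℝ) ^ (-(n : ℤ))) := by
  have h := coneMeasure_coneRegion_inter_coneRegion (n := n) (i := i) (j := i)
    (by simp [one_le_pow₀])
  rw [Set.inter_self] at h
  simpa [sub_add_eq_add_sub] using h

theorem coneMeasure_inter_coneRegion_general (n i j : ℕ)
    (hij : ((i : ℤ) - (j : ℤ)).natAbs < 2 ^ n) :
    coneMeasure (coneRegion n i ∩ coneRegion n j)
      = ENNReal.ofReal ((n : ℝ) * Real.log 2
          - Real.log ((((i:ℤ) - (j:ℤ)).natAbs : ℝ) + 1)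
          + ((((i:ℤ) - (j:ℤ)).natAbs : ℝ) + 1) / 2 ^ n - 1) ∧
    coneMeasure (coneRegion n i)
      = ENNReal.ofReal ((n : ℝ) * Real.log 2 - 1 + (2:ℝ) ^ (-(n:ℤ))) := by
  have natAbs_eq : (((i : ℤ) - (j : ℤ)).natAbs : ℝ) = |(i : ℝ) - j| := by
    simp [Nat.cast_natAbs]
  have abs_add_one_le : |(i : ℝ) - j| + 1 ≤ 2 ^ n := by
    rw [← natAbs_eq]
    exact_mod_cast hij
  rw [natAbs_eq]
  exact ⟨coneMeasure_coneRegion_inter_coneRegion abs_add_one_le, coneMeasure_coneRegion n i⟩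

theorem coneMeasure_inter_coneRegion (n : ℕ) (hn : 1 ≤ n) (i j : ℕ)
    (hi : i < 2 ^ n) (hj : j < 2 ^ n) :
    coneMeasure (coneRegion n i ∩ coneRegion n j)
      = ENNReal.ofReal ((n : ℝ) * Real.log 2
          - Real.log ((((i:ℤ) - (j:ℤ)).natAbs : ℝ) + 1)
          + ((((i:ℤ) - (j:ℤ)).natAbs : ℝ) + 1) / 2 ^ n - 1) ∧
    coneMeasure (coneRegion n i)
      = ENNReal.ofReal ((n : ℝ) * Real.log 2 - 1 + (2:ℝ) ^ (-(n:ℤ))) :=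
  coneMeasure_inter_coneRegion_general n i j (by omega)
end
end

section
/- There exist a strictly increasing sequence (γ_n) with γ_n² < 2d and γ_n → √(2d), and a sequence of positive reals (λ_n), such that the random variables λ_n · M^{γ_n}([0,1]^d) converge in distribution as n → ∞ to a random variable Z that is almost surely finite and is not almost surely equal to 0 (indeed E[e^{−Z}] = 1/2). Here, for γ² < 2d, M^γ([0,1]^d) denotes the almost sure limit as t → ∞ of the positive martingale M_t^γ([0,1]^d) = ∫_{[0,1]^d} e^{γ·X_t(x) − (γ²/2)·t} dx. -/
open MeasureTheory ProbabilityTheory Filter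

noncomputable section

/-!
A set `S` contains `N` copies of itself, scaled by `exp (-s)` and so far apart that the increments
of the field after time `s` over them are independent copies of the field started at time `0`.
Bounding the field at time `s` uniformly on `S` gives
`P {M < b} ≤ δ + P {M ≤ B * b} ^ N` for the limiting mass `M` of `S`, where `B` depends on `N` and
`δ` but not on `γ` in the bounded subcritical range. With `N = 2` this yields `M > 0` almost
surely, so `λ` can be chosen with `𝔼[exp (-(λ * M))] = 1/2`. That normalization keeps
`P {λ * M < 3} ≥ 1/4`, and for large `N` the bound then forces `P {λ * M ≤ A}` close to `1`,
uniformly in `γ`. Hence the rescaled masses are tight, and Prokhorov's theorem provides a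
subsequential limit, whose Laplace transform at `1` is `1/2`.

For a fixed subcritical `γ` the mass converges because its variation over a unit time step after
time `s` is exponentially small in `L¹`: after truncating the density at time `s`, the second moment
only sees pairs of points at distance `O(exp (-s))`, which fill a volume `O(exp (-d * s))`.
-/

namespace MultiplicativeChaos

open Real Set Topology
open scoped ENNReal NNReal

section Kernel

variable {E : Type*} [NormedAddCommGroup E] [NormedSpace ℝ E]

/-- The covariance kernel `K_t(z) = ∫_1^{e^t} k(uz)/u du` of a star-scale invariant field at
scale `t`. -/
def scaleKernel (k : E → ℝ) (t : ℝ) (z : E) : ℝ :=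
  ∫ u in Icc 1 (exp t), k (u • z) / u

/-- The features of the kernels `scaleKernel k` that the analysis of the field relies on: variance
`s` at scale `s`, exact self-similarity, and range at most `R * exp (-s)` for the increments after
time `s`. -/
structure IsStarScaleCovariance (K : ℝ → E → ℝ) (R : ℝ) : Prop where
  range_pos : 0 < R
  apply_zero : ∀ {s}, 0 ≤ s → K s 0 = s
  sub_eq : ∀ {s t}, 0 ≤ s → s ≤ t → ∀ z, K t z - K s z = K (t - s) (exp s • z)
  eq_of_range_lt : ∀ {s t z}, 0 ≤ s → s ≤ t → R < exp s * ‖z‖ → K t z = K s z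

variable {k : E → ℝ}

lemma scaleKernel_eq_intervalIntegral (k : E → ℝ) {t : ℝ} (ht : 0 ≤ t) (z : E) :
    scaleKernel k t z = ∫ u in (1 : ℝ)..exp t, k (u • z) / u := by
  rw [scaleKernel, integral_Icc_eq_integral_Ioc, intervalIntegral.integral_of_le (one_le_exp ht)]

lemma intervalIntegrable_comp_smul_div (hk : Continuous k) (z : E) {a b : ℝ} (ha : 0 < a)
    (hb : 0 < b) : IntervalIntegrable (fun u => k (u • z) / u) volume a b :=
  (ContinuousOn.div (by fun_prop) (by fun_prop) fun _ hu =>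
    ((lt_min ha hb).trans_le hu.1).ne').intervalIntegrable

lemma scaleKernel_sub_scaleKernel (hk : Continuous k) (z : E) {s t : ℝ} (hs : 0 ≤ s)
    (hst : s ≤ t) :
    scaleKernel k t z - scaleKernel k s z = ∫ u in exp s..exp t, k (u • z) / u := by
  rw [scaleKernel_eq_intervalIntegral k (hs.trans hst), scaleKernel_eq_intervalIntegral k hs,
    intervalIntegral.integral_interval_sub_left] <;>
  exact intervalIntegrable_comp_smul_div hk z one_pos (exp_pos _)

lemma scaleKernel_sub_scaleKernel_eq_smul (hk : Continuous k) (z : E) {s t : ℝ} (hs : 0 ≤ s)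
    (hst : s ≤ t) :
    scaleKernel k t z - scaleKernel k s z = scaleKernel k (t - s) (exp s • z) := by
  have hsub := intervalIntegral.smul_integral_comp_mul_right (a := 1) (b := exp (t - s))
    (fun u => k (u • z) / u) (exp s)
  rw [one_mul, ← exp_add, sub_add_cancel] at hsub
  rw [scaleKernel_sub_scaleKernel hk z hs hst,
    scaleKernel_eq_intervalIntegral k (sub_nonneg.2 hst), ← hsub,
    ← intervalIntegral.integral_smul]
  refine intervalIntegral.integral_congr fun u _ => ?_
  simp only [smul_smul, smul_eq_mul]
  field_simp

theorem exists_isStarScaleCovariance_scaleKernel (hk : Continuous k) (hk0 : k 0 = 1)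
    (hks : HasCompactSupport k) : ∃ R, IsStarScaleCovariance (scaleKernel k) R := by
  obtain ⟨R, hR, hkR⟩ := hks.exists_pos_le_norm
  refine ⟨R, hR, fun {s} hs => ?_, fun hs hst z => scaleKernel_sub_scaleKernel_eq_smul hk z hs hst,
    fun {s t z} hs hst hz => ?_⟩
  · simp only [scaleKernel_eq_intervalIntegral k hs, smul_zero, hk0]
    rw [integral_one_div_of_pos one_pos (exp_pos s), div_one, log_exp]
  · have hzero : EqOn (fun u => k (u • z) / u) 0 (uIcc (exp s) (exp t)) := by
      intro u hu
      rw [uIcc_of_le (exp_le_exp.2 hst)] at hu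
      have hu0 : 0 < u := (exp_pos s).trans_le hu.1
      have hRu : R ≤ ‖u • z‖ := by
        rw [norm_smul, Real.norm_of_nonneg hu0.le]
        exact hz.le.trans (mul_le_mul_of_nonneg_right hu.1 (norm_nonneg z))
      simp [hkR _ hRu]
    rw [← sub_eq_zero, scaleKernel_sub_scaleKernel hk z hs hst,
      intervalIntegral.integral_congr hzero]
    simp

end Kernel

section Gaussian

variable {Ω T : Type*} [MeasurableSpace Ω] {P : Measure Ω}

lemma dual_pi_apply_eq_sum {ι : Type*} [Fintype ι] [DecidableEq ι] (L : StrongDual ℝ (ι → ℝ))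
    (v : ι → ℝ) : L v = ∑ i, L (Pi.single i 1) * v i := by
  rw [← ContinuousLinearMap.coe_coe, LinearMap.pi_apply_eq_sum_univ]
  refine Finset.sum_congr rfl fun i _ => ?_
  rw [smul_eq_mul, mul_comm]
  congr 2
  ext j
  simp [Pi.single_apply, eq_comm]

lemma isGaussianProcess_of_forall_sum {X : T → Ω → ℝ} (hX : ∀ t, Measurable (X t))
    (hsum : ∀ (n : ℕ) (c : Fin n → ℝ) (t : Fin n → T), ∃ (m : ℝ) (v : ℝ≥0),
      P.map (fun ω => ∑ i, c i * X (t i) ω) = gaussianReal m v) :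
    IsGaussianProcess X P := by
  classical
  refine ⟨fun I => ⟨isGaussian_of_map_eq_gaussianReal fun L => ?_⟩⟩
  obtain ⟨m, v, hv⟩ := hsum I.card (fun i => L (Pi.single (I.equivFin.symm i) 1))
    (fun i => I.equivFin.symm i)
  refine ⟨m, v, ?_⟩
  have hI : Measurable fun ω => I.restrict fun t => X t ω :=
    measurable_pi_lambda _ fun i => hX _
  rw [← hv, Measure.map_map (by fun_prop) hI]
  congr 1
  ext ω
  rw [I.equivFin.symm.sum_comp fun i : I => L (Pi.single i 1) * X i ω, Function.comp_apply,
    dual_pi_apply_eq_sum]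
  simp only [Finset.restrict]

lemma isGaussianProcess_linearCombination {S : Type*} {X : T → Ω → ℝ}
    (hX : IsGaussianProcess X P) (a b : S → ℝ) (f g : S → T) :
    IsGaussianProcess (fun s ω => a s * X (f s) ω + b s * X (g s) ω) P := by
  classical
  refine hX.of_isGaussianProcess fun s => ⟨{f s, g s},
    a s • ContinuousLinearMap.proj ⟨f s, by simp⟩ + b s • ContinuousLinearMap.proj ⟨g s, by simp⟩,
    fun ω => ?_⟩
  simp

lemma integral_dual_restrict {X : T → Ω → ℝ} (hX : IsGaussianProcess X P) (I : Finset T)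
    [DecidableEq I] (L : StrongDual ℝ (I → ℝ)) :
    ∫ ω, L (I.restrict (X · ω)) ∂P = ∑ i : I, L (Pi.single i 1) * P[X i] := by
  simp_rw [fun ω => dual_pi_apply_eq_sum L (I.restrict (X · ω)), Finset.restrict]
  rw [integral_finsetSum _ fun i _ => (hX.hasGaussianLaw_eval _).integrable.const_mul _]
  simp [integral_const_mul]

lemma variance_dual_restrict {X : T → Ω → ℝ} (hX : IsGaussianProcess X P) (I : Finset T)
    [DecidableEq I] (L : StrongDual ℝ (I → ℝ)) :
    Var[fun ω => L (I.restrict (X · ω)); P] =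
      ∑ i : I, ∑ j : I, L (Pi.single i 1) * (L (Pi.single j 1) * cov[X i, X j; P]) := by
  have := hX.isProbabilityMeasure
  have hL2 (i : I) : MemLp (fun ω => L (Pi.single i 1) * X i ω) 2 P :=
    (hX.hasGaussianLaw_eval _).memLp_two.const_mul _
  simp_rw [fun ω => dual_pi_apply_eq_sum L (I.restrict (X · ω)), Finset.restrict]
  rw [variance_fun_sum hL2]
  simp_rw [covariance_const_mul_left, covariance_const_mul_right]

theorem identDistrib_of_covariance_eq {U V : T → Ω → ℝ} (hU : IsGaussianProcess U P)
    (hV : IsGaussianProcess V P) (hUm : ∀ t, Measurable (U t)) (hVm : ∀ t, Measurable (V t))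
    (hmean : ∀ t, P[U t] = P[V t]) (hcov : ∀ s t, cov[U s, U t; P] = cov[V s, V t; P]) :
    IdentDistrib (fun ω t => U t ω) (fun ω t => V t ω) P P := by
  classical
  have := hU.isProbabilityMeasure
  rw [identDistrib_iff_forall_finset_identDistrib (measurable_pi_lambda _ hUm).aemeasurable
    (measurable_pi_lambda _ hVm).aemeasurable]
  intro I
  have hUI : Measurable fun ω => I.restrict (U · ω) := measurable_pi_lambda _ fun i => hUm i
  have hVI : Measurable fun ω => I.restrict (V · ω) := measurable_pi_lambda _ fun i => hVm i
  refine ⟨hUI.aemeasurable, hVI.aemeasurable, Measure.ext_of_charFunDual ?_⟩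
  ext L
  rw [(hU.hasGaussianLaw I).charFunDual_map_eq_fun, (hV.hasGaussianLaw I).charFunDual_map_eq_fun,
    integral_dual_restrict hU, integral_dual_restrict hV, variance_dual_restrict hU,
    variance_dual_restrict hV]
  simp_rw [hmean, hcov]

/-- The normalised (Wick) exponential `exp (γ * r - γ ^ 2 / 2 * v)`: composed with a centred
Gaussian variable of variance `v` it has expectation `1`. -/
def wickExp (γ v r : ℝ) : ℝ := exp (γ * r - γ ^ 2 / 2 * v)

variable {γ : ℝ}

lemma wickExp_pos (γ v r : ℝ) : 0 < wickExp γ v r := exp_pos _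

@[fun_prop]
lemma continuous_wickExp {α : Type*} [TopologicalSpace α] (γ : ℝ) {v r : α → ℝ}
    (hv : Continuous v) (hr : Continuous r) : Continuous fun a => wickExp γ (v a) (r a) := by
  unfold wickExp
  fun_prop

@[fun_prop]
lemma measurable_wickExp {α : Type*} [MeasurableSpace α] (γ v : ℝ) {r : α → ℝ}
    (hr : Measurable r) : Measurable fun a => wickExp γ v (r a) := by
  unfold wickExp
  fun_prop

lemma wickExp_add (γ v w r s : ℝ) :
    wickExp γ (v + w) (r + s) = wickExp γ v r * wickExp γ w s := by
  rw [wickExp, wickExp, wickExp, ← exp_add]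
  ring_nf

variable {f g : Ω → ℝ}

lemma integrable_exp_mul_of_hasGaussianLaw (hg : HasGaussianLaw g P) (θ : ℝ) :
    Integrable (fun ω => exp (θ * g ω)) P := by
  have hexp := integrable_exp_mul_gaussianReal (μ := P[g]) (v := Var[g; P].toNNReal) θ
  rw [← hg.map_eq_gaussianReal] at hexp
  exact (integrable_map_measure (by fun_prop) hg.aemeasurable).1 hexp

lemma integral_exp_mul_of_hasGaussianLaw (hg : HasGaussianLaw g P) (hg0 : P[g] = 0) (θ : ℝ) :
    ∫ ω, exp (θ * g ω) ∂P = exp (θ ^ 2 / 2 * Var[g; P]) := by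
  have hmgf := mgf_gaussianReal hg.map_eq_gaussianReal θ
  rw [mgf, hg0, Real.coe_toNNReal _ (variance_nonneg g P)] at hmgf
  rw [hmgf]
  ring_nf

lemma integrable_wickExp (hg : HasGaussianLaw g P) (γ v : ℝ) :
    Integrable (fun ω => wickExp γ v (g ω)) P := by
  simp_rw [wickExp, exp_sub]
  exact (integrable_exp_mul_of_hasGaussianLaw hg γ).div_const _

lemma integral_wickExp_rpow (hg : HasGaussianLaw g P) (hg0 : P[g] = 0) (p : ℝ) :
    ∫ ω, wickExp γ Var[g; P] (g ω) ^ p ∂P =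
      exp (p * (p - 1) * (γ ^ 2 / 2) * Var[g; P]) := by
  have hpow (ω : Ω) : wickExp γ Var[g; P] (g ω) ^ p =
      exp (p * γ * g ω) * exp (-(p * (γ ^ 2 / 2) * Var[g; P])) := by
    rw [wickExp, ← exp_mul, ← exp_add]
    ring_nf
  simp_rw [hpow]
  rw [integral_mul_const, integral_exp_mul_of_hasGaussianLaw hg hg0, ← exp_add]
  ring_nf

lemma integrable_wickExp_rpow (hg : HasGaussianLaw g P) (γ v p : ℝ) :
    Integrable (fun ω => wickExp γ v (g ω) ^ p) P := by
  have hpow (ω : Ω) : wickExp γ v (g ω) ^ p = wickExp (p * γ) (v / p) (g ω) := by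
    rcases eq_or_ne p 0 with rfl | hp
    · simp [wickExp]
    · rw [wickExp, wickExp, ← exp_mul]
      congr 1
      field_simp
  simp_rw [hpow]
  exact integrable_wickExp hg _ _

lemma integral_wickExp (hg : HasGaussianLaw g P) (hg0 : P[g] = 0) (γ : ℝ) :
    ∫ ω, wickExp γ Var[g; P] (g ω) ∂P = 1 := by
  simpa using integral_wickExp_rpow (γ := γ) hg hg0 1

lemma integral_wickExp_mul_wickExp (hfg : HasGaussianLaw (fun ω => (f ω, g ω)) P)
    (hf0 : P[f] = 0) (hg0 : P[g] = 0) (γ : ℝ) :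
    ∫ ω, wickExp γ Var[f; P] (f ω) * wickExp γ Var[g; P] (g ω) ∂P =
      exp (γ ^ 2 * cov[f, g; P]) := by
  have := hfg.isProbabilityMeasure
  have hvar : Var[fun ω => f ω + g ω; P] = Var[f; P] + 2 * cov[f, g; P] + Var[g; P] :=
    variance_fun_add hfg.fst.memLp_two hfg.snd.memLp_two
  have hmean : ∫ ω, (f ω + g ω) ∂P = 0 := by
    rw [integral_add hfg.fst.integrable hfg.snd.integrable, hf0, hg0, add_zero]
  have hmul (ω : Ω) : wickExp γ Var[f; P] (f ω) * wickExp γ Var[g; P] (g ω) =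
      wickExp γ Var[fun ω => f ω + g ω; P] (f ω + g ω) * exp (γ ^ 2 * cov[f, g; P]) := by
    rw [← wickExp_add, wickExp, wickExp, ← exp_add, hvar]
    ring_nf
  simp_rw [hmul]
  rw [integral_mul_const, integral_wickExp hfg.fun_add hmean, one_mul]

end Gaussian

section Increment

variable {E Ω : Type*}

/-- The increment `X_t - X_s` of a field between the times `s` and `t`. -/
def increment (X : ℝ → E → Ω → ℝ) (s t : ℝ) (x : E) (ω : Ω) : ℝ := X t x ω - X s x ω

lemma add_increment (X : ℝ → E → Ω → ℝ) (s t : ℝ) (x : E) (ω : Ω) :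
    X s x ω + increment X s t x ω = X t x ω :=
  add_sub_cancel _ _

lemma covariance_eq_of_indep_increments [MeasurableSpace Ω] {P : Measure Ω}
    [IsProbabilityMeasure P] {X : ℝ → E → Ω → ℝ} {s t : ℝ} (hs : 0 ≤ s)
    (hL2 : ∀ t x, MemLp (X t x) 2 P)
    (hindep : Indep (⨆ x, MeasurableSpace.comap (increment X s t x) inferInstance)
      (⨆ u ∈ Icc 0 s, ⨆ x, MeasurableSpace.comap (X u x) inferInstance) P) (x y : E) :
    cov[X s x, X t y; P] = cov[X s x, X s y; P] := by
  have hxy : IndepFun (X s x) (increment X s t y) P :=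
    (indep_of_indep_of_le_left (indep_of_indep_of_le_right hindep <|
      le_iSup₂_of_le s ⟨hs, le_rfl⟩ <| le_iSup
        (fun x => MeasurableSpace.comap (X s x) inferInstance) x) <|
      le_iSup (fun x => MeasurableSpace.comap (increment X s t x) inferInstance) y).symm
  have hcov : cov[X s x, X t y; P] - cov[X s x, X s y; P] = 0 := by
    rw [← covariance_fun_sub_right (hL2 s x) (hL2 t y) (hL2 s y)]
    exact hxy.covariance_eq_zero (hL2 s x) ((hL2 t y).sub (hL2 s y))
  exact sub_eq_zero.1 hcov

lemma exists_continuous_modification [TopologicalSpace E] [MeasurableSpace Ω] {P : Measure Ω}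
    {X : ℝ → E → Ω → ℝ} (hmeas : ∀ t x, Measurable (X t x))
    (hcont : ∀ᵐ ω ∂P, Continuous fun p : ℝ × E => X p.1 p.2 ω) :
    ∃ Y : ℝ → E → Ω → ℝ, (∀ t x, Measurable (Y t x)) ∧
      (∀ ω, Continuous fun p : ℝ × E => Y p.1 p.2 ω) ∧ ∀ᵐ ω ∂P, ∀ t x, Y t x ω = X t x ω := by
  classical
  obtain ⟨N, hN, hNmeas, hN0⟩ := exists_measurable_superset_of_null hcont
  refine ⟨fun t x ω => if ω ∈ N then 0 else X t x ω,
    fun t x => Measurable.ite hNmeas measurable_const (hmeas t x), fun ω => ?_, ?_⟩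
  · by_cases hω : ω ∈ N
    · simpa only [hω, if_true] using continuous_const
    · have hωcont := not_not.1 fun h => hω (hN h)
      simpa only [hω, if_false] using hωcont.out
  · filter_upwards [measure_eq_zero_iff_ae_notMem.1 hN0] with ω hω t x
    simp [hω]

end Increment

section Field

variable {E Ω : Type*} [NormedAddCommGroup E] [MeasurableSpace Ω]

/-- A jointly continuous centred Gaussian field `X_t(x)` with independent increments in `t` and
covariance `E[X_s(x) X_t(y)] = K_s(x - y)` for `s ≤ t`. -/
structure IsStarScaleField (P : Measure Ω) (K : ℝ → E → ℝ) (X : ℝ → E → Ω → ℝ) : Prop where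
  measurable : ∀ t x, Measurable (X t x)
  continuous : ∀ ω, Continuous fun p : ℝ × E => X p.1 p.2 ω
  isGaussianProcess : IsGaussianProcess (fun p : ℝ × E => X p.1 p.2) P
  integral_eq_zero : ∀ t x, P[X t x] = 0
  covariance_eq : ∀ {s t}, 0 ≤ s → s ≤ t → ∀ x y, cov[X s x, X t y; P] = K s (x - y)

variable {P : Measure Ω} {K : ℝ → E → ℝ} {X : ℝ → E → Ω → ℝ} {R : ℝ}

theorem exists_isStarScaleField_ae_eq (hmeas : ∀ t x, Measurable (X t x))
    (hgauss : IsGaussianProcess (fun p : ℝ × E => X p.1 p.2) P) (hmean : ∀ t x, P[X t x] = 0)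
    (hcov : ∀ t, 0 ≤ t → ∀ x y, ∫ ω, X t x ω * X t y ω ∂P = K t (x - y))
    (hcont : ∀ᵐ ω ∂P, Continuous fun p : ℝ × E => X p.1 p.2 ω)
    (hindep : ∀ s t : ℝ, 0 ≤ s → s < t →
      Indep (⨆ x, MeasurableSpace.comap (increment X s t x) inferInstance)
        (⨆ u ∈ Icc 0 s, ⨆ x, MeasurableSpace.comap (X u x) inferInstance) P) :
    ∃ Y, IsStarScaleField P K Y ∧ ∀ᵐ ω ∂P, ∀ t x, Y t x ω = X t x ω := by
  have := hgauss.isProbabilityMeasure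
  have hL2 (t : ℝ) (x : E) : MemLp (X t x) 2 P := (hgauss.hasGaussianLaw_eval (t, x)).memLp_two
  have hcov' {s t : ℝ} (hs : 0 ≤ s) (hst : s ≤ t) (x y : E) :
      cov[X s x, X t y; P] = K s (x - y) := by
    have heq : cov[X s x, X t y; P] = cov[X s x, X s y; P] := by
      rcases hst.eq_or_lt with rfl | hlt
      · rfl
      · exact covariance_eq_of_indep_increments hs hL2 (hindep s t hs hlt) x y
    rw [heq, covariance_eq_sub (hL2 s x) (hL2 s y), hmean, zero_mul, sub_zero, ← hcov s hs]
    rfl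
  obtain ⟨Y, hYmeas, hYcont, hYX⟩ := exists_continuous_modification hmeas hcont
  have hYX' (t : ℝ) (x : E) : Y t x =ᵐ[P] X t x := hYX.mono fun ω h => h t x
  refine ⟨Y, ⟨hYmeas, hYcont, hgauss.congr fun p => (hYX' p.1 p.2).symm, fun t x => ?_,
    fun hs hst x y => ?_⟩, hYX⟩
  · rw [integral_congr_ae (hYX' t x), hmean]
  · rw [← hcov' hs hst, covariance, covariance, integral_congr_ae (hYX' _ x),
      integral_congr_ae (hYX' _ y)]
    refine integral_congr_ae ?_
    filter_upwards [hYX' _ x, hYX' _ y] with ω hx hy using by rw [hx, hy]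

namespace IsStarScaleField

variable (hX : IsStarScaleField P K X)
include hX

lemma isProbabilityMeasure : IsProbabilityMeasure P := hX.isGaussianProcess.isProbabilityMeasure

lemma hasGaussianLaw (t : ℝ) (x : E) : HasGaussianLaw (X t x) P :=
  hX.isGaussianProcess.hasGaussianLaw_eval (t, x)

lemma isGaussianProcess_increment (s t : ℝ) : IsGaussianProcess (increment X s t) P := by
  convert isGaussianProcess_linearCombination hX.isGaussianProcess (fun _ : E => 1) (fun _ => -1)
    (fun x => (t, x)) (fun x => (s, x)) using 3
  simp [increment, sub_eq_add_neg]

lemma measurable_increment (s t : ℝ) (x : E) : Measurable (increment X s t x) :=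
  (hX.measurable t x).sub (hX.measurable s x)

lemma integral_increment (s t : ℝ) (x : E) : P[increment X s t x] = 0 := by
  simp only [increment]
  rw [integral_sub (hX.hasGaussianLaw t x).integrable (hX.hasGaussianLaw s x).integrable,
    hX.integral_eq_zero, hX.integral_eq_zero, sub_zero]

lemma covariance_increment_of_le {u s t : ℝ} (hu : 0 ≤ u) (hus : u ≤ s) (hst : s ≤ t) (x y : E) :
    cov[X u x, increment X s t y; P] = 0 := by
  have := hX.isProbabilityMeasure
  refine (covariance_fun_sub_right (hX.hasGaussianLaw u x).memLp_two
    (hX.hasGaussianLaw t y).memLp_two (hX.hasGaussianLaw s y).memLp_two).trans ?_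
  rw [hX.covariance_eq hu (hus.trans hst), hX.covariance_eq hu hus, sub_self]

lemma covariance_increment_increment {s t : ℝ} (hs : 0 ≤ s) (hst : s ≤ t) (x y : E) :
    cov[increment X s t x, increment X s t y; P] = K t (x - y) - K s (x - y) := by
  have := hX.isProbabilityMeasure
  have hL2 (t : ℝ) (x : E) := (hX.hasGaussianLaw t x).memLp_two
  refine (covariance_fun_sub_fun_sub (hL2 t x) (hL2 s x) (hL2 t y) (hL2 s y)).trans ?_
  rw [hX.covariance_eq (hs.trans hst) le_rfl, hX.covariance_eq hs hst, hX.covariance_eq hs le_rfl,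
    covariance_comm (X t x), hX.covariance_eq hs hst, ← hX.covariance_eq hs le_rfl,
    covariance_comm, hX.covariance_eq hs le_rfl]
  ring

theorem indepFun_past_increment {s t : ℝ} (hst : s ≤ t) :
    IndepFun (fun ω (p : Icc 0 s × E) => X p.1 p.2 ω) (fun ω x => increment X s t x ω) P := by
  refine IsGaussianProcess.indepFun_of_covariance_eq_zero
    (X := fun (p : Icc 0 s × E) ω => X p.1 p.2 ω) (Y := increment X s t) ?_
    (fun p => (hX.measurable _ _).aemeasurable)
    (fun x => (hX.measurable_increment s t x).aemeasurable)
    fun p x => hX.covariance_increment_of_le p.1.2.1 p.1.2.2 hst p.2 x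
  convert isGaussianProcess_linearCombination hX.isGaussianProcess
    (Sum.elim (fun _ : Icc 0 s × E => 1) fun _ : E => 1)
    (Sum.elim (fun _ : Icc 0 s × E => 0) fun _ : E => -1)
    (Sum.elim (fun p : Icc 0 s × E => ((p.1 : ℝ), p.2)) fun x => (t, x))
    (Sum.elim (fun p : Icc 0 s × E => ((p.1 : ℝ), p.2)) fun x => (s, x)) using 1
  ext (p | x) ω <;> simp [increment, sub_eq_add_neg]

variable [NormedSpace ℝ E] (hK : IsStarScaleCovariance K R)
include hK

lemma variance_eq {t : ℝ} (ht : 0 ≤ t) (x : E) : Var[X t x; P] = t := by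
  rw [← covariance_self (hX.measurable t x).aemeasurable, hX.covariance_eq ht le_rfl, sub_self,
    hK.apply_zero ht]

lemma variance_increment {s t : ℝ} (hs : 0 ≤ s) (hst : s ≤ t) (x : E) :
    Var[increment X s t x; P] = t - s := by
  rw [← covariance_self (hX.measurable_increment s t x).aemeasurable,
    hX.covariance_increment_increment hs hst, sub_self, hK.apply_zero hs,
    hK.apply_zero (hs.trans hst)]

lemma covariance_increment_le {s t : ℝ} (hs : 0 ≤ s) (hst : s ≤ t) (x y : E) :
    cov[increment X s t x, increment X s t y; P] ≤ t - s := by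
  have := hX.isProbabilityMeasure
  have hinc := hX.isGaussianProcess_increment s t
  have hvar := variance_nonneg (fun ω => increment X s t x ω - increment X s t y ω) P
  rw [variance_fun_sub (hinc.hasGaussianLaw_eval x).memLp_two
    (hinc.hasGaussianLaw_eval y).memLp_two, hX.variance_increment hK hs hst,
    hX.variance_increment hK hs hst] at hvar
  linarith

theorem iIndepFun_increment_comp {s t : ℝ} (hs : 0 ≤ s) (hst : s ≤ t) {ι S : Type*}
    (ψ : ι → S → E)
    (hψ : ∀ i j, i ≠ j → ∀ z w, R < exp s * ‖ψ i z - ψ j w‖) :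
    iIndepFun (fun i ω z => increment X s t (ψ i z) ω) P := by
  refine IsGaussianProcess.iIndepFun_of_covariance_eq_zero
    (X := fun i z ω => increment X s t (ψ i z) ω)
    ((hX.isGaussianProcess_increment s t).comp_right fun p : (_ : ι) × S => ψ p.1 p.2)
    (fun i z => (hX.measurable_increment s t _).aemeasurable) fun i j hij z w => ?_
  rw [hX.covariance_increment_increment hs hst, hK.eq_of_range_lt hs hst (hψ i j hij z w),
    sub_self]

theorem identDistrib_increment_comp {s t : ℝ} (hs : 0 ≤ s) (hst : s ≤ t) {S : Type*} (a : E)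
    (ψ : S → E) :
    IdentDistrib (fun ω z => increment X s t (a + exp (-s) • ψ z) ω)
      (fun ω z => X (t - s) (ψ z) ω) P P := by
  refine identDistrib_of_covariance_eq (U := fun z => increment X s t (a + exp (-s) • ψ z))
    (V := fun z => X (t - s) (ψ z))
    ((hX.isGaussianProcess_increment s t).comp_right fun z => a + exp (-s) • ψ z)
    (hX.isGaussianProcess.comp_right fun z => (t - s, ψ z))
    (fun z => hX.measurable_increment _ _ _) (fun z => hX.measurable _ _)
    (fun z => by rw [hX.integral_increment, hX.integral_eq_zero]) fun z w => ?_
  have hdiff : exp s • (a + exp (-s) • ψ z - (a + exp (-s) • ψ w)) = ψ z - ψ w := by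
    rw [add_sub_add_left_eq_sub, ← smul_sub, smul_smul, ← exp_add, add_neg_cancel, exp_zero,
      one_smul]
  rw [hX.covariance_increment_increment hs hst, hX.covariance_eq (sub_nonneg.2 hst) le_rfl,
    hK.sub_eq hs hst, hdiff]

end IsStarScaleField

end Field

section WeightedNoise

open Function

variable {α Ω : Type*} [MeasurableSpace Ω] {P : Measure Ω} {W Ξ : α → Ω → ℝ} {A c : ℝ}

lemma integral_abs_le_sqrt_integral_sq [IsProbabilityMeasure P] {Y : Ω → ℝ} (hY : MemLp Y 2 P) :
    ∫ ω, |Y ω| ∂P ≤ √(∫ ω, Y ω ^ 2 ∂P) := by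
  have hvar := variance_nonneg |Y| P
  rw [variance_eq_sub hY.abs] at hvar
  refine le_sqrt_of_sq_le ?_
  simpa [sq_abs] using hvar

lemma integral_abs_mul_le {f g : Ω → ℝ} {B : ℝ} (hf : MemLp f 2 P) (hg : MemLp g 2 P)
    (hfB : ∫ ω, f ω ^ 2 ∂P ≤ B) (hgB : ∫ ω, g ω ^ 2 ∂P ≤ B) : ∫ ω, |f ω * g ω| ∂P ≤ B := by
  calc ∫ ω, |f ω * g ω| ∂P ≤ ∫ ω, (f ω ^ 2 + g ω ^ 2) / 2 ∂P := by
        refine integral_mono (hf.integrable_mul hg).abs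
          ((hf.integrable_sq.add hg.integrable_sq).div_const 2) fun ω => ?_
        have := two_mul_le_add_sq |f ω| |g ω|
        rw [sq_abs, sq_abs] at this
        simp only [abs_mul]
        linarith
    _ = (∫ ω, f ω ^ 2 ∂P + ∫ ω, g ω ^ 2 ∂P) / 2 := by
        rw [integral_div, integral_add hf.integrable_sq hg.integrable_sq]
    _ ≤ B := by linarith

lemma integral_weighted_mul_weighted_le [IsProbabilityMeasure P] {T : Set (α × α)}
    (hW : ∀ x, Measurable (W x)) (hΞ : ∀ x, Measurable (Ξ x))
    (hind : IndepFun (fun ω x => W x ω) (fun ω x => Ξ x ω) P) (hW0 : ∀ x ω, 0 ≤ W x ω)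
    (hWA : ∀ x ω, W x ω ≤ A) (hW1 : ∀ x, ∫ ω, W x ω ∂P ≤ 1) (hA : 0 ≤ A) (hc : 0 ≤ c)
    {x y : α}
    (hΞc : ∫ ω, Ξ x ω * Ξ y ω ∂P ≤ T.indicator (fun _ => c) (x, y)) :
    ∫ ω, (W x ω * Ξ x ω) * (W y ω * Ξ y ω) ∂P ≤ A * T.indicator (fun _ => c) (x, y) := by
  have hpair : IndepFun (fun ω => W x ω * W y ω) (fun ω => Ξ x ω * Ξ y ω) P :=
    hind.comp (φ := fun f : α → ℝ => f x * f y) (ψ := fun f : α → ℝ => f x * f y)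
      (by fun_prop) (by fun_prop)
  have hWy : Integrable (W y) P := Integrable.of_bound (C := A) (hW y).aestronglyMeasurable
    (ae_of_all _ fun ω => by rw [Real.norm_of_nonneg (hW0 y ω)]; exact hWA y ω)
  have hWW : ∫ ω, W x ω * W y ω ∂P ≤ A := calc
    ∫ ω, W x ω * W y ω ∂P ≤ ∫ ω, A * W y ω ∂P :=
        integral_mono_of_nonneg (ae_of_all _ fun ω => mul_nonneg (hW0 x ω) (hW0 y ω))
          (hWy.const_mul A) (ae_of_all _ fun ω => mul_le_mul_of_nonneg_right (hWA x ω) (hW0 y ω))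
    _ ≤ A := by
        rw [integral_const_mul]
        exact mul_le_of_le_one_right hA (hW1 y)
  have hsplit : ∫ ω, (W x ω * Ξ x ω) * (W y ω * Ξ y ω) ∂P =
      (∫ ω, W x ω * W y ω ∂P) * ∫ ω, Ξ x ω * Ξ y ω ∂P := by
    simp_rw [mul_mul_mul_comm (W x _)]
    exact hpair.integral_fun_mul_eq_mul_integral ((hW x).mul (hW y)).aestronglyMeasurable
      ((hΞ x).mul (hΞ y)).aestronglyMeasurable
  rw [hsplit]
  exact (mul_le_mul_of_nonneg_left hΞc
    (integral_nonneg fun ω => mul_nonneg (hW0 x ω) (hW0 y ω))).trans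
    (mul_le_mul_of_nonneg_right hWW (indicator_nonneg (fun _ _ => hc) _))

lemma memLp_two_weighted (hW : ∀ x, Measurable (W x)) (hW0 : ∀ x ω, 0 ≤ W x ω)
    (hWA : ∀ x ω, W x ω ≤ A) (hΞ2 : ∀ x, MemLp (Ξ x) 2 P) (x : α) :
    MemLp (fun ω => W x ω * Ξ x ω) 2 P := by
  refine (hΞ2 x).of_le_mul (c := A) ((hW x).aestronglyMeasurable.mul (hΞ2 x).1)
    (ae_of_all _ fun ω => ?_)
  rw [norm_mul, Real.norm_of_nonneg (hW0 x ω)]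
  exact mul_le_mul_of_nonneg_right (hWA x ω) (norm_nonneg _)

variable [MeasurableSpace α] {m : Measure α} {T : Set (α × α)}

lemma integrable_uncurry_of_integral_abs_le [IsFiniteMeasure m] [SFinite P] {f : α → Ω → ℝ} {C : ℝ}
    (hf : Measurable (uncurry f)) (hfi : ∀ x, Integrable (f x) P)
    (hC : ∀ x, ∫ ω, |f x ω| ∂P ≤ C) : Integrable (uncurry f) (m.prod P) := by
  refine (integrable_prod_iff hf.aestronglyMeasurable).2 ⟨ae_of_all _ hfi, ?_⟩
  refine Integrable.of_bound (C := C)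
    hf.stronglyMeasurable.norm.integral_prod_right.aestronglyMeasurable (ae_of_all _ fun x => ?_)
  rw [Real.norm_of_nonneg (integral_nonneg fun ω => norm_nonneg _)]
  exact hC x

lemma integral_abs_integral_le [IsFiniteMeasure m] [SFinite P] {f : α → Ω → ℝ} {C : ℝ}
    (hf : Measurable (uncurry f)) (hfi : ∀ x, Integrable (f x) P)
    (hC : ∀ x, ∫ ω, |f x ω| ∂P ≤ C) : ∫ ω, |∫ x, f x ω ∂m| ∂P ≤ m.real univ * C := by
  have hint : Integrable (uncurry f) (m.prod P) := integrable_uncurry_of_integral_abs_le hf hfi hC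
  calc ∫ ω, |∫ x, f x ω ∂m| ∂P ≤ ∫ ω, ∫ x, |f x ω| ∂m ∂P :=
        integral_mono hint.integral_prod_right.abs hint.abs.integral_prod_right fun ω =>
          abs_integral_le_integral_abs
    _ = ∫ x, ∫ ω, |f x ω| ∂P ∂m := (integral_integral_swap hint.abs).symm
    _ ≤ ∫ _, C ∂m := integral_mono hint.abs.integral_prod_left (integrable_const C) hC
    _ = m.real univ * C := by rw [integral_const, smul_eq_mul]

lemma measurable_uncurry_mul_prod {f : α → Ω → ℝ} (hf : Measurable (uncurry f)) :
    Measurable (uncurry fun (p : α × α) ω => f p.1 ω * f p.2 ω) :=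
  (hf.comp (by fun_prop : Measurable fun q : (α × α) × Ω => (q.1.1, q.2))).mul
    (hf.comp (by fun_prop : Measurable fun q : (α × α) × Ω => (q.1.2, q.2)))

-- Independence of the weight from the noise decouples the second moment; only pairs of points
-- at which the noise is positively correlated contribute.
theorem integral_abs_integral_weighted_le_sqrt [IsProbabilityMeasure P] [IsFiniteMeasure m]
    (hW : Measurable (uncurry W)) (hΞ : Measurable (uncurry Ξ)) (hT : MeasurableSet T)
    (hind : IndepFun (fun ω x => W x ω) (fun ω x => Ξ x ω) P) (hW0 : ∀ x ω, 0 ≤ W x ω)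
    (hWA : ∀ x ω, W x ω ≤ A) (hW1 : ∀ x, ∫ ω, W x ω ∂P ≤ 1) (hA : 0 ≤ A) (hc : 0 ≤ c)
    (hΞ2 : ∀ x, MemLp (Ξ x) 2 P)
    (hΞc : ∀ x y, ∫ ω, Ξ x ω * Ξ y ω ∂P ≤ T.indicator (fun _ => c) (x, y)) :
    ∫ ω, |∫ x, W x ω * Ξ x ω ∂m| ∂P ≤ √(A * c * (m.prod m).real T) := by
  set f : α → Ω → ℝ := fun x ω => W x ω * Ξ x ω
  have hf : Measurable (uncurry f) := hW.mul hΞ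
  have hpair (p : α × α) : ∫ ω, f p.1 ω * f p.2 ω ∂P ≤ A * T.indicator (fun _ => c) p :=
    integral_weighted_mul_weighted_le (fun _ => hW.of_uncurry_left) (fun _ => hΞ.of_uncurry_left)
      hind hW0 hWA hW1 hA hc (hΞc p.1 p.2)
  have hf2 (x : α) : MemLp (f x) 2 P :=
    memLp_two_weighted (fun _ => hW.of_uncurry_left) hW0 hWA hΞ2 x
  have hfB (x : α) : ∫ ω, f x ω ^ 2 ∂P ≤ A * c := by
    simp_rw [sq]
    exact (hpair (x, x)).trans
      (mul_le_mul_of_nonneg_left (indicator_le_self' (fun _ _ => hc) _) hA)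
  have hint : Integrable (uncurry fun (p : α × α) ω => f p.1 ω * f p.2 ω) ((m.prod m).prod P) :=
    integrable_uncurry_of_integral_abs_le (measurable_uncurry_mul_prod hf)
      (fun p => (hf2 p.1).integrable_mul (hf2 p.2))
      fun p => integral_abs_mul_le (hf2 p.1) (hf2 p.2) (hfB p.1) (hfB p.2)
  have hsq (ω : Ω) : ∫ p, f p.1 ω * f p.2 ω ∂(m.prod m) = (∫ x, f x ω ∂m) ^ 2 := by
    rw [sq, ← integral_prod_mul]
  have hmemLp : MemLp (fun ω => ∫ x, f x ω ∂m) 2 P := by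
    refine (memLp_two_iff_integrable_sq
      (hf.stronglyMeasurable.integral_prod_left).aestronglyMeasurable).2 ?_
    exact hint.integral_prod_right.congr (ae_of_all _ hsq)
  refine (integral_abs_le_sqrt_integral_sq hmemLp).trans (sqrt_le_sqrt ?_)
  calc ∫ ω, (∫ x, f x ω ∂m) ^ 2 ∂P = ∫ p, ∫ ω, f p.1 ω * f p.2 ω ∂P ∂(m.prod m) := by
        simp_rw [← hsq]
        exact (integral_integral_swap hint).symm
    _ ≤ ∫ p, A * T.indicator (fun _ => c) p ∂(m.prod m) :=
        integral_mono hint.integral_prod_left (((integrable_const c).indicator hT).const_mul A)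
          hpair
    _ = A * c * (m.prod m).real T := by
        rw [integral_const_mul, integral_indicator_const c hT, smul_eq_mul]
        ring

lemma integral_abs_mul_eq_of_indepFun {f g : Ω → ℝ} (hfg : IndepFun f g P)
    (hf : AEStronglyMeasurable f P) (hg : AEStronglyMeasurable g P) :
    ∫ ω, |f ω * g ω| ∂P = (∫ ω, |f ω| ∂P) * ∫ ω, |g ω| ∂P := by
  simp only [abs_mul]
  exact (hfg.comp continuous_abs.measurable
    continuous_abs.measurable).integral_fun_mul_eq_mul_integral hf.norm hg.norm

lemma integral_abs_integral_add_le [SFinite m] [SFinite P] {f g : α → Ω → ℝ}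
    (hf : Integrable (uncurry f) (m.prod P)) (hg : Integrable (uncurry g) (m.prod P)) :
    ∫ ω, |∫ x, (f x ω + g x ω) ∂m| ∂P ≤ ∫ ω, |∫ x, f x ω ∂m| ∂P + ∫ ω, |∫ x, g x ω ∂m| ∂P := by
  have hadd : (fun ω => ∫ x, (f x ω + g x ω) ∂m) =ᵐ[P] fun ω => ∫ x, f x ω ∂m + ∫ x, g x ω ∂m := by
    filter_upwards [hf.prod_left_ae, hg.prod_left_ae] with ω hfω hgω
    exact integral_add hfω hgω
  have hf' : Integrable (fun ω => ∫ x, f x ω ∂m) P := hf.integral_prod_right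
  have hg' : Integrable (fun ω => ∫ x, g x ω ∂m) P := hg.integral_prod_right
  rw [← integral_add hf'.abs hg'.abs]
  refine integral_mono_ae ((hf'.add hg').congr hadd.symm).abs (hf'.abs.add hg'.abs) ?_
  filter_upwards [hadd] with ω hω
  exact hω ▸ abs_add_le _ _

lemma indicator_Ioi_id_le_rpow {A δ r : ℝ} (hA : 0 < A) (hδ : 0 ≤ δ) (hr : 0 ≤ r) :
    (Ioi A).indicator id r ≤ A ^ (-δ) * r ^ (1 + δ) := by
  refine indicator_apply_le' (fun hAr => ?_) fun _ => by positivity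
  have hr0 : 0 < r := hA.trans hAr
  calc r = A ^ (-δ) * (r * A ^ δ) := by
        rw [mul_left_comm, ← rpow_add hA, neg_add_cancel, rpow_zero, mul_one]
    _ ≤ A ^ (-δ) * (r * r ^ δ) := by gcongr; exact (mem_Ioi.1 hAr).le
    _ = A ^ (-δ) * r ^ (1 + δ) := by rw [rpow_add hr0, rpow_one]

lemma integral_indicator_Ioi_le {Y : Ω → ℝ} {δ : ℝ} (hY0 : ∀ ω, 0 ≤ Y ω)
    (hYδ : Integrable (fun ω => Y ω ^ (1 + δ)) P) (hA : 0 < A) (hδ : 0 ≤ δ) :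
    ∫ ω, (Ioi A).indicator id (Y ω) ∂P ≤ A ^ (-δ) * ∫ ω, Y ω ^ (1 + δ) ∂P := by
  rw [← integral_const_mul]
  exact integral_mono_of_nonneg (ae_of_all _ fun ω => indicator_apply_nonneg fun _ => hY0 ω)
    (hYδ.const_mul _) (ae_of_all _ fun ω => indicator_Ioi_id_le_rpow hA hδ (hY0 ω))

lemma integral_abs_weighted_le {b : ℝ} {f g : Ω → ℝ} {B : ℝ} (hfg : IndepFun f g P)
    (hf : Integrable f P) (hg : Integrable g P) (hf0 : ∀ ω, 0 ≤ f ω) (hfB : ∫ ω, f ω ∂P ≤ B)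
    (hgb : ∫ ω, |g ω| ∂P ≤ b) : ∫ ω, |f ω * g ω| ∂P ≤ B * b := by
  rw [integral_abs_mul_eq_of_indepFun hfg hf.1 hg.1]
  simp_rw [abs_of_nonneg (hf0 _)]
  exact mul_le_mul hfB hgb (integral_nonneg fun _ => abs_nonneg _)
    ((integral_nonneg hf0).trans hfB)

lemma integral_abs_integral_weighted_add_le [IsProbabilityMeasure P] [IsFiniteMeasure m]
    {V U : α → Ω → ℝ} {B b : ℝ} (hV : Measurable (uncurry V)) (hU : Measurable (uncurry U))
    (hΞ : Measurable (uncurry Ξ)) (hT : MeasurableSet T)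
    (hVΞ : IndepFun (fun ω x => V x ω) (fun ω x => Ξ x ω) P)
    (hUΞ : ∀ x, IndepFun (U x) (Ξ x) P) (hV0 : ∀ x ω, 0 ≤ V x ω) (hVA : ∀ x ω, V x ω ≤ A)
    (hV1 : ∀ x, ∫ ω, V x ω ∂P ≤ 1) (hU0 : ∀ x ω, 0 ≤ U x ω) (hUi : ∀ x, Integrable (U x) P)
    (hUB : ∀ x, ∫ ω, U x ω ∂P ≤ B) (hA : 0 ≤ A) (hc : 0 ≤ c) (hΞ2 : ∀ x, MemLp (Ξ x) 2 P)
    (hΞ1 : ∀ x, ∫ ω, |Ξ x ω| ∂P ≤ b)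
    (hΞc : ∀ x y, ∫ ω, Ξ x ω * Ξ y ω ∂P ≤ T.indicator (fun _ => c) (x, y)) :
    ∫ ω, |∫ x, (V x ω * Ξ x ω + U x ω * Ξ x ω) ∂m| ∂P ≤
      √(A * c * (m.prod m).real T) + m.real univ * (B * b) := by
  have hΞi (x : α) : Integrable (Ξ x) P := (hΞ2 x).integrable one_le_two
  have hVi (x : α) : Integrable (V x) P :=
    Integrable.of_bound (C := A) hV.of_uncurry_left.aestronglyMeasurable
      (ae_of_all _ fun ω => by rw [Real.norm_of_nonneg (hV0 x ω)]; exact hVA x ω)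
  have hVΞ' (x : α) : IndepFun (V x) (Ξ x) P :=
    hVΞ.comp (measurable_pi_apply x) (measurable_pi_apply x)
  have hUΞi (x : α) : Integrable (fun ω => U x ω * Ξ x ω) P :=
    (hUΞ x).integrable_mul (hUi x) (hΞi x)
  have hUΞ1 (x : α) : ∫ ω, |U x ω * Ξ x ω| ∂P ≤ B * b :=
    integral_abs_weighted_le (hUΞ x) (hUi x) (hΞi x) (hU0 x) (hUB x) (hΞ1 x)
  refine (integral_abs_integral_add_le
    (integrable_uncurry_of_integral_abs_le (hV.mul hΞ)
      (fun x => (hVΞ' x).integrable_mul (hVi x) (hΞi x)) fun x =>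
      integral_abs_weighted_le (hVΞ' x) (hVi x) (hΞi x) (hV0 x) (hV1 x) (hΞ1 x))
    (integrable_uncurry_of_integral_abs_le (f := fun x ω => U x ω * Ξ x ω) (hU.mul hΞ) hUΞi
      hUΞ1)).trans (add_le_add ?_ ?_)
  · exact integral_abs_integral_weighted_le_sqrt hV hΞ hT hVΞ hV0 hVA hV1 hA hc hΞ2 hΞc
  · exact integral_abs_integral_le (hU.mul hΞ) hUΞi hUΞ1

-- The weight is truncated at level `A`: the small part is controlled in `L²` through the
-- decorrelation of the noise, the large part in `L¹` through the moment of order `1 + δ`.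
theorem integral_abs_integral_weighted_le [IsProbabilityMeasure P] [IsFiniteMeasure m]
    {δ B b : ℝ} (hW : Measurable (uncurry W)) (hΞ : Measurable (uncurry Ξ)) (hT : MeasurableSet T)
    (hind : IndepFun (fun ω x => W x ω) (fun ω x => Ξ x ω) P) (hW0 : ∀ x ω, 0 ≤ W x ω)
    (hWi : ∀ x, Integrable (W x) P) (hW1 : ∀ x, ∫ ω, W x ω ∂P ≤ 1) (hδ : 0 ≤ δ)
    (hWδ : ∀ x, Integrable (fun ω => W x ω ^ (1 + δ)) P)
    (hWB : ∀ x, ∫ ω, W x ω ^ (1 + δ) ∂P ≤ B) (hA : 0 < A) (hc : 0 ≤ c)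
    (hΞ2 : ∀ x, MemLp (Ξ x) 2 P) (hΞ1 : ∀ x, ∫ ω, |Ξ x ω| ∂P ≤ b)
    (hΞc : ∀ x y, ∫ ω, Ξ x ω * Ξ y ω ∂P ≤ T.indicator (fun _ => c) (x, y)) :
    ∫ ω, |∫ x, W x ω * Ξ x ω ∂m| ∂P ≤
      √(A * c * (m.prod m).real T) + m.real univ * (A ^ (-δ) * B * b) := by
  set V : Set ℝ → α → Ω → ℝ := fun I x ω => I.indicator id (W x ω)
  have hV {I : Set ℝ} (hI : MeasurableSet I) : Measurable (uncurry (V I)) :=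
    (measurable_id.indicator hI).comp hW
  have hV0 (I : Set ℝ) (x : α) (ω : Ω) : 0 ≤ V I x ω := indicator_apply_nonneg fun _ => hW0 x ω
  have hVW (I : Set ℝ) (x : α) (ω : Ω) : V I x ω ≤ W x ω :=
    indicator_apply_le' (fun _ => le_rfl) fun _ => hW0 x ω
  have hVi {I : Set ℝ} (hI : MeasurableSet I) (x : α) : Integrable (V I x) P :=
    (hWi x).mono' (hV hI).of_uncurry_left.aestronglyMeasurable
      (ae_of_all _ fun ω => by rw [Real.norm_of_nonneg (hV0 I x ω)]; exact hVW I x ω)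
  have hVΞ {I : Set ℝ} (hI : MeasurableSet I) :
      IndepFun (fun ω x => V I x ω) (fun ω x => Ξ x ω) P :=
    hind.comp (φ := fun (f : α → ℝ) x => I.indicator id (f x)) (measurable_pi_lambda _ fun x =>
      (measurable_id.indicator hI).comp (measurable_pi_apply x)) measurable_id
  have hsplit (x : α) (ω : Ω) :
      W x ω * Ξ x ω = V (Iic A) x ω * Ξ x ω + V (Ioi A) x ω * Ξ x ω := by
    rw [← add_mul, ← compl_Iic]
    exact congrArg (· * Ξ x ω) (congrFun (indicator_self_add_compl (Iic A) id) (W x ω)).symm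
  simp_rw [hsplit]
  refine integral_abs_integral_weighted_add_le (hV measurableSet_Iic) (hV measurableSet_Ioi) hΞ hT
    (hVΞ measurableSet_Iic)
    (fun x => (hVΞ measurableSet_Ioi).comp (measurable_pi_apply x) (measurable_pi_apply x))
    (hV0 _) (fun x ω => indicator_apply_le' id fun _ => hA.le)
    (fun x => (integral_mono (hVi measurableSet_Iic x) (hWi x) (hVW _ x)).trans (hW1 x))
    (hV0 _) (hVi measurableSet_Ioi) (fun x => ?_) hA.le hc hΞ2 hΞ1 hΞc
  exact (integral_indicator_Ioi_le (hW0 x) (hWδ x) hA hδ).trans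
    (mul_le_mul_of_nonneg_left (hWB x) (by positivity))

end WeightedNoise

section Mass

variable {E Ω : Type*}

/-- The relative change of the density `exp (γ X - γ² t / 2)` between the times `s` and `t`. -/
def chaosNoise (γ : ℝ) (X : ℝ → E → Ω → ℝ) (s t : ℝ) (x : E) (ω : Ω) : ℝ :=
  wickExp γ (t - s) (increment X s t x ω) - 1

lemma wickExp_mul_chaosNoise (γ : ℝ) (X : ℝ → E → Ω → ℝ) (s t : ℝ) (x : E) (ω : Ω) :
    wickExp γ s (X s x ω) * chaosNoise γ X s t x ω =
      wickExp γ t (X t x ω) - wickExp γ s (X s x ω) := by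
  rw [chaosNoise, mul_sub_one, ← wickExp_add, add_sub_cancel, add_increment]

variable [MeasurableSpace E]

/-- The mass `∫ exp (γ X_t - γ² t / 2) dm` of the chaos at time `t` with reference measure `m`. -/
def chaosMass (m : Measure E) (γ : ℝ) (X : ℝ → E → Ω → ℝ) (t : ℝ) (ω : Ω) : ℝ :=
  ∫ x, wickExp γ t (X t x ω) ∂m

lemma chaosMass_nonneg (m : Measure E) (γ : ℝ) (X : ℝ → E → Ω → ℝ) (t : ℝ) (ω : Ω) :
    0 ≤ chaosMass m γ X t ω :=
  integral_nonneg fun _ => (wickExp_pos _ _ _).le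

/-- A measure is upper regular of dimension `D` if balls of radius `r` have mass `O(r ^ D)`. -/
def IsUpperRegular [PseudoMetricSpace E] (m : Measure E) (D : ℝ) : Prop :=
  ∃ V : ℝ, ∀ x r, 0 < r → m (Metric.closedBall x r) ≤ ENNReal.ofReal (V * r ^ D)

lemma IsUpperRegular.exists_prod_real_le [PseudoMetricSpace E] [OpensMeasurableSpace (E × E)]
    {m : Measure E} [IsFiniteMeasure m] {D : ℝ} (hm : IsUpperRegular m D) :
    ∃ V, 0 ≤ V ∧ ∀ r, 0 < r → (m.prod m).real {p | dist p.1 p.2 ≤ r} ≤ V * r ^ D := by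
  obtain ⟨V, hV⟩ := hm
  refine ⟨|V| * m.real univ, by positivity, fun r hr => ?_⟩
  have hT : MeasurableSet {p : E × E | dist p.1 p.2 ≤ r} :=
    (isClosed_le (by fun_prop) (by fun_prop)).measurableSet
  have hslice (x : E) : Prod.mk x ⁻¹' {p : E × E | dist p.1 p.2 ≤ r} = Metric.closedBall x r := by
    ext y
    simp [dist_comm]
  have hle : m.prod m {p | dist p.1 p.2 ≤ r} ≤ ENNReal.ofReal (V * r ^ D) * m univ := by
    rw [Measure.prod_apply hT, ← lintegral_const]
    exact lintegral_mono fun x => hslice x ▸ hV x r hr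
  calc (m.prod m).real {p | dist p.1 p.2 ≤ r} ≤ (ENNReal.ofReal (V * r ^ D) * m univ).toReal :=
        ENNReal.toReal_mono (by finiteness) hle
    _ = max (V * r ^ D) 0 * m.real univ := by
        rw [ENNReal.toReal_mul, ENNReal.toReal_ofReal', measureReal_def]
    _ ≤ |V| * r ^ D * m.real univ := by
        gcongr
        exact max_le (by gcongr; exact le_abs_self V) (by positivity)
    _ = |V| * m.real univ * r ^ D := by ring

lemma isUpperRegular_addHaar_restrict [NormedAddCommGroup E] [NormedSpace ℝ E] [BorelSpace E]
    [FiniteDimensional ℝ E] (μ : Measure E) [μ.IsAddHaarMeasure] (S : Set E) :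
    IsUpperRegular (μ.restrict S) (Module.finrank ℝ E) := by
  refine ⟨μ.real (Metric.closedBall 0 1), fun x r hr => (Measure.restrict_apply_le _ _).trans ?_⟩
  rw [Measure.addHaar_closedBall' μ x hr.le, mul_comm (μ.real _), rpow_natCast,
    ENNReal.ofReal_mul (by positivity), measureReal_def,
    ENNReal.ofReal_toReal (isCompact_closedBall _ _).measure_ne_top]

end Mass

section UnitStep

lemma integral_abs_sub_le_add {Ω : Type*} [MeasurableSpace Ω] {P : Measure Ω} {f g h : Ω → ℝ}
    (hf : Integrable f P) (hg : Integrable g P) (hh : Integrable h P) :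
    ∫ ω, |h ω - f ω| ∂P ≤ ∫ ω, |g ω - f ω| ∂P + ∫ ω, |h ω - g ω| ∂P := by
  have hfg : Integrable (fun ω => |g ω - f ω|) P := (hg.sub hf).abs
  have hgh : Integrable (fun ω => |h ω - g ω|) P := (hh.sub hg).abs
  rw [← integral_add hfg hgh]
  exact integral_mono (hh.sub hf).abs (hfg.add hgh) fun ω =>
    (abs_sub_le _ _ _).trans (add_comm _ _).le

lemma le_geom_of_unit_step {D : ℝ → ℝ → ℝ} {C c : ℝ} (hC : 0 ≤ C) (hc : 0 < c)
    (htri : ∀ s u t, 0 ≤ s → s ≤ u → u ≤ t → D s t ≤ D s u + D u t)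
    (hstep : ∀ s t, 0 ≤ s → s ≤ t → t ≤ s + 1 → D s t ≤ C * exp (-(c * s))) {s t : ℝ}
    (hs : 0 ≤ s) (hst : s ≤ t) : D s t ≤ C / (1 - exp (-c)) * exp (-(c * s)) := by
  have hr : 0 < 1 - exp (-c) := by simpa using hc
  have hgeom : C + C / (1 - exp (-c)) * exp (-c) = C / (1 - exp (-c)) := by field_simp; ring
  have hunit {s : ℝ} (hs : 0 ≤ s) (hst : s ≤ t) (ht : t ≤ s + 1) :
      D s t ≤ C / (1 - exp (-c)) * exp (-(c * s)) := by
    refine (hstep s t hs hst ht).trans (mul_le_mul_of_nonneg_right ?_ (exp_pos _).le)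
    exact hgeom ▸ le_add_of_nonneg_right (by positivity)
  obtain ⟨n, hn⟩ := exists_nat_ge (t - s)
  induction n generalizing s with
  | zero => exact hunit hs hst (by norm_num at hn; linarith)
  | succ n ih =>
    rcases le_total t (s + 1) with ht | ht
    · exact hunit hs hst ht
    · calc D s t ≤ D s (s + 1) + D (s + 1) t := htri s (s + 1) t hs (by linarith) ht
        _ ≤ C * exp (-(c * s)) + C / (1 - exp (-c)) * exp (-(c * (s + 1))) :=
          add_le_add (hstep s _ hs (by linarith) le_rfl)
            (ih (by linarith) ht (by push_cast at hn; linarith))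
        _ = (C + C / (1 - exp (-c)) * exp (-c)) * exp (-(c * s)) := by
          rw [show -(c * (s + 1)) = -c + -(c * s) by ring, exp_add]
          ring
        _ = C / (1 - exp (-c)) * exp (-(c * s)) := by rw [hgeom]

end UnitStep

section MassIncrement

open Function

variable {E Ω : Type*} [NormedAddCommGroup E] [MeasurableSpace Ω] {P : Measure Ω}
  {K : ℝ → E → ℝ} {X : ℝ → E → Ω → ℝ} {R : ℝ}

namespace IsStarScaleField

variable (hX : IsStarScaleField P K X)
include hX

lemma continuous_wickExp_path (γ : ℝ) (ω : Ω) :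
    Continuous fun p : ℝ × E => wickExp γ p.1 (X p.1 p.2 ω) :=
  continuous_wickExp γ continuous_fst (hX.continuous ω)

lemma integrable_wickExp (γ t : ℝ) (x : E) : Integrable (fun ω => wickExp γ t (X t x ω)) P :=
  MultiplicativeChaos.integrable_wickExp (hX.hasGaussianLaw t x) γ t

lemma memLp_two_wickExp_increment (γ s t : ℝ) (x : E) :
    MemLp (fun ω => wickExp γ (t - s) (increment X s t x ω)) 2 P := by
  have hmeas := hX.measurable_increment s t x
  have hsq := integrable_wickExp_rpow ((hX.isGaussianProcess_increment s t).hasGaussianLaw_eval x)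
    γ (t - s) 2
  simp_rw [rpow_two] at hsq
  exact (memLp_two_iff_integrable_sq
    (measurable_wickExp γ (t - s) hmeas).aestronglyMeasurable).2 hsq

lemma memLp_two_chaosNoise (γ s t : ℝ) (x : E) : MemLp (chaosNoise γ X s t x) 2 P := by
  have := hX.isProbabilityMeasure
  exact (hX.memLp_two_wickExp_increment γ s t x).sub (memLp_const 1)

lemma indepFun_wickExp_chaosNoise (γ : ℝ) {s t : ℝ} (hs : 0 ≤ s) (hst : s ≤ t) :
    IndepFun (fun ω x => wickExp γ s (X s x ω)) (fun ω x => chaosNoise γ X s t x ω) P :=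
  (hX.indepFun_past_increment hst).comp
    (φ := fun (f : Icc 0 s × E → ℝ) x => wickExp γ s (f (⟨s, hs, le_rfl⟩, x)))
    (ψ := fun (g : E → ℝ) x => wickExp γ (t - s) (g x) - 1) (by fun_prop) (by fun_prop)

section Measurable

variable [MeasurableSpace E] [BorelSpace E] [SecondCountableTopology E]

lemma measurable_uncurry (t : ℝ) : Measurable (uncurry (X t)) :=
  measurable_uncurry_of_continuous_of_measurable
    (fun ω => (hX.continuous ω).comp (Continuous.prodMk_right t)) (hX.measurable t)

lemma measurable_uncurry_wickExp (γ t : ℝ) :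
    Measurable (uncurry fun x ω => wickExp γ t (X t x ω)) :=
  measurable_wickExp γ t (hX.measurable_uncurry t)

lemma measurable_uncurry_chaosNoise (γ s t : ℝ) : Measurable (uncurry (chaosNoise γ X s t)) :=
  (measurable_wickExp γ (t - s) ((hX.measurable_uncurry t).sub
    (hX.measurable_uncurry s))).sub measurable_const

lemma measurable_chaosMass (m : Measure E) [SFinite m] (γ t : ℝ) :
    Measurable (chaosMass m γ X t) :=
  (hX.measurable_uncurry_wickExp γ t).stronglyMeasurable.integral_prod_left.measurable

end Measurable

variable [NormedSpace ℝ E] (hK : IsStarScaleCovariance K R)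
include hK

lemma integral_wickExp (γ : ℝ) {t : ℝ} (ht : 0 ≤ t) (x : E) :
    ∫ ω, wickExp γ t (X t x ω) ∂P = 1 := by
  have h := MultiplicativeChaos.integral_wickExp (hX.hasGaussianLaw t x)
    (hX.integral_eq_zero t x) γ
  rwa [hX.variance_eq hK ht] at h

lemma integral_wickExp_rpow (γ p : ℝ) {t : ℝ} (ht : 0 ≤ t) (x : E) :
    ∫ ω, wickExp γ t (X t x ω) ^ p ∂P = exp (p * (p - 1) * (γ ^ 2 / 2) * t) := by
  have h := MultiplicativeChaos.integral_wickExp_rpow (γ := γ) (hX.hasGaussianLaw t x)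
    (hX.integral_eq_zero t x) p
  rwa [hX.variance_eq hK ht] at h

lemma integral_wickExp_increment (γ : ℝ) {s t : ℝ} (hs : 0 ≤ s) (hst : s ≤ t) (x : E) :
    ∫ ω, wickExp γ (t - s) (increment X s t x ω) ∂P = 1 := by
  have h := MultiplicativeChaos.integral_wickExp
    ((hX.isGaussianProcess_increment s t).hasGaussianLaw_eval x) (hX.integral_increment s t x) γ
  rwa [hX.variance_increment hK hs hst] at h

lemma integral_abs_chaosNoise_le (γ : ℝ) {s t : ℝ} (hs : 0 ≤ s) (hst : s ≤ t) (x : E) :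
    ∫ ω, |chaosNoise γ X s t x ω| ∂P ≤ 2 := by
  have := hX.isProbabilityMeasure
  have hwick := (hX.memLp_two_wickExp_increment γ s t x).integrable one_le_two
  calc ∫ ω, |chaosNoise γ X s t x ω| ∂P
      ≤ ∫ ω, (wickExp γ (t - s) (increment X s t x ω) + 1) ∂P := by
        refine integral_mono ((hX.memLp_two_chaosNoise γ s t x).integrable one_le_two).abs
          (hwick.add (integrable_const 1)) fun ω => ?_
        have := wickExp_pos γ (t - s) (increment X s t x ω)
        exact abs_le.2 ⟨by simp only [chaosNoise]; linarith, by simp only [chaosNoise]; linarith⟩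
    _ = 2 := by
        rw [integral_add hwick (integrable_const 1), hX.integral_wickExp_increment hK γ hs hst]
        norm_num

lemma integral_chaosNoise_mul_chaosNoise (γ : ℝ) {s t : ℝ} (hs : 0 ≤ s) (hst : s ≤ t)
    (x y : E) :
    ∫ ω, chaosNoise γ X s t x ω * chaosNoise γ X s t y ω ∂P =
      exp (γ ^ 2 * cov[increment X s t x, increment X s t y; P]) - 1 := by
  have := hX.isProbabilityMeasure
  have hinc := hX.isGaussianProcess_increment s t
  have hmean (x : E) := hX.integral_wickExp_increment hK γ hs hst x
  have hmul := integral_wickExp_mul_wickExp (hinc.hasGaussianLaw_prodMk (s := x) (t := y))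
    (hX.integral_increment s t x) (hX.integral_increment s t y) γ
  rw [hX.variance_increment hK hs hst, hX.variance_increment hK hs hst] at hmul
  have hcov := covariance_eq_sub (hX.memLp_two_wickExp_increment γ s t x)
    (hX.memLp_two_wickExp_increment γ s t y)
  rw [covariance, hmean, hmean] at hcov
  rw [← hmul, ← mul_one (1 : ℝ)]
  exact hcov

lemma integral_chaosNoise_mul_chaosNoise_le (γ : ℝ) {s t : ℝ} (hs : 0 ≤ s) (hst : s ≤ t)
    (x y : E) :
    ∫ ω, chaosNoise γ X s t x ω * chaosNoise γ X s t y ω ∂P ≤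
      {p : E × E | dist p.1 p.2 ≤ R * exp (-s)}.indicator (fun _ => exp (γ ^ 2 * (t - s)))
        (x, y) := by
  rw [hX.integral_chaosNoise_mul_chaosNoise hK γ hs hst]
  by_cases hxy : dist x y ≤ R * exp (-s)
  · rw [indicator_of_mem (by exact hxy)]
    have := hX.covariance_increment_le hK hs hst x y
    exact (sub_le_self _ zero_le_one).trans (by gcongr)
  · rw [indicator_of_notMem (by exact hxy), hX.covariance_increment_increment hs hst,
      hK.eq_of_range_lt hs hst, sub_self, mul_zero, exp_zero, sub_self]
    rw [exp_neg, ← div_eq_mul_inv, le_div_iff₀ (exp_pos s), not_le, dist_eq_norm] at hxy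
    rwa [mul_comm]

section MassBound

variable [MeasurableSpace E] [BorelSpace E] [SecondCountableTopology E] {m : Measure E}
  [IsFiniteMeasure m]

lemma integrable_uncurry_wickExp (γ : ℝ) {t : ℝ} (ht : 0 ≤ t) :
    Integrable (uncurry fun x ω => wickExp γ t (X t x ω)) (m.prod P) := by
  have := hX.isProbabilityMeasure
  refine integrable_uncurry_of_integral_abs_le (C := 1) (hX.measurable_uncurry_wickExp γ t)
    (hX.integrable_wickExp γ t) fun x => ?_
  simp_rw [abs_of_pos (wickExp_pos _ _ _)]
  exact (hX.integral_wickExp hK γ ht x).le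

lemma integrable_chaosMass (γ : ℝ) {t : ℝ} (ht : 0 ≤ t) : Integrable (chaosMass m γ X t) P := by
  have := hX.isProbabilityMeasure
  exact (hX.integrable_uncurry_wickExp hK γ ht).integral_prod_right

lemma integral_chaosMass (γ : ℝ) {t : ℝ} (ht : 0 ≤ t) :
    ∫ ω, chaosMass m γ X t ω ∂P = m.real univ := by
  have := hX.isProbabilityMeasure
  refine (integral_integral_swap (hX.integrable_uncurry_wickExp hK γ ht)).symm.trans ?_
  simp_rw [hX.integral_wickExp hK γ ht]
  rw [integral_const, smul_eq_mul, mul_one]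

lemma chaosMass_sub_ae_eq (γ : ℝ) {s t : ℝ} (hs : 0 ≤ s) (hst : s ≤ t) :
    ∀ᵐ ω ∂P, chaosMass m γ X t ω - chaosMass m γ X s ω =
      ∫ x, wickExp γ s (X s x ω) * chaosNoise γ X s t x ω ∂m := by
  have := hX.isProbabilityMeasure
  filter_upwards [(hX.integrable_uncurry_wickExp hK γ hs (m := m)).prod_left_ae,
    (hX.integrable_uncurry_wickExp hK γ (hs.trans hst) (m := m)).prod_left_ae] with ω hsω htω
  simp_rw [wickExp_mul_chaosNoise]
  exact (integral_sub htω hsω).symm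

lemma integral_abs_chaosMass_sub_le (γ : ℝ) {s t δ A : ℝ} (hs : 0 ≤ s) (hst : s ≤ t) (hδ : 0 ≤ δ)
    (hA : 0 < A) :
    ∫ ω, |chaosMass m γ X t ω - chaosMass m γ X s ω| ∂P ≤
      √(A * exp (γ ^ 2 * (t - s)) *
        (m.prod m).real {p | dist p.1 p.2 ≤ R * exp (-s)}) +
      m.real univ * (A ^ (-δ) * exp ((1 + δ) * δ * (γ ^ 2 / 2) * s) * 2) := by
  have := hX.isProbabilityMeasure
  rw [integral_congr_ae ((hX.chaosMass_sub_ae_eq hK γ hs hst).mono fun ω hω => by rw [hω])]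
  exact integral_abs_integral_weighted_le (hX.measurable_uncurry_wickExp γ s)
    (hX.measurable_uncurry_chaosNoise γ s t)
    (isClosed_le (by fun_prop) (by fun_prop)).measurableSet
    (hX.indepFun_wickExp_chaosNoise γ hs hst) (fun x ω => (wickExp_pos _ _ _).le)
    (hX.integrable_wickExp γ s) (fun x => (hX.integral_wickExp hK γ hs x).le) hδ
    (fun x => integrable_wickExp_rpow (hX.hasGaussianLaw s x) γ s (1 + δ))
    (fun x => by rw [hX.integral_wickExp_rpow hK γ _ hs, add_sub_cancel_left]) hA (exp_pos _).le
    (hX.memLp_two_chaosNoise γ s t) (hX.integral_abs_chaosNoise_le hK γ hs hst)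
    (hX.integral_chaosNoise_mul_chaosNoise_le hK γ hs hst)

-- The truncation level is `exp ((D - κ) s)`, where `2 κ = D - γ² / 2` is the subcriticality gap;
-- the pairs of correlated points have mass of order `exp (-D s)`.
lemma exists_integral_abs_chaosMass_sub_le_of_le_add_one {D γ : ℝ} (hm : IsUpperRegular m D)
    (hγ : γ ^ 2 < 2 * D) :
    ∃ C c, 0 ≤ C ∧ 0 < c ∧ ∀ s t, 0 ≤ s → s ≤ t → t ≤ s + 1 →
      ∫ ω, |chaosMass m γ X t ω - chaosMass m γ X s ω| ∂P ≤ C * exp (-(c * s)) := by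
  obtain ⟨V, hV0, hV⟩ := hm.exists_prod_real_le
  have hR := hK.range_pos
  set κ : ℝ := (D - γ ^ 2 / 2) / 2 with hκ
  have hκ0 : 0 < κ := by rw [hκ]; linarith
  set δ : ℝ := κ / (γ ^ 2 + 1) with hδ
  have hδ0 : 0 < δ := by positivity
  have hδκ : δ * γ ^ 2 ≤ κ := by
    rw [hδ, div_mul_eq_mul_div, div_le_iff₀ (by positivity)]
    nlinarith
  have hmin1 := min_le_left (κ / 2) (δ * κ / 2)
  have hmin2 := min_le_right (κ / 2) (δ * κ / 2)
  set c := min (κ / 2) (δ * κ / 2)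
  refine ⟨√(exp (γ ^ 2) * (V * R ^ D)) + m.real univ * 2, c, by positivity, by positivity,
    fun s t hs hst ht => ?_⟩
  have hsmall : √(exp ((D - κ) * s) * exp (γ ^ 2 * (t - s)) *
      (m.prod m).real {p | dist p.1 p.2 ≤ R * exp (-s)}) ≤
      √(exp (γ ^ 2) * (V * R ^ D)) * exp (-(c * s)) := calc
    _ ≤ √(exp ((D - κ) * s) * exp (γ ^ 2) * (V * (R * exp (-s)) ^ D)) := by
      gcongr
      · nlinarith [sq_nonneg γ]
      · exact hV _ (by positivity)
    _ = √(exp (γ ^ 2) * (V * R ^ D)) * exp (-(κ / 2 * s)) := by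
      have hexp : exp ((D - κ) * s) * exp (-s * D) = exp (-(κ * s)) := by
        rw [← exp_add]
        ring_nf
      rw [mul_rpow hR.le (exp_pos _).le, ← exp_mul, show -(κ / 2 * s) = -(κ * s) / 2 by ring,
        exp_half, ← sqrt_mul (by positivity), ← hexp]
      ring_nf
    _ ≤ _ := by gcongr
  have hlarge : exp ((D - κ) * s) ^ (-δ) * exp ((1 + δ) * δ * (γ ^ 2 / 2) * s) ≤
      exp (-(c * s)) := by
    have hDκ : D = γ ^ 2 / 2 + 2 * κ := by rw [hκ]; ring
    rw [← exp_mul, ← exp_add, hDκ]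
    refine exp_le_exp.2 ?_
    nlinarith [mul_le_mul_of_nonneg_left hδκ (by positivity : 0 ≤ δ * s),
      mul_le_mul_of_nonneg_right hmin2 hs]
  calc _ ≤ _ := hX.integral_abs_chaosMass_sub_le hK γ hs hst hδ0.le (exp_pos ((D - κ) * s))
    _ ≤ √(exp (γ ^ 2) * (V * R ^ D)) * exp (-(c * s)) + m.real univ * (exp (-(c * s)) * 2) := by
      gcongr
    _ = _ := by ring

theorem exists_integral_abs_chaosMass_sub_le {D γ : ℝ} (hm : IsUpperRegular m D)
    (hγ : γ ^ 2 < 2 * D) :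
    ∃ C c, 0 < c ∧ ∀ s t, 0 ≤ s → s ≤ t →
      ∫ ω, |chaosMass m γ X t ω - chaosMass m γ X s ω| ∂P ≤ C * exp (-(c * s)) := by
  obtain ⟨C, c, hC, hc, hstep⟩ :=
    hX.exists_integral_abs_chaosMass_sub_le_of_le_add_one hK hm hγ
  have hint {t : ℝ} (ht : 0 ≤ t) : Integrable (chaosMass m γ X t) P :=
    hX.integrable_chaosMass hK γ ht
  exact ⟨C / (1 - exp (-c)), c, hc, fun s t hs hst => le_geom_of_unit_step
    (D := fun s t => ∫ ω, |chaosMass m γ X t ω - chaosMass m γ X s ω| ∂P) hC hc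
    (fun s u t hs hsu hut => integral_abs_sub_le_add (hint hs) (hint (hs.trans hsu))
      (hint ((hs.trans hsu).trans hut))) hstep hs hst⟩

end MassBound

end IsStarScaleField

end MassIncrement


section Martingale

variable {Ω : Type*} {mΩ : MeasurableSpace Ω} {P : Measure Ω}

lemma martingale_integral {ι E : Type*} [Preorder ι] [MeasurableSpace E] {m : Measure E}
    [SFinite m] [IsFiniteMeasure P] {𝓕 : Filtration ι mΩ} {f : ι → E → Ω → ℝ}
    (hf : ∀ x, Martingale (fun t => f t x) 𝓕 P)
    (hint : ∀ t, Integrable (Function.uncurry (f t)) (m.prod P))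
    (hmeas : ∀ t, StronglyMeasurable[𝓕 t] fun ω => ∫ x, f t x ω ∂m) :
    Martingale (fun t ω => ∫ x, f t x ω ∂m) 𝓕 P := by
  refine ⟨hmeas, fun s t hst => (ae_eq_condExp_of_forall_setIntegral_eq (𝓕.le s)
    (hint t).integral_prod_right (fun _ _ _ => (hint s).integral_prod_right.integrableOn)
    (fun A hA _ => ?_) (hmeas s).aestronglyMeasurable).symm⟩
  have hswap (r : ι) : ∫ ω in A, ∫ x, f r x ω ∂m ∂P = ∫ x, ∫ ω in A, f r x ω ∂P ∂m :=
    (integral_integral_swap ((hint r).mono_measure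
      (Measure.prod_mono le_rfl Measure.restrict_le_self))).symm
  exact (hswap s).trans ((integral_congr_ae (ae_of_all _ fun x =>
    (hf x).setIntegral_eq hst hA)).trans (hswap t).symm)

lemma measure_exists_lt_abs_sub_le [IsFiniteMeasure P] {𝓖 : Filtration ℕ mΩ} {f : ℕ → Ω → ℝ}
    (hf : Martingale f 𝓖 P) {ε : ℝ} (hε : 0 < ε) (n : ℕ) :
    P {ω | ∃ j ≤ n, ε < |f j ω - f 0 ω|} ≤
      ENNReal.ofReal ((∫ ω, |f n ω - f 0 ω| ∂P) / ε) := by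
  have hconst : Martingale (fun _ : ℕ => f 0) 𝓖 P :=
    ⟨fun i => (hf.stronglyMeasurable 0).mono (𝓖.mono i.zero_le), fun i _ _ => by
      rw [condExp_of_stronglyMeasurable (𝓖.le i)
        ((hf.stronglyMeasurable 0).mono (𝓖.mono i.zero_le)) (hf.integrable 0)]⟩
  have hsub : Submartingale (fun j ω => |f j ω - f 0 ω|) 𝓖 P :=
    (hf.sub hconst).submartingale.sup (hf.sub hconst).neg.submartingale
  have hmax := maximal_ineq hsub (fun _ _ => abs_nonneg _) (ε := ε.toNNReal) n
  rw [Real.coe_toNNReal _ hε.le] at hmax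
  rw [ENNReal.ofReal_div_of_pos hε,
    ENNReal.le_div_iff_mul_le (.inl (by simpa using hε)) (.inl ENNReal.ofReal_ne_top), mul_comm]
  refine le_trans (mul_le_mul_right (measure_mono ?_) _) (hmax.trans
    (ENNReal.ofReal_le_ofReal (setIntegral_le_integral (hsub.integrable n)
      (ae_of_all _ fun _ => abs_nonneg _))))
  rintro ω ⟨j, hj, hlt⟩
  exact hlt.le.trans (Finset.le_sup' (fun j => |f j ω - f 0 ω|)
    (Finset.mem_range.2 (Nat.lt_succ_of_le hj)))

lemma exists_dyadic_mem {U : Set ℝ≥0} (hU : IsOpen U) {t : ℝ≥0} (ht : t ∈ U) :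
    ∃ n j : ℕ, j ≤ 4 ^ n ∧ (j / 2 ^ n : ℝ≥0) ∈ U := by
  have hpow : Tendsto (fun n : ℕ => (2 : ℝ) ^ n) atTop atTop :=
    tendsto_pow_atTop_atTop_of_one_lt one_lt_two
  have hlim : Tendsto (fun n : ℕ => (⌊(t : ℝ) * 2 ^ n⌋₊ / 2 ^ n : ℝ≥0)) atTop (𝓝 t) := by
    rw [← NNReal.tendsto_coe]
    push_cast
    exact (tendsto_nat_floor_mul_div_atTop t.2).comp hpow
  obtain ⟨n, hn, htn⟩ :=
    ((hlim.eventually (hU.mem_nhds ht)).and (hpow.eventually_ge_atTop t)).exists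
  refine ⟨n, _, Nat.floor_le_of_le ?_, hn⟩
  calc (t : ℝ) * 2 ^ n ≤ 2 ^ n * 2 ^ n := by gcongr
    _ = ((4 ^ n : ℕ) : ℝ) := by rw [← mul_pow]; norm_num

variable [IsFiniteMeasure P] {𝓕 : Filtration ℝ≥0 mΩ} {f : ℝ≥0 → Ω → ℝ}

lemma measure_exists_ge_lt_abs_sub_le (hf : Martingale f 𝓕 P)
    (hcont : ∀ ω, Continuous fun t => f t ω) {s : ℝ≥0} {ε b : ℝ} (hε : 0 < ε)
    (hb : ∀ t, s ≤ t → ∫ ω, |f t ω - f s ω| ∂P ≤ b) :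
    P {ω | ∃ t, s ≤ t ∧ ε < |f t ω - f s ω|} ≤ ENNReal.ofReal (b / ε) := by
  set A : ℕ → Set Ω := fun n => {ω | ∃ j : ℕ, j ≤ 4 ^ n ∧ ε < |f (s + j / 2 ^ n) ω - f s ω|}
  have hA : Monotone A := monotone_nat_of_le_succ fun n ω ⟨j, hj, hlt⟩ => by
    refine ⟨2 * j, by rw [pow_succ]; lia, ?_⟩
    rwa [pow_succ', Nat.cast_mul, Nat.cast_two, mul_div_mul_left _ _ two_ne_zero]
  have hsub : {ω | ∃ t, s ≤ t ∧ ε < |f t ω - f s ω|} ⊆ ⋃ n, A n := by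
    rintro ω ⟨t, hst, hlt⟩
    have hopen : IsOpen {r : ℝ≥0 | ε < |f (s + r) ω - f s ω|} :=
      isOpen_lt continuous_const
        (((hcont ω).comp (continuous_const_add s)).sub continuous_const).abs
    obtain ⟨n, j, hj, hmem⟩ := exists_dyadic_mem hopen (t := t - s)
      (by simpa only [mem_ofPred_eq, add_tsub_cancel_of_le hst])
    exact mem_iUnion.2 ⟨n, j, hj, hmem⟩
  refine (measure_mono hsub).trans ?_
  rw [hA.measure_iUnion]
  refine iSup_le fun n => ?_
  have hτ : Monotone fun j : ℕ => s + j / 2 ^ n := fun i j hij => by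
    have : (i : ℝ≥0) ≤ j := by exact_mod_cast hij
    dsimp only
    gcongr
  have hdiscrete : Martingale (fun j : ℕ => f (s + j / 2 ^ n))
      ⟨fun j => 𝓕 (s + j / 2 ^ n), 𝓕.mono'.comp hτ, fun _ => 𝓕.le _⟩ P :=
    ⟨fun _ => hf.1 _, fun _ _ hij => hf.2 _ _ (hτ hij)⟩
  have hmax := measure_exists_lt_abs_sub_le hdiscrete hε (4 ^ n)
  simp only [Nat.cast_zero, zero_div, add_zero] at hmax
  refine hmax.trans (ENNReal.ofReal_le_ofReal ?_)
  gcongr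
  exact hb _ le_self_add

lemma ae_exists_tendsto_of_integral_abs_sub_le (hf : Martingale f 𝓕 P)
    (hcont : ∀ ω, Continuous fun t => f t ω) {b : ℝ≥0 → ℝ} (hb : Tendsto b atTop (𝓝 0))
    (hfb : ∀ s t, s ≤ t → ∫ ω, |f t ω - f s ω| ∂P ≤ b s) :
    ∀ᵐ ω ∂P, ∃ l, Tendsto (fun t => f t ω) atTop (𝓝 l) := by
  have hε (n : ℕ) : ∀ᵐ ω ∂P, ∃ s, ∀ t, s ≤ t → |f t ω - f s ω| ≤ 1 / ((n : ℝ) + 1) := by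
    have hlim : Tendsto (fun s => ENNReal.ofReal (b s / (1 / ((n : ℝ) + 1)))) atTop (𝓝 0) := by
      simpa using ENNReal.tendsto_ofReal (hb.div_const (1 / ((n : ℝ) + 1)))
    refine nonpos_iff_eq_zero.1 (ge_of_tendsto' hlim fun s => (measure_mono fun ω hω => ?_).trans
      (measure_exists_ge_lt_abs_sub_le hf hcont Nat.one_div_pos_of_nat (hfb s)))
    simpa only [mem_ofPred_eq, not_exists, not_forall, not_le, exists_prop] using not_exists.1 hω s
  filter_upwards [ae_all_iff.2 hε] with ω hω
  refine cauchySeq_tendsto_of_complete (Metric.cauchySeq_iff'.2 fun ε hε0 => ?_)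
  obtain ⟨n, hn⟩ := exists_nat_one_div_lt hε0
  obtain ⟨s, hs⟩ := hω n
  exact ⟨s, fun t hst => (hs t hst).trans_lt hn⟩

theorem exists_measurable_tendsto_of_integral_abs_sub_le (hf : Martingale f 𝓕 P)
    (hcont : ∀ ω, Continuous fun t => f t ω) {b : ℝ≥0 → ℝ} (hb : Tendsto b atTop (𝓝 0))
    (hfb : ∀ s t, s ≤ t → ∫ ω, |f t ω - f s ω| ∂P ≤ b s) :
    ∃ L : Ω → ℝ, Measurable L ∧ (∀ᵐ ω ∂P, Tendsto (fun t => f t ω) atTop (𝓝 (L ω))) ∧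
      ∀ s, eLpNorm (L - f s) 1 P ≤ ENNReal.ofReal (b s) := by
  have hmeas (t : ℝ≥0) : AEStronglyMeasurable (f t) P := (hf.integrable t).aestronglyMeasurable
  obtain ⟨L, hL, hlim⟩ := measurable_limit_of_tendsto_metrizable_ae
    (fun t => (hmeas t).aemeasurable) (ae_exists_tendsto_of_integral_abs_sub_le hf hcont hb hfb)
  refine ⟨L, hL, hlim, fun s => ?_⟩
  have hfatou := Lp.eLpNorm_lim_le_liminf_eLpNorm (p := 1) (f := fun n : ℕ => f n - f s)
    (fun n => (hmeas n).sub (hmeas s)) (L - f s) (hlim.mono fun ω hω =>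
      (hω.comp tendsto_natCast_atTop_atTop).sub_const (f s ω))
  refine hfatou.trans (liminf_le_of_frequently_le' (Eventually.frequently ?_))
  filter_upwards [eventually_ge_atTop ⌈s⌉₊] with n hn
  rw [eLpNorm_one_eq_lintegral_enorm,
    ← ofReal_integral_norm_eq_lintegral_enorm ((hf.integrable n).sub (hf.integrable s))]
  exact ENNReal.ofReal_le_ofReal (hfb s n (Nat.ceil_le.1 hn))

end Martingale

section Limit

variable {E Ω : Type*} [mΩ : MeasurableSpace Ω]

/-- The filtration generated by the field, restricted to nonnegative times. -/
def pastFiltration (X : ℝ → E → Ω → ℝ) (hX : ∀ t x, Measurable (X t x)) :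
    Filtration ℝ≥0 mΩ where
  seq s := MeasurableSpace.comap (fun ω (p : Icc 0 (s : ℝ) × E) => X p.1 p.2 ω) inferInstance
  mono' s t hst := by
    have hrestrict : Measurable fun (f : Icc 0 (t : ℝ) × E → ℝ) (p : Icc 0 (s : ℝ) × E) =>
        f (⟨p.1, p.1.2.1, p.1.2.2.trans hst⟩, p.2) := by fun_prop
    exact (hrestrict.comp
      (comap_measurable fun ω (p : Icc 0 (t : ℝ) × E) => X p.1 p.2 ω)).comap_le
  le' s := (measurable_pi_lambda _ fun _ => hX _ _).comap_le

lemma measurable_pastFiltration (X : ℝ → E → Ω → ℝ) (hX : ∀ t x, Measurable (X t x)) (t : ℝ≥0)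
    (x : E) : Measurable[pastFiltration X hX t] (X t x) :=
  (measurable_pi_apply ((⟨t, t.2, le_rfl⟩, x) : Icc 0 (t : ℝ) × E)).comp
    (comap_measurable fun ω (p : Icc 0 (t : ℝ) × E) => X p.1 p.2 ω)

lemma stronglyMeasurable_integral_of_continuous [TopologicalSpace E]
    [TopologicalSpace.MetrizableSpace E] [SecondCountableTopology E] [MeasurableSpace E]
    [OpensMeasurableSpace E] {m : Measure E} [SFinite m] {f : E → Ω → ℝ}
    (hcont : ∀ ω, Continuous fun x => f x ω) (hmeas : ∀ x, Measurable (f x)) :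
    StronglyMeasurable fun ω => ∫ x, f x ω ∂m :=
  (measurable_uncurry_of_continuous_of_measurable hcont
    hmeas).stronglyMeasurable.integral_prod_left

variable [NormedAddCommGroup E] {P : Measure Ω} {K : ℝ → E → ℝ} {X : ℝ → E → Ω → ℝ} {R : ℝ}

namespace IsStarScaleField

section Field

variable (hX : IsStarScaleField P K X)
include hX

lemma continuous_chaosMass [MeasurableSpace E] [BorelSpace E]
    {μ : Measure E} [IsLocallyFiniteMeasure μ] {S : Set E} (hS : IsCompact S) (γ : ℝ) (ω : Ω) :
    Continuous fun t => chaosMass (μ.restrict S) γ X t ω :=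
  continuous_parametric_integral_of_continuous (hX.continuous_wickExp_path γ ω) hS

variable [NormedSpace ℝ E] (hK : IsStarScaleCovariance K R)
include hK

lemma martingale_wickExp (γ : ℝ) (x : E) :
    Martingale (fun (t : ℝ≥0) ω => wickExp γ t (X t x ω)) (pastFiltration X hX.measurable) P := by
  have := hX.isProbabilityMeasure
  set 𝓕 := pastFiltration X hX.measurable
  have hadapted (t : ℝ≥0) : StronglyMeasurable[𝓕 t] fun ω => wickExp γ t (X t x ω) :=
    ((measurable_wickExp γ t measurable_id).comp
      (measurable_pastFiltration X hX.measurable t x)).stronglyMeasurable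
  refine ⟨hadapted, fun s t hst => ?_⟩
  have hst' : (s : ℝ) ≤ t := hst
  set G : Ω → ℝ := fun ω => wickExp γ (t - s) (increment X s t x ω) with hG
  have hmul : (fun ω => wickExp γ t (X t x ω)) = (fun ω => wickExp γ s (X s x ω)) * G := by
    ext ω
    rw [Pi.mul_apply, hG, ← wickExp_add, add_increment, add_sub_cancel]
  have hGmeas : StronglyMeasurable[MeasurableSpace.comap
      (fun ω x => increment X s t x ω) inferInstance] G :=
    ((measurable_wickExp γ (t - s) (measurable_pi_apply (X := fun _ : E => ℝ) x)).comp
      (comap_measurable fun ω x => increment X s t x ω)).stronglyMeasurable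
  have hGint : Integrable G P := (hX.memLp_two_wickExp_increment γ s t x).integrable one_le_two
  have hGmean : P[G] = 1 := hX.integral_wickExp_increment hK γ s.2 hst' x
  have hcond : P[G | 𝓕 s] =ᵐ[P] fun _ => P[G] := condExp_indep_eq
    (measurable_pi_lambda _ fun x => hX.measurable_increment s t x).comap_le (𝓕.le s) hGmeas
    (hX.indepFun_past_increment hst').symm
  calc P[fun ω => wickExp γ t (X t x ω) | 𝓕 s]
      = P[(fun ω => wickExp γ s (X s x ω)) * G | 𝓕 s] := by rw [hmul]
    _ =ᵐ[P] (fun ω => wickExp γ s (X s x ω)) * P[G | 𝓕 s] :=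
        condExp_mul_of_stronglyMeasurable_left (hadapted s)
          (hmul ▸ hX.integrable_wickExp γ t x) hGint
    _ =ᵐ[P] fun ω => wickExp γ s (X s x ω) := by
        filter_upwards [hcond] with ω hω
        rw [Pi.mul_apply, hω, hGmean, mul_one]

variable [MeasurableSpace E] [BorelSpace E] [SecondCountableTopology E]

lemma martingale_chaosMass {m : Measure E} [IsFiniteMeasure m] (γ : ℝ) :
    Martingale (fun (t : ℝ≥0) => chaosMass m γ X t) (pastFiltration X hX.measurable) P := by
  have := hX.isProbabilityMeasure
  exact martingale_integral (hX.martingale_wickExp hK γ)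
    (fun t => hX.integrable_uncurry_wickExp hK γ t.2)
    fun t => stronglyMeasurable_integral_of_continuous (mΩ := pastFiltration X hX.measurable t)
      (fun ω => (hX.continuous_wickExp_path γ ω).comp (Continuous.prodMk_right (t : ℝ)))
      fun x => (measurable_wickExp γ t measurable_id).comp
        (measurable_pastFiltration X hX.measurable t x)

lemma eLpNorm_one_chaosMass {m : Measure E} [IsFiniteMeasure m] (γ : ℝ) {t : ℝ} (ht : 0 ≤ t) :
    eLpNorm (chaosMass m γ X t) 1 P = m univ := by
  have hnonneg (ω : Ω) : 0 ≤ chaosMass m γ X t ω := chaosMass_nonneg m γ X t ω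
  have hint := hX.integrable_chaosMass hK γ ht (m := m)
  rw [eLpNorm_one_eq_lintegral_enorm, ← ofReal_integral_norm_eq_lintegral_enorm hint]
  simp_rw [fun ω => norm_of_nonneg (hnonneg ω)]
  rw [hX.integral_chaosMass hK γ ht, ofReal_measureReal]

theorem exists_tendsto_chaosMass {μ : Measure E} [IsLocallyFiniteMeasure μ] {S : Set E}
    (hS : IsCompact S) {D γ : ℝ} (hm : IsUpperRegular (μ.restrict S) D) (hγ : γ ^ 2 < 2 * D) :
    ∃ L : Ω → ℝ, Measurable L ∧
      (∀ᵐ ω ∂P, Tendsto (fun t => chaosMass (μ.restrict S) γ X t ω) atTop (𝓝 (L ω))) ∧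
      (μ S ≠ 0 → ¬L =ᵐ[P] 0) := by
  have := hX.isProbabilityMeasure
  have : IsFiniteMeasure (μ.restrict S) := isFiniteMeasure_restrict.2 hS.measure_ne_top
  obtain ⟨C, c, hc, hC⟩ := hX.exists_integral_abs_chaosMass_sub_le hK hm hγ
  have hb : Tendsto (fun s : ℝ≥0 => C * exp (-(c * s))) atTop (𝓝 0) := by
    simpa using (tendsto_exp_neg_atTop_nhds_zero.comp
      (NNReal.tendsto_coe_atTop.2 tendsto_id |>.const_mul_atTop hc)).const_mul C
  obtain ⟨L, hL, hlim, hdist⟩ := exists_measurable_tendsto_of_integral_abs_sub_le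
    (hX.martingale_chaosMass hK γ) (fun ω => (hX.continuous_chaosMass hS γ ω).comp
      NNReal.continuous_coe) hb fun s t hst => hC s t s.2 hst
  refine ⟨L, hL, hlim.mono fun ω hω => ?_, fun hμS hL0 => ?_⟩
  · rw [← NNReal.map_coe_atTop]
    exact tendsto_map'_iff.2 hω
  · have hmass (s : ℝ≥0) : eLpNorm (L - chaosMass (μ.restrict S) γ X s) 1 P = μ S := by
      rw [eLpNorm_sub_comm, eLpNorm_congr_ae (g := chaosMass (μ.restrict S) γ X s)
        (hL0.mono fun ω hω => by rw [Pi.sub_apply, hω, Pi.zero_apply, sub_zero]),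
        hX.eLpNorm_one_chaosMass hK γ s.coe_nonneg, Measure.restrict_apply_univ]
    have hle (s : ℝ≥0) := (hmass s).symm.le.trans (hdist s)
    have hzero := ge_of_tendsto' (ENNReal.tendsto_ofReal hb) hle
    rw [ENNReal.ofReal_zero] at hzero
    exact hμS (nonpos_iff_eq_zero.1 hzero)

end Field

end IsStarScaleField

end Limit

section Geometry

open scoped Pointwise

variable {E : Type*} [NormedAddCommGroup E] [NormedSpace ℝ E] {S : Set E}

lemma exp_mul_norm_homothety_sub (s : ℝ) (u v z w : E) :
    exp s * ‖((1 - exp (-s)) • u + exp (-s) • z) - ((1 - exp (-s)) • v + exp (-s) • w)‖ =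
      ‖(exp s - 1) • (u - v) - (w - z)‖ := by
  have hinv : exp s * exp (-s) = 1 := by rw [← exp_add, add_neg_cancel, exp_zero]
  have hfactor : exp s * (1 - exp (-s)) = exp s - 1 := by rw [mul_sub, mul_one, hinv]
  rw [← norm_smul_of_nonneg (exp_pos s).le]
  congr 1
  simp only [smul_sub, smul_add, smul_smul, hfactor, hinv, one_smul]
  abel

lemma exists_separated_copies (hconv : Convex ℝ S) (hbdd : Bornology.IsBounded S)
    (hS : S.Nontrivial) (R : ℝ) (N : ℕ) :
    ∃ (s : ℝ) (a : Fin N → E), 0 ≤ s ∧ (∀ i, ∀ z ∈ S, a i + exp (-s) • z ∈ S) ∧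
      ∀ i j, i ≠ j → ∀ z ∈ S, ∀ w ∈ S,
        R < exp s * ‖(a i + exp (-s) • z) - (a j + exp (-s) • w)‖ := by
  obtain ⟨p, hp, q, hq, hpq⟩ := hS
  have hpq' : 0 < ‖q - p‖ := norm_sub_pos_iff.2 hpq.symm
  obtain ⟨s, hlarge, hs⟩ := ((tendsto_exp_atTop.eventually_gt_atTop
    (N * ((|R| + Metric.diam S) / ‖q - p‖) + 1)).and (eventually_ge_atTop 0)).exists
  refine ⟨s, fun i => (1 - exp (-s)) • AffineMap.lineMap p q ((i : ℝ) / N), hs,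
    fun i z hz => ?_, fun i j hij z hz w hw => ?_⟩
  · have hN : (i : ℝ) / N ∈ Icc 0 1 :=
      ⟨by positivity, div_le_one_of_le₀ (by exact_mod_cast i.2.le) (by positivity)⟩
    exact hconv (hconv.lineMap_mem hp hq hN) hz (sub_nonneg.2 (exp_le_one_iff.2 (by linarith)))
      (exp_pos _).le (sub_add_cancel _ _)
  · have hN : 0 < (N : ℝ) := by exact_mod_cast i.pos
    have hij' : 1 ≤ |(i : ℝ) - j| := by
      exact_mod_cast Int.one_le_abs (sub_ne_zero.2 fun h : (i : ℤ) = j => hij (by ext; omega))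
    have hgap : |R| + Metric.diam S < (exp s - 1) / N * ‖q - p‖ := by
      rw [← div_lt_iff₀ hpq', lt_div_iff₀ hN]
      linarith
    set c : ℝ := (exp s - 1) * (((i : ℝ) - j) / N) with hc
    have hcnorm : (exp s - 1) / N * ‖q - p‖ ≤ ‖c • (q - p)‖ := by
      rw [norm_smul, hc, norm_eq_abs, abs_mul, abs_div, abs_of_pos hN,
        abs_of_nonneg (sub_nonneg.2 (one_le_exp hs)), mul_div_assoc', mul_div_right_comm]
      gcongr
      exact le_mul_of_one_le_right (div_nonneg (sub_nonneg.2 (one_le_exp hs)) hN.le) hij'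
    have hdiff : (exp s - 1) • (AffineMap.lineMap p q ((i : ℝ) / N) -
        AffineMap.lineMap p q ((j : ℝ) / N)) = c • (q - p) := by
      simp only [hc, AffineMap.lineMap_apply_module']
      module
    have hdist := Metric.dist_le_diam_of_mem hbdd hw hz
    rw [dist_eq_norm] at hdist
    rw [exp_mul_norm_homothety_sub, hdiff]
    linarith [norm_sub_norm_le (c • (q - p)) (w - z), le_abs_self R]

lemma pow_mul_setIntegral_comp_add_smul_le [FiniteDimensional ℝ E] [MeasurableSpace E]
    [BorelSpace E] (μ : Measure E) [μ.IsAddHaarMeasure] {g : E → ℝ} (hg : IntegrableOn g S μ)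
    (hg0 : 0 ≤ g) {r : ℝ} (hr : 0 < r) {a : E} (ha : ∀ z ∈ S, a + r • z ∈ S) :
    r ^ Module.finrank ℝ E * ∫ z in S, g (a + r • z) ∂μ ≤ ∫ x in S, g x ∂μ := by
  have himage : (a + ·) '' (r • S) ⊆ S := by
    rintro _ ⟨_, ⟨z, hz, rfl⟩, rfl⟩
    exact ha z hz
  calc r ^ Module.finrank ℝ E * ∫ z in S, g (a + r • z) ∂μ
      = ∫ y in r • S, g (a + y) ∂μ := by
        rw [Measure.setIntegral_comp_smul_of_pos μ (fun y => g (a + y)) S hr, smul_eq_mul,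
          mul_inv_cancel_left₀ (by positivity)]
    _ = ∫ x in (a + ·) '' (r • S), g x ∂μ :=
        ((measurePreserving_add_left μ a).setIntegral_image_emb (measurableEmbedding_addLeft a)
          _ _).symm
    _ ≤ ∫ x in S, g x ∂μ := setIntegral_mono_set hg (ae_of_all _ hg0) himage.eventuallyLE

end Geometry

section PathFunctional

lemma exists_measurable_eq_setIntegral_comp {E : Type*} [MetricSpace E] [SecondCountableTopology E]
    [MeasurableSpace E] [BorelSpace E] {μ : Measure E} {S : Set E} (hS : MeasurableSet S)
    (hμS : μ S ≠ ∞) {φ : ℝ → ℝ} (hφ : Continuous φ) :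
    ∃ Φ : (S → ℝ) → ℝ, Measurable Φ ∧
      ∀ f : E → ℝ, Continuous f → Φ (fun z => f z) = ∫ x in S, φ (f x) ∂μ := by
  have : IsFiniteMeasure (μ.comap ((↑) : S → E)) := ⟨by
    rwa [(MeasurableEmbedding.subtype_coe hS).comap_apply, image_univ, Subtype.range_coe,
      lt_top_iff_ne_top]⟩
  have hmeas : StronglyMeasurable fun f : {f : S → ℝ // Continuous f} =>
      ∫ z, φ (f.1 z) ∂(μ.comap Subtype.val) :=
    stronglyMeasurable_integral_of_continuous
      (f := fun z (f : {f : S → ℝ // Continuous f}) => φ (f.1 z))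
      (fun f => hφ.comp f.2) fun z =>
        hφ.measurable.comp ((measurable_pi_apply z).comp measurable_subtype_coe)
  obtain ⟨Φ, hΦ, hcomp⟩ := hmeas.measurable.exists_eq_measurable_comp
  refine ⟨Φ, hΦ, fun f hf => ?_⟩
  exact (congr_fun hcomp ⟨fun z : S => f z, hf.comp continuous_subtype_val⟩).symm.trans
    (integral_subtype_comap hS fun x => φ (f x))

lemma exists_measure_exists_lt_abs_le {S Ω : Type*} [TopologicalSpace S] [CompactSpace S]
    [TopologicalSpace.SeparableSpace S] [MeasurableSpace Ω] (P : Measure Ω) [IsFiniteMeasure P]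
    {Y : S → Ω → ℝ} (hcont : ∀ ω, Continuous fun x => Y x ω) (hmeas : ∀ x, Measurable (Y x))
    {δ : ℝ≥0∞} (hδ : 0 < δ) : ∃ m : ℕ, P {ω | ∃ x, m < |Y x ω|} ≤ δ := by
  obtain ⟨D, hD, hDense⟩ := TopologicalSpace.exists_countable_dense S
  have hset (m : ℕ) : {ω | ∃ x, m < |Y x ω|} = ⋃ x ∈ D, {ω | m < |Y x ω|} := by
    ext ω
    simp only [Set.mem_ofPred_eq, mem_iUnion, exists_prop]
    refine ⟨fun hx => ?_, fun ⟨x, _, hx⟩ => ⟨x, hx⟩⟩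
    exact hDense.exists_mem_open (isOpen_lt continuous_const (hcont ω).abs) hx
  have hlim := tendsto_measure_iInter_atTop (μ := P) (s := fun m : ℕ => {ω | ∃ x, m < |Y x ω|})
    (fun m => by
      simp only [hset]
      exact (MeasurableSet.biUnion hD fun x _ =>
        measurableSet_lt measurable_const (hmeas x).abs).nullMeasurableSet)
    (fun m n hmn ω ⟨x, hx⟩ => ⟨x, lt_of_le_of_lt (by exact_mod_cast hmn) hx⟩)
    ⟨0, measure_ne_top _ _⟩
  have hempty : ⋂ m : ℕ, {ω | ∃ x, m < |Y x ω|} = ∅ := by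
    refine eq_empty_of_forall_notMem fun ω hω => ?_
    obtain ⟨C, hC⟩ := isCompact_univ.exists_bound_of_continuousOn (hcont ω).continuousOn
    obtain ⟨m, hm⟩ := exists_nat_ge C
    obtain ⟨x, hx⟩ := mem_iInter.1 hω m
    exact hx.not_ge ((hC x (mem_univ x)).trans hm)
  rw [hempty, measure_empty] at hlim
  exact (hlim.eventually (eventually_le_nhds hδ)).exists

end PathFunctional

section SmallBall

variable {E Ω : Type*} [NormedAddCommGroup E] [NormedSpace ℝ E] [FiniteDimensional ℝ E]
  [MeasurableSpace E] [BorelSpace E] [MeasurableSpace Ω] {P : Measure Ω} {K : ℝ → E → ℝ}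
  {X : ℝ → E → Ω → ℝ} {R : ℝ} {S : Set E}

namespace IsStarScaleField

variable (hX : IsStarScaleField P K X)
include hX

lemma mul_setIntegral_increment_le_chaosMass (μ : Measure E) [μ.IsAddHaarMeasure]
    (hS : IsCompact S) (γ : ℝ) {s t m r : ℝ} {ω : Ω} (hm : ∀ x ∈ S, |X s x ω| ≤ m) (hr : 0 < r)
    {a : E} (ha : ∀ z ∈ S, a + r • z ∈ S) :
    exp (-(|γ| * m) - γ ^ 2 / 2 * s) * (r ^ Module.finrank ℝ E *
        ∫ z in S, wickExp γ (t - s) (increment X s t (a + r • z) ω) ∂μ) ≤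
      chaosMass (μ.restrict S) γ X t ω := by
  have hpath (u : ℝ) : Continuous fun x => X u x ω :=
    (hX.continuous ω).comp (Continuous.prodMk_right u)
  have hinc : Continuous fun x => wickExp γ (t - s) (increment X s t x ω) :=
    continuous_wickExp γ continuous_const ((hpath t).sub (hpath s))
  have hwick : Continuous fun x => wickExp γ t (X t x ω) :=
    continuous_wickExp γ continuous_const (hpath t)
  calc exp (-(|γ| * m) - γ ^ 2 / 2 * s) * (r ^ Module.finrank ℝ E *
        ∫ z in S, wickExp γ (t - s) (increment X s t (a + r • z) ω) ∂μ)
      ≤ exp (-(|γ| * m) - γ ^ 2 / 2 * s) *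
          ∫ x in S, wickExp γ (t - s) (increment X s t x ω) ∂μ := by
        gcongr
        exact pow_mul_setIntegral_comp_add_smul_le μ (hinc.continuousOn.integrableOn_compact hS)
          (fun x => (wickExp_pos _ _ _).le) hr ha
    _ = ∫ x in S, exp (-(|γ| * m) - γ ^ 2 / 2 * s) *
          wickExp γ (t - s) (increment X s t x ω) ∂μ := (integral_const_mul _ _).symm
    _ ≤ chaosMass (μ.restrict S) γ X t ω := by
        refine setIntegral_mono_on ((hinc.const_mul _).continuousOn.integrableOn_compact hS)
          (hwick.continuousOn.integrableOn_compact hS) hS.measurableSet fun x hx => ?_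
        have hwick_mul := wickExp_add γ s (t - s) (X s x ω) (increment X s t x ω)
        rw [add_sub_cancel, add_increment] at hwick_mul
        rw [hwick_mul]
        refine mul_le_mul_of_nonneg_right (exp_le_exp.2 (sub_le_sub_right ?_ _))
          (wickExp_pos _ _ _).le
        calc -(|γ| * m) ≤ -|γ * X s x ω| := by
              rw [abs_mul]
              gcongr
              exact hm x hx
          _ ≤ γ * X s x ω := neg_abs_le _

variable (hK : IsStarScaleCovariance K R)
include hK

lemma measure_forall_setIntegral_increment_lt {μ : Measure E} [IsLocallyFiniteMeasure μ]
    (hS : IsCompact S) (γ : ℝ) {s t : ℝ} (hs : 0 ≤ s) (hst : s ≤ t) {ι : Type*} [Fintype ι]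
    {a : ι → E} (hsep : ∀ i j, i ≠ j → ∀ z ∈ S, ∀ w ∈ S,
      R < exp s * ‖(a i + exp (-s) • z) - (a j + exp (-s) • w)‖) (c : ℝ) :
    P {ω | ∀ i, ∫ z in S, wickExp γ (t - s) (increment X s t (a i + exp (-s) • z) ω) ∂μ < c} =
      P {ω | chaosMass (μ.restrict S) γ X (t - s) ω < c} ^ Fintype.card ι := by
  obtain ⟨Φ, hΦ, hΦeq⟩ := exists_measurable_eq_setIntegral_comp (φ := wickExp γ (t - s))
    hS.measurableSet (hS.measure_ne_top (μ := μ))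
    (continuous_wickExp γ continuous_const continuous_id)
  have hpath (u : ℝ) (ω : Ω) : Continuous fun x => X u x ω :=
    (hX.continuous ω).comp (Continuous.prodMk_right u)
  have hB : MeasurableSet {f | Φ f < c} := measurableSet_lt hΦ measurable_const
  have hindep := (hX.iIndepFun_increment_comp hK hs hst (fun i (z : S) => a i + exp (-s) • (z : E))
    fun i j hij z w => hsep i j hij z z.2 w w.2).measure_inter_preimage_eq_mul Finset.univ
      (sets := fun _ => {f | Φ f < c}) fun _ _ => hB
  have hident (i : ι) := (hX.identDistrib_increment_comp hK hs hst (a i)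
    (Subtype.val : S → E)).measure_mem_eq hB
  simp only [Finset.prod_congr rfl fun i _ => hident i, Finset.prod_const,
    Finset.card_univ] at hindep
  convert hindep using 2
  · ext ω
    simp only [Set.mem_ofPred_eq, mem_iInter, mem_preimage, Finset.mem_univ, forall_const]
    refine forall_congr' fun i => ?_
    rw [hΦeq (fun z => increment X s t (a i + exp (-s) • z) ω)
      (((hpath t ω).sub (hpath s ω)).comp (by fun_prop))]
  · congr 1
    ext ω
    simp only [Set.mem_ofPred_eq, mem_preimage, hΦeq _ (hpath (t - s) ω), chaosMass]

lemma exists_measure_chaosMass_lt_le (μ : Measure E) [μ.IsAddHaarMeasure] (hS : IsCompact S)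
    (hconv : Convex ℝ S) (hnt : S.Nontrivial) (G : ℝ) (N : ℕ) {δ : ℝ≥0∞} (hδ : 0 < δ) :
    ∃ s B, 0 < B ∧ ∀ γ, γ ^ 2 ≤ G → ∀ t, s ≤ t → ∀ b,
      P {ω | chaosMass (μ.restrict S) γ X t ω < b} ≤
        δ + P {ω | chaosMass (μ.restrict S) γ X (t - s) ω < B * b} ^ N := by
  have := hX.isProbabilityMeasure
  have := isCompact_iff_compactSpace.1 hS
  obtain ⟨s, a, hs, hsub, hsep⟩ := exists_separated_copies hconv hS.isBounded hnt R N
  obtain ⟨m, hm⟩ := exists_measure_exists_lt_abs_le P (Y := fun x : S => X s x)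
    (fun ω => (hX.continuous ω).comp ((Continuous.prodMk_right s).comp continuous_subtype_val))
    (fun x => hX.measurable s x) hδ
  set η : ℝ := exp (-(√G * m) - G / 2 * s) * exp (-s) ^ Module.finrank ℝ E with hη
  have hη0 : 0 < η := by positivity
  refine ⟨s, η⁻¹, inv_pos.2 hη0, fun γ hγ t hst b => ?_⟩
  set J : Fin N → Ω → ℝ := fun i ω =>
    ∫ z in S, wickExp γ (t - s) (increment X s t (a i + exp (-s) • z) ω) ∂μ
  have hJ0 (i : Fin N) (ω : Ω) : 0 ≤ J i ω := integral_nonneg fun z => (wickExp_pos _ _ _).le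
  have hγG : |γ| ≤ √G := abs_le_sqrt hγ
  have hcover : {ω | chaosMass (μ.restrict S) γ X t ω < b} ⊆
      {ω | ∃ x : S, m < |X s x ω|} ∪ {ω | ∀ i, J i ω < η⁻¹ * b} := by
    intro ω hω
    refine or_iff_not_imp_left.2 fun hbdd i => (lt_inv_mul_iff₀ hη0).2 (lt_of_le_of_lt ?_ hω)
    have hbdd' (x : E) (hx : x ∈ S) : |X s x ω| ≤ m := not_lt.1 fun h => hbdd ⟨⟨x, hx⟩, h⟩
    refine le_trans ?_ (hX.mul_setIntegral_increment_le_chaosMass μ hS γ hbdd' (exp_pos (-s))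
      (hsub i) (t := t))
    rw [← mul_assoc]
    refine mul_le_mul_of_nonneg_right ?_ (hJ0 i ω)
    rw [hη]
    gcongr
  calc P {ω | chaosMass (μ.restrict S) γ X t ω < b}
      ≤ P {ω | ∃ x : S, m < |X s x ω|} + P {ω | ∀ i, J i ω < η⁻¹ * b} :=
        (measure_mono hcover).trans (measure_union_le _ _)
    _ ≤ δ + P {ω | chaosMass (μ.restrict S) γ X (t - s) ω < η⁻¹ * b} ^ N := by
        rw [hX.measure_forall_setIntegral_increment_lt hK hS γ hs hst hsep, Fintype.card_fin]
        gcongr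

end IsStarScaleField

lemma measure_lt_le_of_ae_tendsto [IsProbabilityMeasure P] {U V : ℕ → Ω → ℝ} {L : Ω → ℝ}
    (hU : ∀ n, AEMeasurable (U n) P) (hV : ∀ n, AEMeasurable (V n) P)
    (hUL : ∀ᵐ ω ∂P, Tendsto (fun n => U n ω) atTop (𝓝 (L ω)))
    (hVL : ∀ᵐ ω ∂P, Tendsto (fun n => V n ω) atTop (𝓝 (L ω))) {f : ℝ≥0∞ → ℝ≥0∞}
    (hf : Monotone f) (hfc : Continuous f) {a b : ℝ}
    (h : ∀ n, P {ω | U n ω < a} ≤ f (P {ω | V n ω < b})) :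
    P {ω | L ω < a} ≤ f (P {ω | L ω ≤ b}) := by
  have hL : AEMeasurable L P := aemeasurable_of_tendsto_metrizable_ae atTop hU hUL
  have hopen := ProbabilityMeasure.le_liminf_measure_open_of_tendsto
    (tendstoInDistribution_of_ae_tendsto hU hL hUL).tendsto (isOpen_Iio (a := a))
  have hclosed := ProbabilityMeasure.limsup_measure_closed_le_of_tendsto
    (tendstoInDistribution_of_ae_tendsto hV hL hVL).tendsto (isClosed_Iic (a := b))
  simp only [ProbabilityMeasure.coe_mk, Measure.map_apply_of_aemeasurable hL measurableSet_Iio,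
    Measure.map_apply_of_aemeasurable (hU _) measurableSet_Iio,
    Measure.map_apply_of_aemeasurable hL measurableSet_Iic,
    Measure.map_apply_of_aemeasurable (hV _) measurableSet_Iic] at hopen hclosed
  calc P {ω | L ω < a} ≤ liminf (fun n => P {ω | U n ω < a}) atTop := hopen
    _ ≤ limsup (fun n => P {ω | U n ω < a}) atTop := liminf_le_limsup
    _ ≤ limsup (fun n => f (P {ω | V n ω ≤ b})) atTop := limsup_le_limsup
        (Eventually.of_forall fun n => (h n).trans
          (hf (measure_mono fun ω (hω : V n ω < b) => hω.le)))
    _ = f (limsup (fun n => P {ω | V n ω ≤ b}) atTop) :=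
        (hf.map_limsup_of_continuousAt _ hfc.continuousAt).symm
    _ ≤ f (P {ω | L ω ≤ b}) := hf hclosed

/-- The self-improving small-ball bound shared by the random variables in `𝓛`: up to an error `δ`,
the probability of a small value is bounded by the `N`-th power of the probability of a value of
the same order, uniformly in the variable. -/
def HasUniformSmallBallBound (P : Measure Ω) (𝓛 : Set (Ω → ℝ)) : Prop :=
  ∀ (N : ℕ) (δ : ℝ≥0∞), 0 < δ → ∃ B : ℝ, 0 < B ∧
    ∀ L ∈ 𝓛, ∀ a, P {ω | L ω < a} ≤ δ + P {ω | L ω ≤ B * a} ^ N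

theorem IsStarScaleField.hasUniformSmallBallBound_chaosMass (hX : IsStarScaleField P K X)
    (hK : IsStarScaleCovariance K R) (μ : Measure E) [μ.IsAddHaarMeasure] (hS : IsCompact S)
    (hconv : Convex ℝ S) (hnt : S.Nontrivial) (G : ℝ) :
    HasUniformSmallBallBound P {L | ∃ γ, γ ^ 2 ≤ G ∧
      ∀ᵐ ω ∂P, Tendsto (fun t => chaosMass (μ.restrict S) γ X t ω) atTop (𝓝 (L ω))} := by
  intro N δ hδ
  have := hX.isProbabilityMeasure
  have : IsFiniteMeasure (μ.restrict S) := isFiniteMeasure_restrict.2 hS.measure_ne_top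
  obtain ⟨s, B, hB, h⟩ := hX.exists_measure_chaosMass_lt_le hK μ hS hconv hnt G N hδ
  refine ⟨B, hB, fun L ⟨γ, hγ, hL⟩ a => ?_⟩
  refine measure_lt_le_of_ae_tendsto (f := fun p => δ + p ^ N)
    (U := fun n => chaosMass (μ.restrict S) γ X (n + s))
    (V := fun n => chaosMass (μ.restrict S) γ X n)
    (fun n => (hX.measurable_chaosMass _ _ _).aemeasurable)
    (fun n => (hX.measurable_chaosMass _ _ _).aemeasurable) ?_ ?_
    (fun p q hpq => by dsimp only; gcongr) (by fun_prop) fun n => ?_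
  · filter_upwards [hL] with ω hω
    exact hω.comp (tendsto_atTop_add_const_right _ _ tendsto_natCast_atTop_atTop)
  · filter_upwards [hL] with ω hω
    exact hω.comp tendsto_natCast_atTop_atTop
  · have hn := h γ hγ (n + s) (by linarith [n.cast_nonneg (α := ℝ)]) a
    rwa [add_sub_cancel_right] at hn

end SmallBall

section SubsequentialLimit

variable {Ω : Type*} [MeasurableSpace Ω] {P : Measure Ω} [IsProbabilityMeasure P]

lemma integrable_exp_neg {Y : Ω → ℝ} (hY : AEMeasurable Y P) (hY0 : ∀ᵐ ω ∂P, 0 ≤ Y ω) :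
    Integrable (fun ω => exp (-Y ω)) P := by
  refine Integrable.of_bound (measurable_exp.comp_aemeasurable hY.neg).aestronglyMeasurable 1 ?_
  filter_upwards [hY0] with ω hω
  rw [norm_eq_abs, abs_exp, exp_le_one_iff]
  exact neg_nonpos.2 hω

lemma exists_integral_exp_neg_mul_eq {L : Ω → ℝ} (hL : AEMeasurable L P)
    (hpos : ∀ᵐ ω ∂P, 0 < L ω) {p : ℝ} (hp : p ∈ Ioo 0 1) :
    ∃ l, 0 < l ∧ ∫ ω, exp (-(l * L ω)) ∂P = p := by
  have hmeas (l : ℝ) : AEStronglyMeasurable (fun ω => exp (-(l * L ω))) P :=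
    (measurable_exp.comp_aemeasurable (hL.const_mul l).neg).aestronglyMeasurable
  have hbound (l : ℝ) (hl : 0 ≤ l) : ∀ᵐ ω ∂P, ‖exp (-(l * L ω))‖ ≤ 1 := by
    filter_upwards [hpos] with ω hω
    rw [norm_eq_abs, abs_exp, exp_le_one_iff]
    exact neg_nonpos.2 (mul_nonneg hl hω.le)
  have hcont : ContinuousOn (fun l => ∫ ω, exp (-(l * L ω)) ∂P) (Ici 0) :=
    continuousOn_of_dominated (fun l _ => hmeas l) hbound (integrable_const 1)
      (ae_of_all _ fun ω => by fun_prop)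
  have hlim : Tendsto (fun l => ∫ ω, exp (-(l * L ω)) ∂P) atTop (𝓝 0) := by
    rw [← integral_zero Ω ℝ]
    refine tendsto_integral_filter_of_dominated_convergence (fun _ => 1)
      (Eventually.of_forall hmeas) ((eventually_ge_atTop 0).mono hbound) (integrable_const 1) ?_
    filter_upwards [hpos] with ω hω
    exact tendsto_exp_neg_atTop_nhds_zero.comp (tendsto_id.atTop_mul_const hω)
  obtain ⟨b, hb, hbp⟩ := ((eventually_ge_atTop 0).and (hlim.eventually_lt_const hp.1)).exists
  have hzero : ∫ ω, exp (-(0 * L ω)) ∂P = 1 := by simp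
  obtain ⟨l, hl, hlp⟩ := intermediate_value_Icc' hb (hcont.mono Icc_subset_Ici_self)
    ⟨hbp.le, hzero.symm ▸ hp.2.le⟩
  refine ⟨l, hl.1.lt_of_ne fun h => hp.2.ne ?_, hlp⟩
  rw [← hlp, ← hzero, h]

lemma integral_exp_neg_le {Y : Ω → ℝ} (hY : AEMeasurable Y P) (hY0 : ∀ᵐ ω ∂P, 0 ≤ Y ω)
    (b : ℝ) : ∫ ω, exp (-Y ω) ∂P ≤ P.real {ω | Y ω < b} + exp (-b) := by
  have hset : NullMeasurableSet {ω | Y ω < b} P := nullMeasurableSet_lt hY aemeasurable_const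
  have hind : Integrable ({ω | Y ω < b}.indicator fun _ => (1 : ℝ)) P :=
    (integrable_const 1).indicator₀ hset
  calc ∫ ω, exp (-Y ω) ∂P
      ≤ ∫ ω, ({ω | Y ω < b}.indicator (fun _ => 1) ω + exp (-b)) ∂P := by
        refine integral_mono_ae (integrable_exp_neg hY hY0) (hind.add (integrable_const _)) ?_
        filter_upwards [hY0] with ω hω
        by_cases h : Y ω < b
        · have : exp (-Y ω) ≤ 1 := exp_le_one_iff.2 (neg_nonpos.2 hω)
          rw [indicator_of_mem (show ω ∈ {ω | Y ω < b} from h)]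
          linarith [exp_pos (-b)]
        · rw [indicator_of_notMem (show ω ∉ {ω | Y ω < b} from h), zero_add, exp_le_exp]
          linarith
    _ = P.real {ω | Y ω < b} + exp (-b) := by
        rw [integral_add hind (integrable_const _), integral_indicator₀ hset]
        simp

lemma inv_four_le_measure_lt_three {Y : Ω → ℝ} (hY : AEMeasurable Y P)
    (hY0 : ∀ᵐ ω ∂P, 0 ≤ Y ω) (hint : ∫ ω, exp (-Y ω) ∂P = 1 / 2) :
    4⁻¹ ≤ P {ω | Y ω < 3} := by
  have hexp : exp (-3) ≤ 1 / 4 := by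
    rw [exp_neg, one_div]
    exact inv_anti₀ (by norm_num) (by linarith [add_one_le_exp (3 : ℝ)])
  have hreal : (1 / 4 : ℝ) ≤ P.real {ω | Y ω < 3} := by
    linarith [integral_exp_neg_le hY hY0 3]
  calc (4⁻¹ : ℝ≥0∞) = ENNReal.ofReal (1 / 4) := by
        rw [one_div, ENNReal.ofReal_inv_of_pos (by norm_num), ENNReal.ofReal_ofNat]
    _ ≤ ENNReal.ofReal (P.real {ω | Y ω < 3}) := ENNReal.ofReal_le_ofReal hreal
    _ = P {ω | Y ω < 3} := ofReal_measureReal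

namespace HasUniformSmallBallBound

variable {𝓛 : Set (Ω → ℝ)} (h : HasUniformSmallBallBound P 𝓛)
include h

lemma measure_nonpos_le_add_sq {L : Ω → ℝ} (hL𝓛 : L ∈ 𝓛) (hL : AEMeasurable L P) {δ : ℝ≥0∞}
    (hδ : 0 < δ) : P {ω | L ω ≤ 0} ≤ δ + P {ω | L ω ≤ 0} ^ 2 := by
  obtain ⟨B, hB, hle⟩ := h 2 δ hδ
  have hlim : Tendsto (fun a => P (L ⁻¹' Iic a)) (𝓝[>] 0) (𝓝 (P (⋂ a > 0, L ⁻¹' Iic a))) :=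
    tendsto_measure_biInter_gt (fun a _ => hL.nullMeasurableSet_preimage measurableSet_Iic)
      (fun a b _ hab => preimage_mono (Iic_subset_Iic.2 hab)) ⟨1, one_pos, measure_ne_top _ _⟩
  have hinter : ⋂ a > (0 : ℝ), L ⁻¹' Iic a = {ω | L ω ≤ 0} := by
    ext ω
    simpa using forall_gt_imp_ge_iff_le_of_dense (a₁ := L ω)
  rw [hinter] at hlim
  refine ge_of_tendsto ((((ENNReal.continuous_pow 2).tendsto _).comp hlim).const_add δ)
    (eventually_mem_nhdsWithin.mono fun a ha => ?_)
  calc P {ω | L ω ≤ 0} ≤ P {ω | L ω < B⁻¹ * a} :=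
        measure_mono fun ω (hω : L ω ≤ 0) => hω.trans_lt (mul_pos (inv_pos.2 hB) ha)
    _ ≤ δ + P (L ⁻¹' Iic a) ^ 2 := by
        refine (hle L hL𝓛 _).trans_eq ?_
        rw [mul_inv_cancel_left₀ hB.ne']
        rfl

lemma ae_pos {L : Ω → ℝ} (hL𝓛 : L ∈ 𝓛) (hL : AEMeasurable L P) (hL0 : ∀ᵐ ω ∂P, 0 ≤ L ω)
    (hne : ¬L =ᵐ[P] 0) : ∀ᵐ ω ∂P, 0 < L ω := by
  set q : ℝ≥0∞ := P {ω | L ω ≤ 0}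
  have hsq : q ≤ q ^ 2 := ENNReal.le_of_forall_pos_le_add fun ε hε _ => by
    rw [add_comm]
    exact h.measure_nonpos_le_add_sq hL𝓛 hL (ENNReal.coe_pos.2 hε)
  have hlt : q < 1 := by
    refine prob_le_one.lt_of_ne fun hq1 => hne ?_
    have hnonpos : ∀ᵐ ω ∂P, L ω ≤ 0 :=
      (prob_compl_eq_zero_iff₀ (nullMeasurableSet_le hL aemeasurable_const)).2 hq1
    filter_upwards [hL0, hnonpos] with ω h1 h2
    exact le_antisymm h2 h1
  have hzero : q = 0 := by
    by_contra hq0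
    refine hsq.not_gt ?_
    calc q ^ 2 = q * q := sq q
      _ < q * 1 := ENNReal.mul_lt_mul_right hq0 hlt.ne_top hlt
      _ = q := mul_one q
  simpa only [ae_iff, not_lt] using hzero

/- Since `𝔼[exp (-Y)] = 1/2` forces `P {Y < 3} ≥ 1/4`, the small-ball bound prevents `P {Y ≤ A}`
from being bounded away from `1`. -/
lemma exists_measure_lt_le {ε : ℝ≥0∞} (hε : 0 < ε) :
    ∃ A, ∀ L ∈ 𝓛, AEMeasurable L P → (∀ᵐ ω ∂P, 0 ≤ L ω) → ∀ l, 0 < l →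
      ∫ ω, exp (-(l * L ω)) ∂P = 1 / 2 → P {ω | A < l * L ω} ≤ ε := by
  have hhalf : (0 : ℝ≥0∞) < 4⁻¹ / 2 := by simp
  obtain ⟨N, hN⟩ := ((ENNReal.tendsto_pow_atTop_nhds_zero_of_lt_one
    (ENNReal.sub_lt_self ENNReal.one_ne_top one_ne_zero hε.ne')).eventually_lt_const hhalf).exists
  obtain ⟨B, -, hle⟩ := h N (4⁻¹ / 2) hhalf
  refine ⟨B * 3, fun L hL𝓛 hL hL0 l hl hint => ?_⟩
  by_contra! hlarge
  have hsmall : P {ω | L ω ≤ B * (3 / l)} ≤ 1 - ε := by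
    have hcompl : {ω | L ω ≤ B * (3 / l)} = {ω | B * 3 < l * L ω}ᶜ := by
      ext ω
      simp only [Set.mem_ofPred_eq, mem_compl_iff, not_lt, ← mul_div_assoc, le_div_iff₀' hl]
    rw [hcompl, prob_compl_eq_one_sub₀ (nullMeasurableSet_lt aemeasurable_const (hL.const_mul l))]
    exact tsub_le_tsub_left hlarge.le 1
  have hquarter : 4⁻¹ ≤ P {ω | L ω < 3 / l} := by
    simpa only [lt_div_iff₀' hl] using inv_four_le_measure_lt_three (hL.const_mul l)
      (hL0.mono fun ω hω => mul_nonneg hl.le hω) hint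
  refine lt_irrefl (4⁻¹ : ℝ≥0∞) ?_
  calc (4⁻¹ : ℝ≥0∞) ≤ 4⁻¹ / 2 + P {ω | L ω ≤ B * (3 / l)} ^ N := hquarter.trans (hle L hL𝓛 _)
    _ ≤ 4⁻¹ / 2 + (1 - ε) ^ N := by gcongr
    _ < 4⁻¹ / 2 + 4⁻¹ / 2 := ENNReal.add_lt_add_left (by simp [ENNReal.div_eq_top]) hN
    _ = 4⁻¹ := ENNReal.add_halves _

end HasUniformSmallBallBound

lemma exists_subseq_tendstoInDistribution {Y : ℕ → Ω → ℝ} (hY : ∀ n, AEMeasurable (Y n) P)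
    (hY0 : ∀ n, ∀ᵐ ω ∂P, 0 ≤ Y n ω)
    (htight : ∀ ε : ℝ≥0∞, 0 < ε → ∃ A, ∀ n, P {ω | A < Y n ω} ≤ ε) :
    ∃ (φ : ℕ → ℕ) (ν : ProbabilityMeasure ℝ), StrictMono φ ∧
      TendstoInDistribution (fun n => Y (φ n)) atTop id (fun _ => P) (ν : Measure ℝ) := by
  let μ (n : ℕ) : ProbabilityMeasure ℝ := ⟨P.map (Y n), Measure.isProbabilityMeasure_map (hY n)⟩
  have hμ : IsTightMeasureSet {((m : ProbabilityMeasure ℝ) : Measure ℝ) | m ∈ range μ} := by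
    rw [isTightMeasureSet_iff_exists_isCompact_measure_compl_le]
    intro ε hε
    obtain ⟨A, hA⟩ := htight ε hε
    refine ⟨Icc 0 A, isCompact_Icc, ?_⟩
    rintro _ ⟨_, ⟨n, rfl⟩, rfl⟩
    refine (Measure.map_apply_of_aemeasurable (hY n) measurableSet_Icc.compl).trans_le
      ((measure_mono_ae ?_).trans (hA n))
    filter_upwards [hY0 n] with ω hω hnot
    exact not_le.1 fun hle => hnot ⟨hω, hle⟩
  obtain ⟨ν, -, φ, hφ, hν⟩ := (isCompact_closure_of_isTightMeasureSet hμ).tendsto_subseq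
    (x := μ) fun n => subset_closure (mem_range_self n)
  refine ⟨φ, ν, hφ, fun n => hY (φ n), aemeasurable_id, ?_⟩
  simp only [Measure.map_id]
  exact hν

lemma tendsto_integral_comp_of_tendstoInDistribution {Y : ℕ → Ω → ℝ} {ν : Measure ℝ}
    [IsProbabilityMeasure ν] (hν : TendstoInDistribution Y atTop id (fun _ => P) ν)
    (f : BoundedContinuousFunction ℝ ℝ) :
    Tendsto (fun n => ∫ ω, f (Y n ω) ∂P) atTop (𝓝 (∫ x, f x ∂ν)) := by
  have hlim := ProbabilityMeasure.tendsto_iff_forall_integral_tendsto.1 hν.tendsto f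
  simp only [ProbabilityMeasure.coe_mk, Measure.map_id] at hlim
  exact hlim.congr fun n =>
    integral_map (hν.forall_aemeasurable n) f.continuous.aestronglyMeasurable

lemma integral_exp_neg_eq_of_tendstoInDistribution {Y : ℕ → Ω → ℝ}
    (hY0 : ∀ n, ∀ᵐ ω ∂P, 0 ≤ Y n ω) {ν : Measure ℝ}
    [IsProbabilityMeasure ν] (hν : TendstoInDistribution Y atTop id (fun _ => P) ν) {p : ℝ}
    (hp : ∀ n, ∫ ω, exp (-Y n ω) ∂P = p) : ∫ x, exp (-x) ∂ν = p := by
  let f : BoundedContinuousFunction ℝ ℝ := BoundedContinuousFunction.ofNormedAddCommGroup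
    (fun x => exp (-|x|)) (by fun_prop) 1 fun x => by
      rw [norm_eq_abs, abs_exp, exp_le_one_iff]
      exact neg_nonpos.2 (abs_nonneg x)
  have hf {x : ℝ} (hx : 0 ≤ x) : f x = exp (-x) := by
    change exp (-|x|) = exp (-x)
    rw [abs_of_nonneg hx]
  have hν0 : ∀ᵐ x ∂ν, 0 ≤ x := by
    have hmap (n : ℕ) : P.map (Y n) (Iio 0) = 0 := by
      rw [Measure.map_apply_of_aemeasurable (hν.forall_aemeasurable n) measurableSet_Iio]
      simpa only [ae_iff, not_le] using! hY0 n
    have hopen := ProbabilityMeasure.le_liminf_measure_open_of_tendsto hν.tendsto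
      (isOpen_Iio (a := (0 : ℝ)))
    simp only [ProbabilityMeasure.coe_mk, Measure.map_id, hmap, liminf_const,
      nonpos_iff_eq_zero] at hopen
    simpa only [ae_iff, not_le] using! hopen
  have hlim := tendsto_integral_comp_of_tendstoInDistribution hν f
  simp only [fun n => (integral_congr_ae ((hY0 n).mono fun _ hω => hf hω)).trans (hp n)] at hlim
  exact (integral_congr_ae (hν0.mono fun x hx => hf hx)).symm.trans
    (tendsto_nhds_unique hlim tendsto_const_nhds)

namespace HasUniformSmallBallBound

theorem exists_subseq_tendstoInDistribution {𝓛 : Set (Ω → ℝ)} (h : HasUniformSmallBallBound P 𝓛)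
    {L : ℕ → Ω → ℝ} (hL𝓛 : ∀ n, L n ∈ 𝓛) (hL : ∀ n, AEMeasurable (L n) P)
    (hL0 : ∀ n, ∀ᵐ ω ∂P, 0 ≤ L n ω) (hne : ∀ n, ¬L n =ᵐ[P] 0) :
    ∃ (φ : ℕ → ℕ) (l : ℕ → ℝ) (ν : ProbabilityMeasure ℝ), StrictMono φ ∧ (∀ n, 0 < l n) ∧
      TendstoInDistribution (fun n ω => l n * L (φ n) ω) atTop id (fun _ => P) (ν : Measure ℝ) ∧
      ∫ x, exp (-x) ∂(ν : Measure ℝ) = 1 / 2 := by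
  choose l hl hint using fun n => exists_integral_exp_neg_mul_eq (hL n)
    (h.ae_pos (hL𝓛 n) (hL n) (hL0 n) (hne n)) (p := 1 / 2) (by norm_num)
  have hlL0 (n : ℕ) : ∀ᵐ ω ∂P, 0 ≤ l n * L n ω := (hL0 n).mono fun ω hω => mul_nonneg (hl n).le hω
  obtain ⟨φ, ν, hφ, hν⟩ := MultiplicativeChaos.exists_subseq_tendstoInDistribution
    (fun n => (hL n).const_mul (l n)) hlL0 fun ε hε => by
      obtain ⟨A, hA⟩ := h.exists_measure_lt_le hε
      exact ⟨A, fun n => hA (L n) (hL𝓛 n) (hL n) (hL0 n) (l n) (hl n) (hint n)⟩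
  exact ⟨φ, l ∘ φ, ν, hφ, fun n => hl (φ n), hν,
    integral_exp_neg_eq_of_tendstoInDistribution (fun n => hlL0 (φ n)) hν fun n => hint (φ n)⟩

end HasUniformSmallBallBound

end SubsequentialLimit

section Subcritical

variable {E Ω : Type*} [NormedAddCommGroup E] [NormedSpace ℝ E] [FiniteDimensional ℝ E]
  [Nontrivial E] [MeasurableSpace E] [BorelSpace E] [MeasurableSpace Ω] {P : Measure Ω}
  [IsProbabilityMeasure P] {S : Set E}

theorem IsStarScaleField.exists_subseq_tendstoInDistribution_chaosMass {K : ℝ → E → ℝ}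
    {X : ℝ → E → Ω → ℝ} {R : ℝ} (hX : IsStarScaleField P K X) (hK : IsStarScaleCovariance K R)
    (μ : Measure E) [μ.IsAddHaarMeasure] (hS : IsCompact S) (hconv : Convex ℝ S) (hμS : μ S ≠ 0)
    {γ : ℕ → ℝ} (hγ : ∀ n, γ n ^ 2 < 2 * Module.finrank ℝ E) :
    ∃ (φ : ℕ → ℕ) (l : ℕ → ℝ) (L : ℕ → Ω → ℝ) (ν : ProbabilityMeasure ℝ), StrictMono φ ∧
      (∀ n, 0 < l n) ∧
      (∀ n, ∀ᵐ ω ∂P, Tendsto (fun t => chaosMass (μ.restrict S) (γ (φ n)) X t ω) atTop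
        (𝓝 (L n ω))) ∧
      TendstoInDistribution (fun n ω => l n * L n ω) atTop id (fun _ => P) (ν : Measure ℝ) ∧
      ∫ x, exp (-x) ∂(ν : Measure ℝ) = 1 / 2 := by
  have hnt : S.Nontrivial := not_subsingleton_iff.1 fun h => hμS (h.measure_zero μ)
  choose L hL hlim hne using fun n =>
    hX.exists_tendsto_chaosMass hK hS (isUpperRegular_addHaar_restrict μ S) (hγ n)
  have hL0 (n : ℕ) : ∀ᵐ ω ∂P, 0 ≤ L n ω :=
    (hlim n).mono fun ω hω => ge_of_tendsto' hω fun t => chaosMass_nonneg _ _ _ _ _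
  obtain ⟨φ, l, ν, hφ, hl, hν, hint⟩ :=
    (hX.hasUniformSmallBallBound_chaosMass hK μ hS hconv hnt _).exists_subseq_tendstoInDistribution
      (fun n => ⟨γ n, (hγ n).le, hlim n⟩) (fun n => (hL n).aemeasurable) hL0 fun n => hne n hμS
  exact ⟨φ, l, fun n => L (φ n), ν, hφ, hl, fun n => hlim (φ n), hν, hint⟩

end Subcritical

lemma exists_seq_strictMono_tendsto_sqrt {a : ℝ} (ha : 0 < a) :
    ∃ u : ℕ → ℝ, StrictMono u ∧ (∀ n, u n ^ 2 < a) ∧ Tendsto u atTop (𝓝 √a) := by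
  obtain ⟨u, hmono, hu, hlim⟩ := exists_seq_strictMono_tendsto' (sqrt_pos.2 ha)
  exact ⟨u, hmono, fun n => (lt_sqrt (hu n).1.le).1 (hu n).2, hlim⟩

/-- The cube `[0, 1] ^ d`. -/
def unitCube (d : ℕ) : Set (EuclideanSpace ℝ (Fin d)) := {x | ∀ i, x i ∈ Icc (0 : ℝ) 1}

lemma unitCube_eq_preimage (d : ℕ) :
    unitCube d = WithLp.ofLp ⁻¹' univ.pi fun _ : Fin d => Icc (0 : ℝ) 1 := by
  ext x
  simp only [unitCube, Set.mem_ofPred_eq, mem_preimage, mem_univ_pi]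

lemma isCompact_unitCube (d : ℕ) : IsCompact (unitCube d) := by
  rw [unitCube_eq_preimage]
  exact (PiLp.homeomorph 2 fun _ : Fin d => ℝ).isCompact_preimage.2
    (isCompact_univ_pi fun _ => isCompact_Icc)

lemma convex_unitCube (d : ℕ) : Convex ℝ (unitCube d) := by
  rw [unitCube_eq_preimage]
  exact (convex_pi fun _ _ => convex_Icc 0 1).linear_preimage
    (WithLp.linearEquiv 2 ℝ (Fin d → ℝ)).toLinearMap

lemma volume_unitCube (d : ℕ) : volume (unitCube d) = 1 := by
  rw [unitCube_eq_preimage]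
  refine ((EuclideanSpace.volume_preserving_symm_measurableEquiv_toLp
    (Fin d)).measure_preimage_equiv _).trans ?_
  rw [volume_pi_pi]
  simp

end MultiplicativeChaos

open MultiplicativeChaos in
theorem subcritical_rescaled_limit_exists_general
    {E Ω : Type*} [NormedAddCommGroup E] [NormedSpace ℝ E] [FiniteDimensional ℝ E] [Nontrivial E]
    [MeasurableSpace E] [BorelSpace E] [MeasurableSpace Ω] (P : Measure Ω)
    {k : E → ℝ} (hk : Continuous k) (hk0 : k 0 = 1) (hksupp : HasCompactSupport k)
    {X : ℝ → E → Ω → ℝ} (hXmeas : ∀ t x, Measurable (X t x))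
    (hXgauss : IsGaussianProcess (fun p : ℝ × E => X p.1 p.2) P)
    (hXcent : ∀ t x, ∫ ω, X t x ω ∂P = 0)
    (hXcov : ∀ t, 0 ≤ t → ∀ x y : E,
      ∫ ω, X t x ω * X t y ω ∂P = ∫ u in Set.Icc (1 : ℝ) (Real.exp t), k (u • (x - y)) / u)
    (hXcont : ∀ᵐ ω ∂P, Continuous fun p : ℝ × E => X p.1 p.2 ω)
    (hXindep : ∀ s t : ℝ, 0 ≤ s → s < t →
      Indep (⨆ x : E, MeasurableSpace.comap (fun ω => X t x ω - X s x ω) inferInstance)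
        (⨆ u ∈ Set.Icc (0 : ℝ) s, ⨆ x : E, MeasurableSpace.comap (X u x) inferInstance) P)
    (μ : Measure E) [μ.IsAddHaarMeasure] {S : Set E} (hS : IsCompact S) (hSconv : Convex ℝ S)
    (hμS : μ S ≠ 0) :
    ∃ (γ lam : ℕ → ℝ) (Mlim : ℕ → Ω → ℝ) (ν : Measure ℝ),
      StrictMono γ ∧
      (∀ n, γ n ^ 2 < 2 * (Module.finrank ℝ E : ℝ)) ∧
      (∀ n, 0 < lam n) ∧
      Tendsto γ atTop (nhds (Real.sqrt (2 * (Module.finrank ℝ E : ℝ)))) ∧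
      (∀ n, ∀ᵐ ω ∂P, Tendsto (fun t : ℝ =>
          ∫ x in S, Real.exp (γ n * X t x ω - γ n ^ 2 / 2 * t) ∂μ)
        atTop (nhds (Mlim n ω))) ∧
      IsProbabilityMeasure ν ∧
      (∀ f : BoundedContinuousFunction ℝ ℝ,
        Tendsto (fun n => ∫ ω, f (lam n * Mlim n ω) ∂P) atTop (nhds (∫ x, f x ∂ν))) ∧
      ν ≠ Measure.dirac 0 ∧
      ∫ x, Real.exp (-x) ∂ν = 1 / 2 := by
  have := hXgauss.isProbabilityMeasure
  obtain ⟨R, hK⟩ := exists_isStarScaleCovariance_scaleKernel hk hk0 hksupp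
  obtain ⟨Y, hY, hYX⟩ :=
    exists_isStarScaleField_ae_eq (K := scaleKernel k) hXmeas hXgauss hXcent hXcov hXcont hXindep
  obtain ⟨γ, hγmono, hγ, hγlim⟩ := exists_seq_strictMono_tendsto_sqrt
    (mul_pos two_pos (Nat.cast_pos.2 (Module.finrank_pos (R := ℝ) (M := E))))
  obtain ⟨φ, lam, L, ν, hφ, hlam, hL, hν, hint⟩ :=
    hY.exists_subseq_tendstoInDistribution_chaosMass hK μ hS hSconv hμS hγ
  refine ⟨γ ∘ φ, lam, L, ν, hγmono.comp hφ, fun n => hγ (φ n), hlam,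
    hγlim.comp hφ.tendsto_atTop, fun n => ?_, inferInstance,
    tendsto_integral_comp_of_tendstoInDistribution hν, fun hν0 => ?_, hint⟩
  · filter_upwards [hL n, hYX] with ω hω hYω
    simpa only [chaosMass, wickExp, hYω, Function.comp_apply] using hω
  · rw [hν0, integral_dirac] at hint
    norm_num at hint

theorem subcritical_rescaled_limit_exists
    {d : ℕ} (hd : 1 ≤ d)
    {Ω : Type*} [m0 : MeasurableSpace Ω] (P : Measure Ω) [IsProbabilityMeasure P]
    (k : EuclideanSpace ℝ (Fin d) → ℝ)
    (hk1 : ContDiff ℝ 1 k) (hk0 : k 0 = 1) (hkb : ∀ z, |k z| ≤ 1)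
    (hksupp : HasCompactSupport k)
    (hkpd : ∀ (n : ℕ) (z : Fin n → EuclideanSpace ℝ (Fin d)) (c : Fin n → ℝ),
      0 ≤ ∑ i, ∑ j, c i * c j * k (z i - z j))
    (X : ℝ → EuclideanSpace ℝ (Fin d) → Ω → ℝ)
    (hXmeas : ∀ t x, Measurable (X t x))
    (hXgauss : ∀ (n : ℕ) (c : Fin n → ℝ) (t : Fin n → ℝ)
        (x : Fin n → EuclideanSpace ℝ (Fin d)),
      ∃ v : NNReal,
        Measure.map (fun ω => ∑ i, c i * X (t i) (x i) ω) P = gaussianReal 0 v)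
    (hXcent : ∀ t x, ∫ ω, X t x ω ∂P = 0)
    (hXcov : ∀ t, 0 ≤ t → ∀ x y : EuclideanSpace ℝ (Fin d),
      ∫ ω, X t x ω * X t y ω ∂P = ∫ u in Set.Icc (1:ℝ) (Real.exp t), k (u • (x - y)) / u)
    (hXcont : ∀ᵐ ω ∂P, Continuous fun p : ℝ × EuclideanSpace ℝ (Fin d) => X p.1 p.2 ω)
    (hXindep : ∀ s t : ℝ, 0 ≤ s → s < t →
      Indep (⨆ x : EuclideanSpace ℝ (Fin d),
          MeasurableSpace.comap (fun ω => X t x ω - X s x ω) inferInstance)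
        (⨆ u ∈ Set.Icc (0:ℝ) s, ⨆ x : EuclideanSpace ℝ (Fin d),
          MeasurableSpace.comap (X u x) inferInstance) P)
    :
    ∃ (γ lam : ℕ → ℝ) (Mlim : ℕ → Ω → ℝ) (ν : Measure ℝ),
      StrictMono γ ∧
      (∀ n, γ n ^ 2 < 2 * (d:ℝ)) ∧
      (∀ n, 0 < lam n) ∧
      Tendsto γ atTop (nhds (Real.sqrt (2 * (d:ℝ)))) ∧
      (∀ n, ∀ᵐ ω ∂P, Tendsto (fun t : ℝ =>
          ∫ x in {x : EuclideanSpace ℝ (Fin d) | ∀ i, x i ∈ Set.Icc (0:ℝ) 1},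
            Real.exp (γ n * X t x ω - γ n ^ 2 / 2 * t))
        atTop (nhds (Mlim n ω))) ∧
      IsProbabilityMeasure ν ∧
      (∀ f : BoundedContinuousFunction ℝ ℝ,
        Tendsto (fun n => ∫ ω, f (lam n * Mlim n ω) ∂P) atTop (nhds (∫ x, f x ∂ν))) ∧
      ν ≠ Measure.dirac 0 ∧
      ∫ x, Real.exp (-x) ∂ν = 1 / 2 := by
  have : Nontrivial (EuclideanSpace ℝ (Fin d)) :=
    Module.nontrivial_of_finrank_pos (R := ℝ) (by simpa using! hd)
  have hgauss : IsGaussianProcess (fun p : ℝ × EuclideanSpace ℝ (Fin d) => X p.1 p.2) P :=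
    MultiplicativeChaos.isGaussianProcess_of_forall_sum (fun p => hXmeas p.1 p.2)
      fun n c p => ⟨0, hXgauss n c (fun i => (p i).1) fun i => (p i).2⟩
  simpa only [finrank_euclideanSpace_fin] using! subcritical_rescaled_limit_exists_general P
    hk1.continuous hk0 hksupp hXmeas hgauss hXcent hXcov hXcont hXindep volume
    (MultiplicativeChaos.isCompact_unitCube d) (MultiplicativeChaos.convex_unitCube d)
    (by rw [MultiplicativeChaos.volume_unitCube]; exact one_ne_zero)
end
end
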